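/- arXiv:0801.0300 — 3 statements merged into one kernel-verified Lean document; each statement's English description precedes it below -/
import Mathlib

section
/- (Koenigs) Let A₀, A₁, A₂, A₃ be real analytic on a connected and simply connected open U ⊆ ℝ². Then the real vector space of real-analytic solutions (ψ₁,ψ₂,ψ₃) of the Liouville linear system on U is finite dimensional of dimension at most 6, and its dimension is never equal to 5; that is, the dimension is one of 0, 1, 2, 3, 4, 6. -/
/-!
Put `b₁ = A₁/3`, `b₂ = A₂/3` and `(s₁₁, s₁₂, s₂₂) = (ψ₃, -ψ₂, ψ₁)`. The Liouville system is of
finite type: adjoining three further unknowns `m₁, m₂, r`, determined by derivatives of the `sᵢⱼ`,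
turns it into a linear connection on the trivial bundle of rank 6 (`prolong`), whose parallel
sections correspond to the solutions. A parallel section over a connected set is determined by its
value at one point (`unique_parallel`: Grönwall along segments, then the identity theorem), so the
dimension is at most 6.

Suppose that it is 5. The curvature of the connection is a single covector `V` (`curv`) whose last
component vanishes and which annihilates all parallel sections (`curv_dot`). Differentiating
`V · Φ = 0` yields further annihilating covectors, with last components `5 y₁` and `5 y₂`, where
`y₁, y₂` are the Liouville invariants. Since the values of the parallel sections at any point form a
hyperplane, all annihilating covectors there are proportional; if `y₁` or `y₂` were nonzero at a
point, `V` would vanish there, although its components include `5 y₁` and `5 y₂`. Hence `y₁` and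
`y₂` vanish identically: the projective structure is flat (`curved_ne_five`).

In the flat case read `Φ` as a symmetric 3 × 3 matrix with entries `s, m, r`. The polarised adjugate
of two parallel sections is a parallel section of the dual connection (`polarDet_x`, `polarDet_y`).
The polarised adjugates of the elements of a hyperplane already span the dual space
(`polarDet_nondeg`): each quadratic form `Q ↦ P · adj Q` with `P ≠ 0` has rank at least 3 and so does
not vanish on a hyperplane. Therefore five independent parallel sections produce six independent
parallel sections of the dual connection, defined on all of `U`. The inverse of the matrix they form
consists of six independent parallel sections (`parallel_top_of_dual`), contradicting dimension 5.
-/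


noncomputable section

open Matrix

/-- Partial derivative in the first (x) variable. -/
def pdx (f : ℝ × ℝ → ℝ) : ℝ × ℝ → ℝ :=
  fun p => deriv (fun t => f (t, p.2)) p.1

/-- Partial derivative in the second (y) variable. -/
def pdy (f : ℝ × ℝ → ℝ) : ℝ × ℝ → ℝ :=
  fun p => deriv (fun t => f (p.1, t)) p.2

/-- `pd 0 = ∂ₓ`, `pd 1 = ∂_y`. -/
def pd : Fin 2 → (ℝ × ℝ → ℝ) → (ℝ × ℝ → ℝ) := ![pdx, pdy]

/-- The Liouville linear system associated to `(A0, A1, A2, A3)`, holding on `U`. -/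
def LiouvilleSystem (U : Set (ℝ × ℝ)) (A0 A1 A2 A3 ψ1 ψ2 ψ3 : ℝ × ℝ → ℝ) : Prop :=
  ∀ p ∈ U,
    pdx ψ1 p = (2/3) * A1 p * ψ1 p - 2 * A0 p * ψ2 p ∧
    pdy ψ3 p = 2 * A3 p * ψ2 p - (2/3) * A2 p * ψ3 p ∧
    pdy ψ1 p + 2 * pdx ψ2 p
      = (4/3) * A2 p * ψ1 p - (2/3) * A1 p * ψ2 p - 2 * A0 p * ψ3 p ∧
    pdx ψ3 p + 2 * pdy ψ2 p
      = 2 * A3 p * ψ1 p - (4/3) * A1 p * ψ3 p + (2/3) * A2 p * ψ2 p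

/-- `(A0, A1, A2, A3)` is metrisable near `p` (within `U`). -/
def MetrisableNear (U : Set (ℝ × ℝ)) (A0 A1 A2 A3 : ℝ × ℝ → ℝ) (p : ℝ × ℝ) : Prop :=
  ∃ V : Set (ℝ × ℝ), IsOpen V ∧ p ∈ V ∧ V ⊆ U ∧
    ∃ E F G : ℝ × ℝ → ℝ,
      ContDiffOn ℝ (⊤ : ℕ∞) E V ∧ ContDiffOn ℝ (⊤ : ℕ∞) F V ∧ ContDiffOn ℝ (⊤ : ℕ∞) G V ∧
      (∀ q ∈ V, E q * G q - (F q) ^ 2 ≠ 0) ∧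
      (∀ q ∈ V,
        A0 q = (E q * pdy E q - 2 * E q * pdx F q + F q * pdx E q)
                 / (2 * (E q * G q - (F q) ^ 2)) ∧
        A1 q = (3 * F q * pdy E q + G q * pdx E q - 2 * F q * pdx F q - 2 * E q * pdx G q)
                 / (2 * (E q * G q - (F q) ^ 2)) ∧
        A2 q = (2 * F q * pdy F q + 2 * G q * pdy E q - 3 * F q * pdx G q - E q * pdy G q)
                 / (2 * (E q * G q - (F q) ^ 2)) ∧
        A3 q = (2 * G q * pdy F q - G q * pdx G q - F q * pdy G q)
                 / (2 * (E q * G q - (F q) ^ 2)))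

end

/-- A real-analytic solution of the Liouville linear system on `U`. -/
def AnalyticLiouvilleSol (U : Set (ℝ × ℝ)) (A0 A1 A2 A3 : ℝ × ℝ → ℝ)
    (Ψ : (ℝ × ℝ → ℝ) × (ℝ × ℝ → ℝ) × (ℝ × ℝ → ℝ)) : Prop :=
  AnalyticOnNhd ℝ Ψ.1 U ∧ AnalyticOnNhd ℝ Ψ.2.1 U ∧ AnalyticOnNhd ℝ Ψ.2.2 U ∧
    LiouvilleSystem U A0 A1 A2 A3 Ψ.1 Ψ.2.1 Ψ.2.2

set_option linter.unusedSimpArgs false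

/-! ### The prolonged connection -/

open Matrix

section Algebra

variable {R : Type*} [CommRing R] [Algebra ℝ R]

/-- Matrix of the `x`-part of the prolonged connection, acting on `(s₁₁, s₁₂, s₂₂, m₁, m₂, r)`.
The ring `R` abstracts the analytic functions; `pᵢⱼ` stands for the Ricci-type expression and `yᵢ`
for the Liouville invariants built from the coefficients, as in `prolong`. A section `Φ` is parallel
in the `x`-direction when `∂ₓΦ = connX · Φ`. -/
def connX (a0 b1 b2 p11 p12 y1 y2 : R) : Matrix (Fin 6) (Fin 6) R :=
  !![-2 * b1, -2 * b2, 0, 2, 0, 0;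
     a0, 0, -b2, 0, 1, 0;
     0, 2 * a0, 2 * b1, 0, 0, 0;
     -p11, -p12, 0, -b1, -b2, 1;
     0, -p11, -p12, a0, b1, 0;
     0, y1, y2, -2 * p11, -2 * p12, 0]

/-- Matrix of the `y`-part of the prolonged connection, in the conventions of `connX`. -/
def connY (b1 b2 a3 p12 p22 y1 y2 : R) : Matrix (Fin 6) (Fin 6) R :=
  !![-2 * b2, -2 * a3, 0, 0, 0, 0;
     b1, 0, -a3, 1, 0, 0;
     0, 2 * b1, 2 * b2, 0, 2, 0;
     -p12, -p22, 0, -b2, -a3, 0;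
     0, -p12, -p22, b1, b2, 1;
     -y1, -y2, 0, -2 * p12, -2 * p22, 0]

/-- The polarised adjugate `adj (Q + S) - adj Q - adj S` of two symmetric `3 × 3` matrices. A vector
`(s₁₁, s₁₂, s₂₂, m₁, m₂, r)` encodes the matrix with rows `(s₁₁, s₁₂, m₁)`, `(s₁₂, s₂₂, m₂)`,
`(m₁, m₂, r)`. The result is a covector, so that off-diagonal entries are doubled and the dot
product with a vector is the trace pairing. -/
def polarDet (Q S : Fin 6 → R) : Fin 6 → R :=
  ![Q 2 * S 5 + S 2 * Q 5 - 2 * (Q 4 * S 4),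
    2 * (Q 3 * S 4 + S 3 * Q 4 - Q 1 * S 5 - S 1 * Q 5),
    Q 0 * S 5 + S 0 * Q 5 - 2 * (Q 3 * S 3),
    2 * (Q 1 * S 4 + S 1 * Q 4 - Q 2 * S 3 - S 2 * Q 3),
    2 * (Q 1 * S 3 + S 1 * Q 3 - Q 0 * S 4 - S 0 * Q 4),
    Q 0 * S 2 + S 0 * Q 2 - 2 * (Q 1 * S 1)]

/-- The only nonzero row of the curvature of the prolonged connection (up to sign). -/
def curv (D1 D2 : Derivation ℝ R R) (a0 b1 b2 a3 y1 y2 : R) : Fin 6 → R :=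
  ![D1 y1 - b1 * y1 + a0 * y2,
    D2 y1 + D1 y2 - 2 * b2 * y1 + 2 * b1 * y2,
    D2 y2 - a3 * y1 + b2 * y2, 5 * y1, 5 * y2, 0]

/-- Every solution of the Liouville system extends to a parallel section. The components `m₁, m₂, r`
are defined from the equations for `∂_y s₁₂`, `∂ₓ s₁₂` and `∂ₓ m₁`; the other new equations follow
from commuting partial derivatives of `s₁₁, s₁₂, s₂₂, m₁, m₂`. -/
theorem prolong (h2 : ∀ z : R, 2 * z = 0 → z = 0) (D1 D2 : Derivation ℝ R R)
    (hc : ∀ z, D1 (D2 z) = D2 (D1 z))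
    (a0 b1 b2 a3 p11 p12 p22 y1 y2 : R)
    (hp11 : p11 = D1 b1 - D2 a0 - 2 * b1 ^ 2 + 2 * a0 * b2)
    (hp12 : p12 = D1 b2 - D2 b1 + a0 * a3 - b1 * b2)
    (hp22 : p22 = D1 a3 - D2 b2 - 2 * b2 ^ 2 + 2 * a3 * b1)
    (hy1 : y1 = D1 p12 - D2 p11 - 2 * b1 * p12 + a0 * p22 + b2 * p11)
    (hy2 : y2 = D1 p22 - D2 p12 - 2 * b2 * p12 + b1 * p22 + a3 * p11)
    (ψ1 ψ2 ψ3 : R)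
    (e1 : D1 ψ1 = 2 * b1 * ψ1 - 2 * a0 * ψ2)
    (e2 : D2 ψ3 = 2 * a3 * ψ2 - 2 * b2 * ψ3)
    (e3 : D2 ψ1 + 2 * D1 ψ2 = 4 * b2 * ψ1 - 2 * b1 * ψ2 - 2 * a0 * ψ3)
    (e4 : D1 ψ3 + 2 * D2 ψ2 = 2 * a3 * ψ1 - 4 * b1 * ψ3 + 2 * b2 * ψ2) :
    ∃ Φ : Fin 6 → R, Φ 0 = ψ3 ∧ Φ 1 = -ψ2 ∧ Φ 2 = ψ1 ∧
      (∀ i, D1 (Φ i) = (connX a0 b1 b2 p11 p12 y1 y2).mulVec Φ i) ∧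
      (∀ i, D2 (Φ i) = (connY b1 b2 a3 p12 p22 y1 y2).mulVec Φ i) := by
  have n1 : D1 (2 : R) = 0 := by simpa using D1.map_natCast 2
  have n2 : D2 (2 : R) = 0 := by simpa using D2.map_natCast 2
  obtain ⟨s, hs⟩ : ∃ s, s = -ψ2 := ⟨_, rfl⟩
  have hψ2 : ψ2 = -s := by rw [hs]; ring
  subst hψ2
  clear hs
  simp only [map_neg] at e3 e4
  obtain ⟨m1, hm1⟩ : ∃ m1, m1 = D2 s + a3 * ψ1 - b1 * ψ3 := ⟨_, rfl⟩
  obtain ⟨m2, hm2⟩ : ∃ m2, m2 = D1 s + b2 * ψ1 - a0 * ψ3 := ⟨_, rfl⟩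
  have x0 : D1 ψ3 = 2 * m1 - 2 * b1 * ψ3 - 2 * b2 * s := by linear_combination e4 - 2 * hm1
  have x1 : D1 s = m2 - b2 * ψ1 + a0 * ψ3 := by linear_combination -hm2
  have x2 : D1 ψ1 = 2 * a0 * s + 2 * b1 * ψ1 := by linear_combination e1
  have z0 : D2 ψ3 = -2 * b2 * ψ3 - 2 * a3 * s := by linear_combination e2
  have z1 : D2 s = m1 - a3 * ψ1 + b1 * ψ3 := by linear_combination -hm1
  have z2 : D2 ψ1 = 2 * m2 + 2 * b1 * s + 2 * b2 * ψ1 := by linear_combination e3 - 2 * hm2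
  obtain ⟨r, hr⟩ : ∃ r, r = D1 m1 + p11 * ψ3 + p12 * s + b1 * m1 + b2 * m2 := ⟨_, rfl⟩
  have c0 := hc ψ3
  have c1 := hc s
  have c2 := hc ψ1
  simp only [x0, x1, x2, z0, z1, z2, map_add, map_sub, map_neg, neg_mul, Derivation.leibniz,
    smul_eq_mul, n1, n2] at c0 c1 c2
  have x3 : D1 m1 = r - p11 * ψ3 - p12 * s - b1 * m1 - b2 * m2 := by linear_combination -hr
  have x4 : D1 m2 = -p11 * s - p12 * ψ1 + a0 * m1 + b1 * m2 := by
    apply sub_eq_zero.1; apply h2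
    linear_combination c2 + 2 * s * hp11 + 2 * ψ1 * hp12
  have z3 : D2 m1 = -p12 * ψ3 - p22 * s - b2 * m1 - a3 * m2 := by
    apply sub_eq_zero.1; apply h2
    linear_combination -c0 + 2 * ψ3 * hp12 + 2 * s * hp22
  have z4 : D2 m2 = r - p12 * s - p22 * ψ1 + b1 * m1 + b2 * m2 := by
    linear_combination -c1 + x3 - ψ3 * hp11 + ψ1 * hp22
  have c3 := hc m1
  have c4 := hc m2
  simp only [x0, x1, x2, x3, x4, z0, z1, z2, z3, z4, map_add, map_sub, map_neg, neg_mul,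
    Derivation.leibniz, smul_eq_mul] at c3 c4
  have x5 : D1 r = y1 * s + y2 * ψ1 - 2 * p11 * m1 - 2 * p12 * m2 := by
    linear_combination c4 - s * hy1 - ψ1 * hy2 + m1 * hp11 + m2 * hp12
  have z5 : D2 r = -y1 * ψ3 - y2 * s - 2 * p12 * m1 - 2 * p22 * m2 := by
    linear_combination -c3 + ψ3 * hy1 + s * hy2 + m1 * hp12 + m2 * hp22
  refine ⟨![ψ3, s, ψ1, m1, m2, r], rfl, by simp, rfl, ?_, ?_⟩
  · intro i
    fin_cases i <;>
      simp [connX, Matrix.mulVec, dotProduct, Fin.sum_univ_six, x0, x1, x2, x3, x4, x5] <;> ring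
  · intro i
    fin_cases i <;>
      simp [connY, Matrix.mulVec, dotProduct, Fin.sum_univ_six, z0, z1, z2, z3, z4, z5] <;> ring

/-- The curvature annihilates parallel sections: equality of the mixed partial derivatives of the
last component `r`. -/
theorem curv_dot (D1 D2 : Derivation ℝ R R)
    (hc : ∀ z, D1 (D2 z) = D2 (D1 z))
    (a0 b1 b2 a3 p11 p12 p22 y1 y2 : R)
    (hy1 : y1 = D1 p12 - D2 p11 - 2 * b1 * p12 + a0 * p22 + b2 * p11)
    (hy2 : y2 = D1 p22 - D2 p12 - 2 * b2 * p12 + b1 * p22 + a3 * p11)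
    (Φ : Fin 6 → R)
    (hX : ∀ i, D1 (Φ i) = (connX a0 b1 b2 p11 p12 y1 y2).mulVec Φ i)
    (hY : ∀ i, D2 (Φ i) = (connY b1 b2 a3 p12 p22 y1 y2).mulVec Φ i) :
    curv D1 D2 a0 b1 b2 a3 y1 y2 ⬝ᵥ Φ = 0 := by
  have n1 : D1 (2 : R) = 0 := by simpa using D1.map_natCast 2
  have n2 : D2 (2 : R) = 0 := by simpa using D2.map_natCast 2
  have x0 := hX 0
  have x1 := hX 1
  have x2 := hX 2
  have x3 := hX 3
  have x4 := hX 4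
  have x5 := hX 5
  have z0 := hY 0
  have z1 := hY 1
  have z2 := hY 2
  have z3 := hY 3
  have z4 := hY 4
  have z5 := hY 5
  simp [connX, Matrix.mulVec, dotProduct, Fin.sum_univ_six] at x0 x1 x2 x3 x4 x5
  simp [connY, Matrix.mulVec, dotProduct, Fin.sum_univ_six] at z0 z1 z2 z3 z4 z5
  have c := hc (Φ 5)
  simp only [x0, x1, x2, x3, x4, x5, z0, z1, z2, z3, z4, z5, map_add, map_sub, map_neg, neg_mul,
    Derivation.leibniz, smul_eq_mul, n1, n2] at c
  simp [curv, dotProduct, Fin.sum_univ_six]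
  linear_combination -c + 2 * Φ 3 * hy1 + 2 * Φ 4 * hy2

/-- The derivative of the pairing of a covector field `V` with a parallel section is the pairing with
the covariant derivative of `V`. -/
theorem dot_deriv {n : ℕ} (D : Derivation ℝ R R) (M : Matrix (Fin n) (Fin n) R) (V Φ : Fin n → R)
    (hΦ : ∀ i, D (Φ i) = M.mulVec Φ i) :
    D (V ⬝ᵥ Φ) = (fun j => D (V j) + (V ᵥ* M) j) ⬝ᵥ Φ := by
  have e : D (V ⬝ᵥ Φ) = (fun j => D (V j)) ⬝ᵥ Φ + V ⬝ᵥ (fun j => D (Φ j)) := by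
    simp only [dotProduct, map_sum, Derivation.leibniz, smul_eq_mul, ← Finset.sum_add_distrib]
    exact Finset.sum_congr rfl fun j _ => by ring
  rw [e, funext hΦ, dotProduct_mulVec, ← add_dotProduct]
  rfl

/-! ### The polarised adjugate in the flat case -/

/-- If `y₁ = y₂ = 0`, the connection is tracefree and acts on symmetric `3 × 3` matrices through
`𝔰𝔩₃`; it therefore preserves the determinant, and polarised adjugates of parallel sections are
parallel for the dual connection. This is the `x`-part. -/
theorem polarDet_x (D : Derivation ℝ R R) (a0 b1 b2 p11 p12 : R) (Q S : Fin 6 → R)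
    (hQ : ∀ i, D (Q i) = (connX a0 b1 b2 p11 p12 0 0).mulVec Q i)
    (hS : ∀ i, D (S i) = (connX a0 b1 b2 p11 p12 0 0).mulVec S i) (i : Fin 6) :
    D (polarDet Q S i) = (-(connX a0 b1 b2 p11 p12 0 0).transpose).mulVec (polarDet Q S) i := by
  have n1 : D (2 : R) = 0 := by simpa using D.map_natCast 2
  have q0 := hQ 0
  have q1 := hQ 1
  have q2 := hQ 2
  have q3 := hQ 3
  have q4 := hQ 4
  have q5 := hQ 5
  have s0 := hS 0
  have s1 := hS 1
  have s2 := hS 2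
  have s3 := hS 3
  have s4 := hS 4
  have s5 := hS 5
  clear hQ hS
  simp [connX, Matrix.mulVec, dotProduct, Fin.sum_univ_six] at q0 q1 q2 q3 q4 q5 s0 s1 s2 s3 s4 s5
  fin_cases i <;>
  simp [polarDet, connX, Matrix.mulVec, dotProduct, Fin.sum_univ_six, q0, q1, q2, q3, q4, q5,
    s0, s1, s2, s3, s4, s5, n1] <;> ring

theorem polarDet_y (D : Derivation ℝ R R) (b1 b2 a3 p12 p22 : R) (Q S : Fin 6 → R)
    (hQ : ∀ i, D (Q i) = (connY b1 b2 a3 p12 p22 0 0).mulVec Q i)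
    (hS : ∀ i, D (S i) = (connY b1 b2 a3 p12 p22 0 0).mulVec S i) (i : Fin 6) :
    D (polarDet Q S i) = (-(connY b1 b2 a3 p12 p22 0 0).transpose).mulVec (polarDet Q S) i := by
  have n1 : D (2 : R) = 0 := by simpa using D.map_natCast 2
  have q0 := hQ 0
  have q1 := hQ 1
  have q2 := hQ 2
  have q3 := hQ 3
  have q4 := hQ 4
  have q5 := hQ 5
  have s0 := hS 0
  have s1 := hS 1
  have s2 := hS 2
  have s3 := hS 3
  have s4 := hS 4
  have s5 := hS 5
  clear hQ hS
  simp [connY, Matrix.mulVec, dotProduct, Fin.sum_univ_six] at q0 q1 q2 q3 q4 q5 s0 s1 s2 s3 s4 s5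
  fin_cases i <;>
  simp [polarDet, connY, Matrix.mulVec, dotProduct, Fin.sum_univ_six, q0, q1, q2, q3, q4, q5,
    s0, s1, s2, s3, s4, s5, n1] <;> ring

/-- The polarised adjugates of the vectors in a hyperplane `l · Q = 0` span the dual space. The
vectors `lⱼ eᵢ - lᵢ eⱼ` lie in the hyperplane; one case per possibly nonzero coordinate of `l`. -/
theorem polarDet_nondeg (l P : Fin 6 → ℝ) (hl : l ≠ 0)
    (h : ∀ Q S : Fin 6 → ℝ, l ⬝ᵥ Q = 0 → l ⬝ᵥ S = 0 → P ⬝ᵥ polarDet Q S = 0) : P = 0 := by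
  have key : ∀ i j m n : Fin 6,
      P ⬝ᵥ polarDet (l j • Pi.single i 1 - l i • Pi.single j 1)
        (l n • Pi.single m 1 - l m • Pi.single n 1) = 0 := by
    intro i j m n
    apply h <;> simp [dotProduct_sub, dotProduct_smul] <;> ring
  clear h
  suffices h : P 0 = 0 ∧ P 1 = 0 ∧ P 2 = 0 ∧ P 3 = 0 ∧ P 4 = 0 ∧ P 5 = 0 by
    obtain ⟨h0, h1, h2, h3, h4, h5⟩ := h
    ext i; fin_cases i <;> assumption
  by_cases l0 : l 0 = 0
  swap
  · have k5 := key 1 0 1 0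
    simp [polarDet, dotProduct, Fin.sum_univ_six, l0] at k5
    have k2 := key 3 0 3 0
    simp [polarDet, dotProduct, Fin.sum_univ_six, l0, k5] at k2
    have k4 := key 1 0 3 0
    simp [polarDet, dotProduct, Fin.sum_univ_six, l0, k5, k2] at k4
    have k0 := key 4 0 4 0
    simp [polarDet, dotProduct, Fin.sum_univ_six, l0, k5, k2, k4] at k0
    have k1 := key 3 0 4 0
    simp [polarDet, dotProduct, Fin.sum_univ_six, l0, k5, k2, k4, k0] at k1
    have k3 := key 1 0 4 0
    simp [polarDet, dotProduct, Fin.sum_univ_six, l0, k5, k2, k4, k0, k1] at k3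
    exact ⟨k0, k1, k2, k3, k4, k5⟩
  by_cases l2 : l 2 = 0
  swap
  · have k5 := key 1 2 1 2
    simp [polarDet, dotProduct, Fin.sum_univ_six, l2, l0] at k5
    have k0 := key 4 2 4 2
    simp [polarDet, dotProduct, Fin.sum_univ_six, l2, l0, k5] at k0
    have k3 := key 1 2 4 2
    simp [polarDet, dotProduct, Fin.sum_univ_six, l2, l0, k5, k0] at k3
    have k2 := key 3 2 3 2
    simp [polarDet, dotProduct, Fin.sum_univ_six, l2, l0, k5, k0, k3] at k2
    have k1 := key 3 2 4 2
    simp [polarDet, dotProduct, Fin.sum_univ_six, l2, l0, k5, k0, k3, k2] at k1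
    have k4 := key 1 2 3 2
    simp [polarDet, dotProduct, Fin.sum_univ_six, l2, l0, k5, k0, k3, k2, k1] at k4
    exact ⟨k0, k1, k2, k3, k4, k5⟩
  by_cases l5 : l 5 = 0
  swap
  · have k2 := key 3 5 3 5
    simp [polarDet, dotProduct, Fin.sum_univ_six, l5, l0, l2] at k2
    have k0 := key 4 5 4 5
    simp [polarDet, dotProduct, Fin.sum_univ_six, l5, l0, l2, k2] at k0
    have k1 := key 3 5 4 5
    simp [polarDet, dotProduct, Fin.sum_univ_six, l5, l0, l2, k2, k0] at k1
    have k5 := key 1 5 1 5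
    simp [polarDet, dotProduct, Fin.sum_univ_six, l5, l0, l2, k2, k0, k1] at k5
    have k3 := key 1 5 4 5
    simp [polarDet, dotProduct, Fin.sum_univ_six, l5, l0, l2, k2, k0, k1, k5] at k3
    have k4 := key 1 5 3 5
    simp [polarDet, dotProduct, Fin.sum_univ_six, l5, l0, l2, k2, k0, k1, k5, k3] at k4
    exact ⟨k0, k1, k2, k3, k4, k5⟩
  by_cases l1 : l 1 = 0
  swap
  · have k5 := key 0 1 2 1
    simp [polarDet, dotProduct, Fin.sum_univ_six, l1, l0, l2, l5] at k5
    have k2 := key 0 1 5 1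
    simp [polarDet, dotProduct, Fin.sum_univ_six, l1, l0, l2, l5, k5] at k2
    have k0 := key 2 1 5 1
    simp [polarDet, dotProduct, Fin.sum_univ_six, l1, l0, l2, l5, k5, k2] at k0
    have k4 := key 0 1 4 1
    simp [polarDet, dotProduct, Fin.sum_univ_six, l1, l0, l2, l5, k5, k2, k0] at k4
    have k3 := key 2 1 3 1
    simp [polarDet, dotProduct, Fin.sum_univ_six, l1, l0, l2, l5, k5, k2, k0, k4] at k3
    have k1 := key 3 1 4 1
    simp [polarDet, dotProduct, Fin.sum_univ_six, l1, l0, l2, l5, k5, k2, k0, k4, k3] at k1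
    exact ⟨k0, k1, k2, k3, k4, k5⟩
  by_cases l3 : l 3 = 0
  swap
  · have k5 := key 0 3 2 3
    simp [polarDet, dotProduct, Fin.sum_univ_six, l3, l0, l2, l5, l1] at k5
    have k2 := key 0 3 5 3
    simp [polarDet, dotProduct, Fin.sum_univ_six, l3, l0, l2, l5, l1, k5] at k2
    have k0 := key 2 3 5 3
    simp [polarDet, dotProduct, Fin.sum_univ_six, l3, l0, l2, l5, l1, k5, k2] at k0
    have k4 := key 0 3 4 3
    simp [polarDet, dotProduct, Fin.sum_univ_six, l3, l0, l2, l5, l1, k5, k2, k0] at k4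
    have k1 := key 1 3 5 3
    simp [polarDet, dotProduct, Fin.sum_univ_six, l3, l0, l2, l5, l1, k5, k2, k0, k4] at k1
    have k3 := key 1 3 4 3
    simp [polarDet, dotProduct, Fin.sum_univ_six, l3, l0, l2, l5, l1, k5, k2, k0, k4, k1] at k3
    exact ⟨k0, k1, k2, k3, k4, k5⟩
  by_cases l4 : l 4 = 0
  swap
  · have k5 := key 0 4 2 4
    simp [polarDet, dotProduct, Fin.sum_univ_six, l4, l0, l2, l5, l1, l3] at k5
    have k2 := key 0 4 5 4
    simp [polarDet, dotProduct, Fin.sum_univ_six, l4, l0, l2, l5, l1, l3, k5] at k2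
    have k0 := key 2 4 5 4
    simp [polarDet, dotProduct, Fin.sum_univ_six, l4, l0, l2, l5, l1, l3, k5, k2] at k0
    have k1 := key 1 4 5 4
    simp [polarDet, dotProduct, Fin.sum_univ_six, l4, l0, l2, l5, l1, l3, k5, k2, k0] at k1
    have k3 := key 2 4 3 4
    simp [polarDet, dotProduct, Fin.sum_univ_six, l4, l0, l2, l5, l1, l3, k5, k2, k0, k1] at k3
    have k4 := key 1 4 3 4
    simp [polarDet, dotProduct, Fin.sum_univ_six, l4, l0, l2, l5, l1, l3, k5, k2, k0, k1, k3] at k4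
    exact ⟨k0, k1, k2, k3, k4, k5⟩
  exact absurd (by ext i; fin_cases i <;> assumption) hl

end Algebra

/-! ### The ring of analytic functions on an open set -/

section Analytic
open TopologicalSpace Topology

/-- Extension by zero of a function on `X` to the plane. -/
noncomputable def zext (X : Opens (ℝ × ℝ)) (f : X → ℝ) : ℝ × ℝ → ℝ :=
  Function.extend Subtype.val f 0

theorem zext_apply (X : Opens (ℝ × ℝ)) (f : X → ℝ) (q : X) : zext X f q = f q :=
  Subtype.val_injective.extend_apply _ _ _

theorem analytic_zext {X : Opens (ℝ × ℝ)} {f : X → ℝ} {g : ℝ × ℝ → ℝ}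
    (hg : AnalyticOnNhd ℝ g X) (h : ∀ q : X, g q = f q) : AnalyticOnNhd ℝ (zext X f) X :=
  hg.congr X.isOpen fun q hq => (h ⟨q, hq⟩).trans (zext_apply X f ⟨q, hq⟩).symm

/-- The algebra of real-analytic functions on the open set `X`. Elements are functions on the subtype
`X`, so that functions agreeing on `X` are equal; analyticity is that of the extension by zero, at
the points of `X`. -/
def AnFun (X : Opens (ℝ × ℝ)) : Subalgebra ℝ (X → ℝ) where
  carrier := {f | AnalyticOnNhd ℝ (zext X f) X}
  mul_mem' {f g} hf hg := analytic_zext (hf.mul hg) fun q => by simp [zext_apply]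
  add_mem' {f g} hf hg := analytic_zext (hf.add hg) fun q => by simp [zext_apply]
  algebraMap_mem' c := analytic_zext (analyticOnNhd_const (v := c)) fun q => by simp

variable {X : Opens (ℝ × ℝ)}

/-- Restriction to `X` of a function analytic on `X`. -/
def AnFun.mk' (g : ℝ × ℝ → ℝ) (hg : AnalyticOnNhd ℝ g X) : AnFun X :=
  ⟨fun q => g q, analytic_zext hg fun _ => rfl⟩

theorem AnFun.two_apply (q : X) : (2 : AnFun X).1 q = 2 := rfl

theorem AnFun.four_apply (q : X) : (4 : AnFun X).1 q = 4 := rfl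

theorem AnFun.mk_apply {g : ℝ × ℝ → ℝ} (hg : AnalyticOnNhd ℝ g X) (q : X) :
    (AnFun.mk' g hg).1 q = g q := rfl

theorem AnFun.five_apply (q : X) : (5 : AnFun X).1 q = 5 := rfl

theorem AnFun.differentiableAt (f : AnFun X) (q : X) : DifferentiableAt ℝ (zext X f.1) q :=
  (f.2 q q.2).differentiableAt

theorem zext_eventuallyEq {f : X → ℝ} {g : ℝ × ℝ → ℝ} (h : ∀ q : X, f q = g q) (q : X) :
    zext X f =ᶠ[𝓝 q.1] g := by
  filter_upwards [X.isOpen.mem_nhds q.2] with p hp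
  exact (zext_apply X f ⟨p, hp⟩).trans (h ⟨p, hp⟩)

/-- The directional derivative in direction `v`, as a derivation of the algebra of analytic functions
on `X`. -/
noncomputable def dirD (v : ℝ × ℝ) : Derivation ℝ (AnFun X) (AnFun X) :=
  Derivation.mk'
    { toFun := fun f => ⟨fun q => fderiv ℝ (zext X f.1) q v,
        analytic_zext ((ContinuousLinearMap.apply ℝ ℝ v).comp_analyticOnNhd f.2.fderiv)
          fun _ => rfl⟩
      map_add' := fun f g => by
        ext q
        have : fderiv ℝ (zext X (f + g).1) q = fderiv ℝ (zext X f.1 + zext X g.1) q :=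
          (zext_eventuallyEq (fun q => by simp [zext_apply]) q).fderiv_eq
        change fderiv ℝ (zext X (f + g).1) q v = _
        rw [this]
        simp [fderiv_add (AnFun.differentiableAt f q) (AnFun.differentiableAt g q)]
      map_smul' := fun c f => by
        ext q
        have : fderiv ℝ (zext X (c • f).1) q = fderiv ℝ (c • zext X f.1) q :=
          (zext_eventuallyEq (fun q => by simp [zext_apply]) q).fderiv_eq
        change fderiv ℝ (zext X (c • f).1) q v = _
        rw [this]
        simp [fderiv_const_smul (AnFun.differentiableAt f q)] }
    fun f g => by
      ext q
      have : fderiv ℝ (zext X (f * g).1) q = fderiv ℝ (zext X f.1 * zext X g.1) q :=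
        (zext_eventuallyEq (fun q => by simp [zext_apply]) q).fderiv_eq
      change fderiv ℝ (zext X (f * g).1) q v = _
      rw [this]
      simp [fderiv_mul (AnFun.differentiableAt f q) (AnFun.differentiableAt g q), zext_apply]

theorem dirD_apply (v : ℝ × ℝ) (f : AnFun X) (q : X) :
    (dirD v f).1 q = fderiv ℝ (zext X f.1) q v := rfl

theorem dirD_comm (v w : ℝ × ℝ) (f : AnFun X) : dirD v (dirD w f) = dirD w (dirD v f) := by
  have key : ∀ (v w : ℝ × ℝ) (q : X),
      (dirD v (dirD w f)).1 q = fderiv ℝ (fderiv ℝ (zext X f.1)) q v w := by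
    intro v w q
    rw [dirD_apply]
    have : fderiv ℝ (zext X (dirD w f).1) q = fderiv ℝ (fun p => fderiv ℝ (zext X f.1) p w) q :=
      (zext_eventuallyEq (fun q => dirD_apply w f q) q).fderiv_eq
    rw [this, fderiv_clm_apply (f.2.fderiv q q.2).differentiableAt (by fun_prop)]
    simp
  ext q
  rw [key, key]
  exact ((f.2 q q.2).contDiffAt (n := ⊤)).isSymmSndFDerivAt (by simp) v w

theorem pdx_eq {g : ℝ × ℝ → ℝ} {p : ℝ × ℝ} (h : DifferentiableAt ℝ g p) :
    pdx g p = fderiv ℝ g p (1, 0) := by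
  have h1 : HasDerivAt (fun t : ℝ => (t, p.2)) ((1, 0) : ℝ × ℝ) p.1 :=
    (hasDerivAt_id p.1).prodMk (hasDerivAt_const _ _)
  exact (h.hasFDerivAt.comp_hasDerivAt p.1 h1).deriv

theorem pdy_eq {g : ℝ × ℝ → ℝ} {p : ℝ × ℝ} (h : DifferentiableAt ℝ g p) :
    pdy g p = fderiv ℝ g p (0, 1) := by
  have h1 : HasDerivAt (fun t : ℝ => (p.1, t)) ((0, 1) : ℝ × ℝ) p.2 :=
    (hasDerivAt_const _ _).prodMk (hasDerivAt_id p.2)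
  exact (h.hasFDerivAt.comp_hasDerivAt p.2 h1).deriv

theorem dirD_mk (v : ℝ × ℝ) (g : ℝ × ℝ → ℝ) (hg : AnalyticOnNhd ℝ g X) (q : X) :
    (dirD v (AnFun.mk' g hg)).1 q = fderiv ℝ g q v := by
  have : zext X (AnFun.mk' g hg).1 =ᶠ[𝓝 q.1] g := zext_eventuallyEq (fun _ => rfl) q
  rw [dirD_apply, this.fderiv_eq]

theorem isUnit_of_ne (f : AnFun X) (h : ∀ q, f.1 q ≠ 0) : IsUnit f := by
  have hi : AnalyticOnNhd ℝ (zext X f.1)⁻¹ X :=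
    f.2.inv fun q hq => by simpa [zext_apply X f.1 ⟨q, hq⟩] using h ⟨q, hq⟩
  refine IsUnit.of_mul_eq_one (AnFun.mk' _ hi) ?_
  ext q
  simp [AnFun.mk', zext_apply, h]

/-- A parallel section vanishing at one point vanishes identically. On a closed ball around the point
the restriction to each radial segment solves a linear ODE, so Grönwall's inequality gives local
vanishing; the identity theorem for analytic functions globalises it. -/
theorem unique_parallel {n : ℕ} (hX : IsPreconnected (X : Set (ℝ × ℝ)))
    (Mx My : Matrix (Fin n) (Fin n) (AnFun X)) (Φ : Fin n → AnFun X)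
    (hx : ∀ i, dirD (1, 0) (Φ i) = Mx.mulVec Φ i)
    (hy : ∀ i, dirD (0, 1) (Φ i) = My.mulVec Φ i) (p : X) (h0 : ∀ i, (Φ i).1 p = 0) : Φ = 0 := by
  obtain ⟨ε, hε, hball⟩ := Metric.nhds_basis_closedBall.mem_iff.1 (X.isOpen.mem_nhds p.2)
  have hcont : ∀ f : AnFun X, ContinuousOn (zext X f.1) X := fun f => f.2.continuousOn
  have hb : ∀ f : AnFun X, ∃ C, 0 ≤ C ∧ ∀ q ∈ Metric.closedBall p.1 ε, |zext X f.1 q| ≤ C := by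
    intro f
    obtain ⟨C, hC⟩ := (isCompact_closedBall p.1 ε).exists_bound_of_continuousOn
      ((hcont f).mono hball)
    exact ⟨max C 0, le_max_right _ _, fun q hq => (hC q hq).trans (le_max_left _ _)⟩
  choose C hC0 hC using hb
  have hd : ∀ (f : AnFun X) (v : ℝ × ℝ), ∀ q ∈ Metric.closedBall p.1 ε,
      fderiv ℝ (zext X f.1) q v
        = v.1 * zext X (dirD (1, 0) f).1 q + v.2 * zext X (dirD (0, 1) f).1 q := by
    intro f v q hq
    rw [zext_apply X _ ⟨q, hball hq⟩, zext_apply X _ ⟨q, hball hq⟩, dirD_apply, dirD_apply]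
    have : v = v.1 • ((1, 0) : ℝ × ℝ) + v.2 • ((0, 1) : ℝ × ℝ) := by ext <;> simp
    conv_lhs => rw [this, map_add, map_smul, map_smul]
    rfl
  have hmv : ∀ (M : Matrix (Fin n) (Fin n) (AnFun X)) (i : Fin n), ∀ q ∈ Metric.closedBall p.1 ε,
      zext X (M.mulVec Φ i).1 q = ∑ j, zext X (M i j).1 q * zext X (Φ j).1 q := by
    intro M i q hq
    simp only [zext_apply X _ ⟨q, hball hq⟩]
    simp [Matrix.mulVec, dotProduct]
  have hloc : ∀ q ∈ Metric.closedBall p.1 ε, ∀ i, zext X (Φ i).1 q = 0 := by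
    intro q hq
    have hseg : ∀ t ∈ Set.Icc (0 : ℝ) 1, AffineMap.lineMap p.1 q t ∈ Metric.closedBall p.1 ε := by
      intro t ht
      exact (convex_closedBall p.1 ε).lineMap_mem (Metric.mem_closedBall_self hε.le) hq ht
    let F : ℝ → Fin n → ℝ := fun t i => zext X (Φ i).1 (AffineMap.lineMap p.1 q t)
    let F' : ℝ → Fin n → ℝ := fun t i =>
      fderiv ℝ (zext X (Φ i).1) (AffineMap.lineMap p.1 q t) (q - p.1)
    have hF : ∀ t ∈ Set.Icc (0 : ℝ) 1, HasDerivAt F (F' t) t := by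
      intro t ht
      rw [hasDerivAt_pi]
      intro i
      exact (AnFun.differentiableAt (Φ i) ⟨_, hball (hseg t ht)⟩).hasFDerivAt.comp_hasDerivAt t
        AffineMap.hasDerivAt_lineMap
    -- Crude bound for the operator norm of the coefficient matrix along the segment.
    let K : ℝ := ∑ i, ∑ j, (|q.1 - p.1.1| * C (Mx i j) + |q.2 - p.1.2| * C (My i j))
    have hbound : ∀ t ∈ Set.Icc (0 : ℝ) 1, ‖F' t‖ ≤ K * ‖F t‖ := by
      intro t ht
      have hpos : ∀ i j, 0 ≤ |q.1 - p.1.1| * C (Mx i j) + |q.2 - p.1.2| * C (My i j) :=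
        fun i j => add_nonneg (mul_nonneg (abs_nonneg _) (hC0 _))
          (mul_nonneg (abs_nonneg _) (hC0 _))
      have hK : 0 ≤ K := Finset.sum_nonneg fun i _ => Finset.sum_nonneg fun j _ => hpos i j
      refine (pi_norm_le_iff_of_nonneg (mul_nonneg hK (norm_nonneg _))).2 fun i => ?_
      have hm := hseg t ht
      have e : F' t i = ∑ j, ((q.1 - p.1.1) * zext X (Mx i j).1 (AffineMap.lineMap p.1 q t)
          + (q.2 - p.1.2) * zext X (My i j).1 (AffineMap.lineMap p.1 q t)) * F t j := by
        simp only [F', F]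
        rw [hd _ _ _ hm, hx, hy, hmv _ _ _ hm, hmv _ _ _ hm, Finset.mul_sum, Finset.mul_sum,
          ← Finset.sum_add_distrib]
        refine Finset.sum_congr rfl fun j _ => ?_
        simp only [Prod.fst_sub, Prod.snd_sub]
        ring
      rw [e]
      calc _ ≤ ∑ j, (|q.1 - p.1.1| * C (Mx i j) + |q.2 - p.1.2| * C (My i j)) * ‖F t‖ := by
            refine (norm_sum_le _ _).trans (Finset.sum_le_sum fun j _ => ?_)
            rw [norm_mul]
            refine mul_le_mul ?_ (norm_le_pi_norm _ _) (norm_nonneg _) (hpos i j)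
            refine (norm_add_le _ _).trans (add_le_add ?_ ?_)
            · rw [norm_mul]; exact mul_le_mul_of_nonneg_left (hC _ _ hm) (abs_nonneg _)
            · rw [norm_mul]; exact mul_le_mul_of_nonneg_left (hC _ _ hm) (abs_nonneg _)
        _ ≤ K * ‖F t‖ := by
            rw [← Finset.sum_mul]
            refine mul_le_mul_of_nonneg_right ?_ (norm_nonneg _)
            exact Finset.single_le_sum
              (f := fun i => ∑ j, (|q.1 - p.1.1| * C (Mx i j) + |q.2 - p.1.2| * C (My i j)))
              (fun i _ => Finset.sum_nonneg fun j _ => hpos i j) (Finset.mem_univ i)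
    have hF0 : ‖F 0‖ ≤ 0 := by
      have : F 0 = 0 := by
        ext i
        simp [F, zext_apply X _ p, h0]
      simp [this]
    have := norm_le_gronwallBound_of_norm_deriv_right_le (f := F) (f' := F') (δ := 0) (K := K)
      (ε := 0) (a := 0) (b := 1)
      (fun t ht => (hF t ht).continuousAt.continuousWithinAt)
      (fun t ht => (hF t ⟨ht.1, ht.2.le⟩).hasDerivWithinAt) hF0
      (fun t ht => by simpa using hbound t ⟨ht.1, ht.2.le⟩) 1 (by simp)
    rw [gronwallBound_ε0_δ0] at this
    intro i
    have h1 : F 1 i = 0 := by rw [norm_le_zero_iff.1 this]; rfl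
    simpa [F] using h1
  ext i q
  have := (Φ i).2.eqOn_zero_of_preconnected_of_eventuallyEq_zero hX p.2
    (by filter_upwards [Metric.closedBall_mem_nhds p.1 hε] with q hq using hloc q hq i) q.2
  simpa [zext_apply] using this

end Analytic

/-! ### Parallel sections -/

section Parallel

open TopologicalSpace

variable {X : Opens (ℝ × ℝ)}

/-- The space of analytic solutions on `X` of the linear system `∂ₓΦ = Mx Φ`, `∂_yΦ = My Φ`. -/
def parallel {n : ℕ} (Mx My : Matrix (Fin n) (Fin n) (AnFun X)) :
    Submodule ℝ (Fin n → AnFun X) where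
  carrier := {Φ | (∀ i, dirD (1, 0) (Φ i) = Mx.mulVec Φ i) ∧
    (∀ i, dirD (0, 1) (Φ i) = My.mulVec Φ i)}
  zero_mem' := by simp
  add_mem' {Φ Ψ} hΦ hΨ := by
    constructor <;> intro i <;> simp [Matrix.mulVec_add, hΦ.1, hΨ.1, hΦ.2, hΨ.2]
  smul_mem' c Φ hΦ := by
    constructor <;> intro i <;> simp [Matrix.mulVec_smul, hΦ.1, hΦ.2]

/-- The value at the point `p`, as a linear map. -/
def evalAt {n : ℕ} (p : X) : (Fin n → AnFun X) →ₗ[ℝ] (Fin n → ℝ) where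
  toFun Φ i := (Φ i).1 p
  map_add' _ _ := rfl
  map_smul' _ _ := rfl

theorem evalAt_apply {n : ℕ} (p : X) (Φ : Fin n → AnFun X) (i : Fin n) :
    evalAt p Φ i = (Φ i).1 p := rfl

theorem evalAt_injOn {n : ℕ} (hX : IsPreconnected (X : Set (ℝ × ℝ)))
    (Mx My : Matrix (Fin n) (Fin n) (AnFun X)) (p : X) :
    Function.Injective ((evalAt p).domRestrict (parallel Mx My)) := by
  rw [injective_iff_map_eq_zero]
  rintro ⟨Φ, hΦ⟩ h
  ext1
  exact unique_parallel hX Mx My Φ hΦ.1 hΦ.2 p fun i => congrFun h i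

theorem finite_parallel {n : ℕ} (hX : IsPreconnected (X : Set (ℝ × ℝ)))
    (Mx My : Matrix (Fin n) (Fin n) (AnFun X)) (p : X) :
    FiniteDimensional ℝ (parallel Mx My) :=
  FiniteDimensional.of_injective _ (evalAt_injOn hX Mx My p)

/-- The values of the parallel sections at a point form a space of the same dimension. -/
theorem finrank_eval {n : ℕ} (hX : IsPreconnected (X : Set (ℝ × ℝ)))
    (Mx My : Matrix (Fin n) (Fin n) (AnFun X)) (p : X) :
    Module.finrank ℝ ((parallel Mx My).map (evalAt p)) = Module.finrank ℝ (parallel Mx My) := by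
  rw [← LinearMap.range_domRestrict]
  exact LinearMap.finrank_range_of_inj (evalAt_injOn hX Mx My p)

theorem exists_annihilator {n : ℕ} (W : Submodule ℝ (Fin n → ℝ)) (hW : W ≠ ⊤) :
    ∃ l : Fin n → ℝ, l ≠ 0 ∧ ∀ w ∈ W, l ⬝ᵥ w = 0 := by
  obtain ⟨f, hf, hle⟩ := Submodule.exists_le_ker_of_lt_top W (lt_top_iff_ne_top.2 hW)
  have e : ∀ w, (fun i => f (fun j => if i = j then 1 else 0)) ⬝ᵥ w = f w := by
    intro w
    rw [LinearMap.pi_apply_eq_sum_univ f w]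
    simp [dotProduct, mul_comm]
  refine ⟨_, fun h => hf ?_, fun w hw => (e w).trans (hle hw)⟩
  refine LinearMap.ext fun w => ?_
  rw [← e w, h, zero_dotProduct, LinearMap.zero_apply]

theorem hyperplane {n : ℕ} (W : Submodule ℝ (Fin (n + 1) → ℝ)) (hW : Module.finrank ℝ W = n) :
    ∃ l : Fin (n + 1) → ℝ, l ≠ 0 ∧ ∀ w, w ∈ W ↔ l ⬝ᵥ w = 0 := by
  obtain ⟨l, hl, h⟩ := exists_annihilator W (by rintro rfl; simp at hW)
  have hf : (dotProductBilin ℝ ℝ l : (Fin (n + 1) → ℝ) →ₗ[ℝ] ℝ) ≠ 0 := by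
    intro h0
    apply hl
    have := congrArg (fun f => f l) h0
    simpa using this
  have := Module.Dual.finrank_ker_add_one_of_ne_zero hf
  have heq := Submodule.eq_of_le_of_finrank_eq (S₁ := W)
    (S₂ := LinearMap.ker (dotProductBilin ℝ ℝ l : (Fin (n + 1) → ℝ) →ₗ[ℝ] ℝ))
    (fun w hw => by simpa using h w hw) (by simp at this; omega)
  refine ⟨l, hl, fun w => ?_⟩
  rw [heq]; simp

/-- A covector vanishing on the hyperplane `l · w = 0` is proportional to `l`, expressed by the
vanishing of the `2 × 2` minors. -/
theorem annihilator_cross {n : ℕ} (l v : Fin n → ℝ) (h : ∀ w, l ⬝ᵥ w = 0 → v ⬝ᵥ w = 0)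
    (i j : Fin n) : v i * l j = v j * l i := by
  have := h (l j • Pi.single i 1 - l i • Pi.single j 1)
    (by simp [dotProduct_sub, dotProduct_smul]; ring)
  simp [dotProduct_sub, dotProduct_smul] at this
  linarith

/-- If the dual connection has a full space of parallel sections, so does the connection. With `M` the
matrix whose rows are parallel dual sections, `∂M = -M A` gives `∂(M⁻¹) = A M⁻¹`, so the columns of
`M⁻¹` are parallel. -/
theorem parallel_top_of_dual {n : ℕ} (hX : IsPreconnected (X : Set (ℝ × ℝ)))
    (Mx My : Matrix (Fin n) (Fin n) (AnFun X)) (p : X)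
    (h : (parallel (-Mxᵀ) (-Myᵀ)).map (evalAt p) = ⊤) :
    (parallel Mx My).map (evalAt p) = ⊤ := by
  have hN : ∀ i : Fin n, ∃ N ∈ parallel (-Mxᵀ) (-Myᵀ), evalAt p N = Pi.single i (1 : ℝ) := by
    intro i
    exact (Submodule.mem_map).1 (h ▸ Submodule.mem_top)
  choose N hNpar hNp using hN
  let M : Matrix (Fin n) (Fin n) (AnFun X) := Matrix.of N
  -- A linear relation among the rows at one point holds everywhere, in particular at `p`, where the
  -- rows are the standard basis.
  have hdet : IsUnit M.det := by
    apply isUnit_of_ne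
    intro q hq
    let ev : AnFun X →+* ℝ :=
      (Pi.evalRingHom (fun _ : X => ℝ) q).comp (AnFun X).val.toRingHom
    have hev : (M.map ev).det = 0 := by
      have := RingHom.map_det ev M
      rw [RingHom.mapMatrix_apply] at this
      rw [← this]; exact hq
    obtain ⟨c, hc, hcM⟩ := Matrix.exists_vecMul_eq_zero_iff.2 hev
    have hz : (∑ i, c i • N i) = 0 := by
      have hm : (∑ i, c i • N i) ∈ parallel (-Mxᵀ) (-Myᵀ) :=
        Submodule.sum_mem _ fun i _ => Submodule.smul_mem _ _ (hNpar i)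
      refine unique_parallel hX _ _ _ hm.1 hm.2 q fun j => ?_
      have := congrFun hcM j
      simpa [Matrix.vecMul, dotProduct, M, ev] using this
    apply hc
    ext j
    have := congrFun (congrArg (evalAt p) hz) j
    rw [map_sum] at this
    simpa [hNp, Finset.sum_apply, Pi.single_apply] using this
  have hinv : M * M⁻¹ = 1 := Matrix.mul_nonsing_inv M hdet
  have hinv' : M⁻¹ * M = 1 := Matrix.nonsing_inv_mul M hdet
  have hder : ∀ (D : Derivation ℝ (AnFun X) (AnFun X)) (A : Matrix (Fin n) (Fin n) (AnFun X)),
      (∀ i j, D (N i j) = (-Aᵀ).mulVec (N i) j) → ∀ i j, D (M⁻¹ i j) = (A * M⁻¹) i j := by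
    intro D A hD
    have e1 : M.map D = -(M * A) := by
      ext1 i j
      simp [M, hD, Matrix.neg_mulVec, Matrix.mulVec_transpose, Matrix.mul_apply, Matrix.vecMul,
        dotProduct]
    have e2 : M.map D * M⁻¹ + M * M⁻¹.map D = 0 := by
      ext1 i j
      have h1 : D ((M * M⁻¹) i j) = 0 := by
        rw [hinv, Matrix.one_apply]; split_ifs <;> simp
      rw [Matrix.mul_apply, map_sum] at h1
      simp only [Derivation.leibniz, smul_eq_mul] at h1
      simp only [Matrix.add_apply, Matrix.mul_apply, Matrix.map_apply, Matrix.zero_apply]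
      rw [← h1, ← Finset.sum_add_distrib]
      exact Finset.sum_congr rfl fun k _ => by ring
    have e3 : M⁻¹.map D = A * M⁻¹ := by
      have : M * (M⁻¹.map D) = M * (A * M⁻¹) := by
        rw [e1, Matrix.neg_mul, Matrix.mul_assoc] at e2
        exact (neg_add_eq_zero.1 e2).symm
      calc M⁻¹.map D = M⁻¹ * (M * M⁻¹.map D) := by rw [← Matrix.mul_assoc, hinv', Matrix.one_mul]
        _ = _ := by rw [this, ← Matrix.mul_assoc, hinv', Matrix.one_mul]
    intro i j
    exact congrFun (congrFun e3 i) j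
  rw [eq_top_iff]
  intro w _
  refine ⟨∑ j, w j • (fun i => M⁻¹ i j), ?_, ?_⟩
  · refine Submodule.sum_mem _ fun j _ => Submodule.smul_mem _ _ ⟨fun i => ?_, fun i => ?_⟩
    · exact hder _ Mx (fun i j => (hNpar i).1 j) i j
    · exact hder _ My (fun i j => (hNpar i).2 j) i j
  · have hone : ∀ i j, (M⁻¹ i j).1 p = (1 : Matrix (Fin n) (Fin n) ℝ) i j := by
      intro i j
      have h1 := congrArg (fun f : AnFun X => f.1 p) (congrFun (congrFun hinv i) j)
      have hMp : ∀ k, (M i k).1 p = (Pi.single i (1 : ℝ) : Fin n → ℝ) k := fun k =>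
        congrFun (hNp i) k
      simp only [Matrix.mul_apply] at h1
      simp [hMp, Pi.single_apply] at h1
      rw [h1, Matrix.one_apply, Matrix.one_apply]
      split_ifs <;> rfl
    ext i
    rw [map_sum]
    simp [evalAt_apply, hone, Finset.sum_apply, Matrix.one_apply]

/-! ### Dimension five does not occur -/

/-- The case `y₁ = y₂ = 0`: five independent parallel sections force a sixth one, through the dual
connection. -/
theorem flat_ne_five (hX : IsPreconnected (X : Set (ℝ × ℝ))) (p : X)
    (a0 b1 b2 a3 p11 p12 p22 : AnFun X) :
    Module.finrank ℝ (parallel (connX a0 b1 b2 p11 p12 0 0) (connY b1 b2 a3 p12 p22 0 0)) ≠ 5 := by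
  intro h5
  rw [← finrank_eval hX _ _ p] at h5
  obtain ⟨l, hl, hW⟩ := hyperplane _ h5
  have htop := parallel_top_of_dual hX (connX a0 b1 b2 p11 p12 0 0) (connY b1 b2 a3 p12 p22 0 0) p
    (by
      by_contra hne
      obtain ⟨P, hP, hann⟩ := exists_annihilator _ hne
      refine hP (polarDet_nondeg l P hl fun Q S hQ hS => ?_)
      obtain ⟨Q, hQ', rfl⟩ := (hW _).2 hQ
      obtain ⟨S, hS', rfl⟩ := (hW _).2 hS
      refine hann _ ⟨polarDet Q S, ⟨fun i => polarDet_x _ _ _ _ _ _ Q S hQ'.1 hS'.1 i,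
        fun i => polarDet_y _ _ _ _ _ _ Q S hQ'.2 hS'.2 i⟩, ?_⟩
      ext i
      fin_cases i <;> simp [polarDet, evalAt_apply, AnFun.two_apply])
  rw [htop] at h5
  simp at h5

/-- The general case reduces to the flat one: a hyperplane of parallel sections forces
`y₁ = y₂ = 0`. -/
theorem curved_ne_five (hX : IsPreconnected (X : Set (ℝ × ℝ))) (p : X)
    (a0 b1 b2 a3 p11 p12 p22 y1 y2 : AnFun X)
    (hy1 : y1 = dirD (1, 0) p12 - dirD (0, 1) p11 - 2 * b1 * p12 + a0 * p22 + b2 * p11)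
    (hy2 : y2 = dirD (1, 0) p22 - dirD (0, 1) p12 - 2 * b2 * p12 + b1 * p22 + a3 * p11) :
    Module.finrank ℝ
      (parallel (connX a0 b1 b2 p11 p12 y1 y2) (connY b1 b2 a3 p12 p22 y1 y2)) ≠ 5 := by
  intro h5
  set D1 : Derivation ℝ (AnFun X) (AnFun X) := dirD (1, 0) with hD1
  set D2 : Derivation ℝ (AnFun X) (AnFun X) := dirD (0, 1) with hD2
  set V := curv D1 D2 a0 b1 b2 a3 y1 y2 with hV
  set Mx := connX a0 b1 b2 p11 p12 y1 y2 with hMx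
  set My := connY b1 b2 a3 p12 p22 y1 y2 with hMy
  have hVann : ∀ Φ ∈ parallel Mx My, V ⬝ᵥ Φ = 0 := fun Φ hΦ =>
    curv_dot D1 D2 (dirD_comm _ _) a0 b1 b2 a3 p11 p12 p22 y1 y2 hy1 hy2 Φ hΦ.1 hΦ.2
  -- All covectors annihilating the hyperplane at `q` are proportional, and the last component of `V`
  -- is zero.
  have key : ∀ (q : X) (V' : Fin 6 → AnFun X), (∀ Φ ∈ parallel Mx My, V' ⬝ᵥ Φ = 0) →
      (V' 5).1 q ≠ 0 → evalAt q V = 0 := by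
    intro q V' hV' h
    have h5' := h5
    rw [← finrank_eval hX _ _ q] at h5'
    obtain ⟨l, hl, hW⟩ := hyperplane _ h5'
    have hann : ∀ U : Fin 6 → AnFun X, (∀ Φ ∈ parallel Mx My, U ⬝ᵥ Φ = 0) →
        ∀ w, l ⬝ᵥ w = 0 → evalAt q U ⬝ᵥ w = 0 := by
      intro U hU w hw
      obtain ⟨Φ, hΦ, rfl⟩ := (hW w).2 hw
      have := congrArg (fun f : AnFun X => f.1 q) (hU Φ hΦ)
      simpa [dotProduct, evalAt_apply] using this
    have c1 := annihilator_cross l _ (hann V hVann)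
    have c2 := annihilator_cross l _ (hann V' hV')
    have hl5 : l 5 ≠ 0 := by
      intro h0
      apply hl
      ext i
      have := c2 5 i
      rw [h0, mul_zero] at this
      exact (mul_eq_zero.1 this).resolve_left h
    ext i
    have := c1 i 5
    have hV5 : evalAt q V 5 = 0 := by simp [evalAt_apply, hV, curv]
    rw [hV5, zero_mul] at this
    exact (mul_eq_zero.1 this).resolve_right hl5
  -- The covariant derivatives of `V` have last components `5 y₁` and `5 y₂`, while the components of
  -- `V` with indices `3` and `4` are the same functions.
  have hy1z : y1 = 0 := by
    ext q
    by_contra hne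
    have hne' : y1.1 q ≠ 0 := hne
    have := key q (fun j => D1 (V j) + (V ᵥ* Mx) j)
      (fun Φ hΦ => by rw [← dot_deriv D1 Mx V Φ hΦ.1, hVann Φ hΦ, map_zero])
      (by simpa [hV, hMx, curv, connX, Matrix.vecMul, dotProduct, Fin.sum_univ_six,
        AnFun.five_apply] using hne')
    have := congrFun this 3
    simp [evalAt_apply, hV, curv, AnFun.five_apply] at this
    exact hne' this
  have hy2z : y2 = 0 := by
    ext q
    by_contra hne
    have hne' : y2.1 q ≠ 0 := hne
    have := key q (fun j => D2 (V j) + (V ᵥ* My) j)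
      (fun Φ hΦ => by rw [← dot_deriv D2 My V Φ hΦ.2, hVann Φ hΦ, map_zero])
      (by simpa [hV, hMy, curv, connY, Matrix.vecMul, dotProduct, Fin.sum_univ_six,
        AnFun.five_apply] using hne')
    have := congrFun this 4
    simp [evalAt_apply, hV, curv, AnFun.five_apply] at this
    exact hne' this
  rw [hMx, hMy, hy1z, hy2z] at h5
  exact flat_ne_five hX p _ _ _ _ _ _ _ h5

/-- A finite-dimensional subspace has a basis, phrased through unique coordinates. -/
theorem exists_coords {V : Type*} [AddCommGroup V] [Module ℝ V] (S : Submodule ℝ V)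
    [FiniteDimensional ℝ S] :
    ∃ B : Fin (Module.finrank ℝ S) → V, (∀ m, B m ∈ S) ∧
      ∀ Φ ∈ S, ∃! c : Fin (Module.finrank ℝ S) → ℝ, Φ = ∑ m, c m • B m := by
  let B := Module.finBasis ℝ S
  have hs : ∀ c : Fin (Module.finrank ℝ S) → ℝ, ∑ m, c m • (B m : V) = (∑ m, c m • B m : S) := by
    simp
  refine ⟨fun m => B m, fun m => (B m).2, fun Φ hΦ => ⟨B.repr ⟨Φ, hΦ⟩, ?_, fun c hc => ?_⟩⟩
  · change Φ = _
    rw [hs, B.sum_repr]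
  · replace hc : Φ = (∑ m, c m • B m : S) := Eq.trans hc (hs c)
    subst hc
    funext m
    change _ = B.repr (∑ m, c m • B m) m
    rw [B.repr_sum_self]

end Parallel

/-! ### Solutions of the Liouville system and parallel sections -/

theorem pdx_zext {X : TopologicalSpace.Opens (ℝ × ℝ)} (f : AnFun X) (q : X) :
    pdx (zext X f.1) q = (dirD (1, 0) f).1 q :=
  pdx_eq (AnFun.differentiableAt f q)

theorem pdy_zext {X : TopologicalSpace.Opens (ℝ × ℝ)} (f : AnFun X) (q : X) :
    pdy (zext X f.1) q = (dirD (0, 1) f).1 q :=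
  pdy_eq (AnFun.differentiableAt f q)

theorem pdx_mk {X : TopologicalSpace.Opens (ℝ × ℝ)} {g : ℝ × ℝ → ℝ} (hg : AnalyticOnNhd ℝ g X)
    (q : X) : (dirD (1, 0) (AnFun.mk' g hg)).1 q = pdx g q := by
  rw [dirD_mk, pdx_eq (hg q q.2).differentiableAt]

theorem pdy_mk {X : TopologicalSpace.Opens (ℝ × ℝ)} {g : ℝ × ℝ → ℝ} (hg : AnalyticOnNhd ℝ g X)
    (q : X) : (dirD (0, 1) (AnFun.mk' g hg)).1 q = pdy g q := by
  rw [dirD_mk, pdy_eq (hg q q.2).differentiableAt]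

/-- A parallel section is determined by its first three components, that is, by the corresponding
solution of the Liouville system. -/
theorem parallel_eq_zero {X : TopologicalSpace.Opens (ℝ × ℝ)}
    {a0 b1 b2 a3 p11 p12 p22 y1 y2 : AnFun X} {Φ : Fin 6 → AnFun X}
    (hΦ : Φ ∈ parallel (connX a0 b1 b2 p11 p12 y1 y2) (connY b1 b2 a3 p12 p22 y1 y2))
    (h0 : Φ 0 = 0) (h1 : Φ 1 = 0) (h2 : Φ 2 = 0) : Φ = 0 := by
  have x1 := hΦ.1 1
  have z1 := hΦ.2 1
  have x3 := hΦ.1 3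
  simp [connX, Matrix.mulVec, dotProduct, Fin.sum_univ_six, h0, h1, h2] at x1 x3
  simp [connY, Matrix.mulVec, dotProduct, Fin.sum_univ_six, h0, h1, h2] at z1
  rw [eq_comm] at x1 z1
  simp [x1, z1] at x3
  rw [eq_comm] at x3
  funext i
  fin_cases i <;> assumption

/-- The first three components of a parallel section, as `(ψ₃, -ψ₂, ψ₁)`, solve the Liouville system. -/
theorem liouville_of_parallel {X : TopologicalSpace.Opens (ℝ × ℝ)}
    {A0 A1 A2 A3 : ℝ × ℝ → ℝ} {a0 b1 b2 a3 p11 p12 p22 y1 y2 : AnFun X}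
    (ha0 : ∀ q, a0.1 q = A0 q) (hb1 : ∀ q, b1.1 q = A1 q / 3) (hb2 : ∀ q, b2.1 q = A2 q / 3)
    (ha3 : ∀ q, a3.1 q = A3 q) {Φ : Fin 6 → AnFun X}
    (hΦ : Φ ∈ parallel (connX a0 b1 b2 p11 p12 y1 y2) (connY b1 b2 a3 p12 p22 y1 y2)) :
    AnalyticLiouvilleSol X A0 A1 A2 A3
      (zext X (Φ 2).1, zext X (-Φ 1).1, zext X (Φ 0).1) := by
  refine ⟨(Φ 2).2, (-Φ 1).2, (Φ 0).2, fun p hp => ?_⟩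
  lift p to X using hp
  simp only [pdx_zext, pdy_zext, zext_apply, map_neg]
  have x0 := congrArg (fun f : AnFun X => f.1 p) (hΦ.1 0)
  have x1 := congrArg (fun f : AnFun X => f.1 p) (hΦ.1 1)
  have x2 := congrArg (fun f : AnFun X => f.1 p) (hΦ.1 2)
  have z0 := congrArg (fun f : AnFun X => f.1 p) (hΦ.2 0)
  have z1 := congrArg (fun f : AnFun X => f.1 p) (hΦ.2 1)
  have z2 := congrArg (fun f : AnFun X => f.1 p) (hΦ.2 2)
  simp [connX, Matrix.mulVec, dotProduct, Fin.sum_univ_six, ha0, hb1, hb2, ha3,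
    AnFun.two_apply] at x0 x1 x2
  simp [connY, Matrix.mulVec, dotProduct, Fin.sum_univ_six, ha0, hb1, hb2, ha3,
    AnFun.two_apply] at z0 z1 z2
  simp only [NegMemClass.coe_neg, Pi.neg_apply, x0, x1, x2, z0, z1, z2]
  refine ⟨?_, ?_, ?_, ?_⟩ <;> ring

/-- `prolong` for analytic functions on `X`. -/
theorem parallel_of_liouville {X : TopologicalSpace.Opens (ℝ × ℝ)}
    {A0 A1 A2 A3 : ℝ × ℝ → ℝ} {a0 b1 b2 a3 p11 p12 p22 y1 y2 : AnFun X}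
    (ha0 : ∀ q, a0.1 q = A0 q) (hb1 : ∀ q, b1.1 q = A1 q / 3) (hb2 : ∀ q, b2.1 q = A2 q / 3)
    (ha3 : ∀ q, a3.1 q = A3 q)
    (hp11 : p11 = dirD (1, 0) b1 - dirD (0, 1) a0 - 2 * b1 ^ 2 + 2 * a0 * b2)
    (hp12 : p12 = dirD (1, 0) b2 - dirD (0, 1) b1 + a0 * a3 - b1 * b2)
    (hp22 : p22 = dirD (1, 0) a3 - dirD (0, 1) b2 - 2 * b2 ^ 2 + 2 * a3 * b1)
    (hy1 : y1 = dirD (1, 0) p12 - dirD (0, 1) p11 - 2 * b1 * p12 + a0 * p22 + b2 * p11)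
    (hy2 : y2 = dirD (1, 0) p22 - dirD (0, 1) p12 - 2 * b2 * p12 + b1 * p22 + a3 * p11)
    {Ψ : (ℝ × ℝ → ℝ) × (ℝ × ℝ → ℝ) × (ℝ × ℝ → ℝ)} (hΨ : AnalyticLiouvilleSol X A0 A1 A2 A3 Ψ) :
    ∃ Φ ∈ parallel (connX a0 b1 b2 p11 p12 y1 y2) (connY b1 b2 a3 p12 p22 y1 y2),
      ∀ q : X, (Φ 2).1 q = Ψ.1 q ∧ (Φ 1).1 q = -Ψ.2.1 q ∧ (Φ 0).1 q = Ψ.2.2 q := by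
  obtain ⟨h1, h2, h3, hL⟩ := hΨ
  obtain ⟨Φ, e0, e1, e2, hx, hy⟩ := prolong (R := AnFun X)
    (fun z hz => by
      ext q
      have := congrArg (fun f : AnFun X => f.1 q) hz
      simpa [AnFun.two_apply] using this)
    (dirD (1, 0)) (dirD (0, 1)) (dirD_comm _ _) a0 b1 b2 a3 p11 p12 p22 y1 y2
    hp11 hp12 hp22 hy1 hy2 (AnFun.mk' _ h1) (AnFun.mk' _ h2) (AnFun.mk' _ h3)
    (by
      ext q
      simp only [AddMemClass.coe_add, AddSubgroupClass.coe_sub, MulMemClass.coe_mul, Pi.add_apply,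
        Pi.sub_apply, Pi.mul_apply, pdx_mk, pdy_mk, ha0, hb1, hb2, ha3, AnFun.two_apply,
        AnFun.four_apply, AnFun.mk_apply]
      linear_combination (hL q q.2).1)
    (by
      ext q
      simp only [AddMemClass.coe_add, AddSubgroupClass.coe_sub, MulMemClass.coe_mul, Pi.add_apply,
        Pi.sub_apply, Pi.mul_apply, pdx_mk, pdy_mk, ha0, hb1, hb2, ha3, AnFun.two_apply,
        AnFun.four_apply, AnFun.mk_apply]
      linear_combination (hL q q.2).2.1)
    (by
      ext q
      simp only [AddMemClass.coe_add, AddSubgroupClass.coe_sub, MulMemClass.coe_mul, Pi.add_apply,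
        Pi.sub_apply, Pi.mul_apply, pdx_mk, pdy_mk, ha0, hb1, hb2, ha3, AnFun.two_apply,
        AnFun.four_apply, AnFun.mk_apply]
      linear_combination (hL q q.2).2.2.1)
    (by
      ext q
      simp only [AddMemClass.coe_add, AddSubgroupClass.coe_sub, MulMemClass.coe_mul, Pi.add_apply,
        Pi.sub_apply, Pi.mul_apply, pdx_mk, pdy_mk, ha0, hb1, hb2, ha3, AnFun.two_apply,
        AnFun.four_apply, AnFun.mk_apply]
      linear_combination (hL q q.2).2.2.2)
  exact ⟨Φ, ⟨hx, hy⟩, fun q => ⟨by rw [e2]; rfl, by rw [e1]; rfl, by rw [e0]; rfl⟩⟩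

/-- **Koenigs' theorem.** The space of real-analytic solutions of the Liouville linear
system on a connected, simply connected `U` is finite dimensional of dimension
`0, 1, 2, 3, 4` or `6` (never `5`, never more than `6`). -/
theorem koenigs_dimension (U : Set (ℝ × ℝ)) (hU : IsOpen U) (hUconn : IsConnected U)
    (hUsc : SimplyConnectedSpace U)
    (A0 A1 A2 A3 : ℝ × ℝ → ℝ)
    (hA0 : AnalyticOnNhd ℝ A0 U) (hA1 : AnalyticOnNhd ℝ A1 U)
    (hA2 : AnalyticOnNhd ℝ A2 U) (hA3 : AnalyticOnNhd ℝ A3 U) :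
    ∃ d : ℕ, (d = 0 ∨ d = 1 ∨ d = 2 ∨ d = 3 ∨ d = 4 ∨ d = 6) ∧
      ∃ b : Fin d → (ℝ × ℝ → ℝ) × (ℝ × ℝ → ℝ) × (ℝ × ℝ → ℝ),
        (∀ m, AnalyticLiouvilleSol U A0 A1 A2 A3 (b m)) ∧
        (∀ Ψ, AnalyticLiouvilleSol U A0 A1 A2 A3 Ψ →
          ∃! c : Fin d → ℝ, ∀ p ∈ U,
            Ψ.1 p = ∑ m, c m * (b m).1 p ∧
            Ψ.2.1 p = ∑ m, c m * (b m).2.1 p ∧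
            Ψ.2.2 p = ∑ m, c m * (b m).2.2 p) := by
  obtain ⟨X, rfl⟩ : ∃ X : TopologicalSpace.Opens (ℝ × ℝ), (X : Set (ℝ × ℝ)) = U := ⟨⟨U, hU⟩, rfl⟩
  obtain ⟨p, hp⟩ := hUconn.nonempty
  lift p to X using hp
  have hpre := hUconn.isPreconnected
  obtain ⟨a0, ha0⟩ : ∃ a0 : AnFun X, ∀ q, a0.1 q = A0 q := ⟨AnFun.mk' A0 hA0, fun _ => rfl⟩
  obtain ⟨b1, hb1⟩ : ∃ b1 : AnFun X, ∀ q, b1.1 q = A1 q / 3 :=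
    ⟨AnFun.mk' (fun q => A1 q / 3) hA1.div_const, fun _ => rfl⟩
  obtain ⟨b2, hb2⟩ : ∃ b2 : AnFun X, ∀ q, b2.1 q = A2 q / 3 :=
    ⟨AnFun.mk' (fun q => A2 q / 3) hA2.div_const, fun _ => rfl⟩
  obtain ⟨a3, ha3⟩ : ∃ a3 : AnFun X, ∀ q, a3.1 q = A3 q := ⟨AnFun.mk' A3 hA3, fun _ => rfl⟩
  obtain ⟨p11, hp11⟩ : ∃ z : AnFun X,
      z = dirD (1, 0) b1 - dirD (0, 1) a0 - 2 * b1 ^ 2 + 2 * a0 * b2 := ⟨_, rfl⟩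
  obtain ⟨p12, hp12⟩ : ∃ z : AnFun X,
      z = dirD (1, 0) b2 - dirD (0, 1) b1 + a0 * a3 - b1 * b2 := ⟨_, rfl⟩
  obtain ⟨p22, hp22⟩ : ∃ z : AnFun X,
      z = dirD (1, 0) a3 - dirD (0, 1) b2 - 2 * b2 ^ 2 + 2 * a3 * b1 := ⟨_, rfl⟩
  obtain ⟨y1, hy1⟩ : ∃ z : AnFun X,
      z = dirD (1, 0) p12 - dirD (0, 1) p11 - 2 * b1 * p12 + a0 * p22 + b2 * p11 := ⟨_, rfl⟩
  obtain ⟨y2, hy2⟩ : ∃ z : AnFun X,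
      z = dirD (1, 0) p22 - dirD (0, 1) p12 - 2 * b2 * p12 + b1 * p22 + a3 * p11 := ⟨_, rfl⟩
  have hfin := finite_parallel hpre (connX a0 b1 b2 p11 p12 y1 y2) (connY b1 b2 a3 p12 p22 y1 y2) p
  have h5 := curved_ne_five hpre p a0 b1 b2 a3 p11 p12 p22 y1 y2 hy1 hy2
  have h6 := LinearMap.finrank_le_finrank_of_injective (evalAt_injOn hpre
    (connX a0 b1 b2 p11 p12 y1 y2) (connY b1 b2 a3 p12 p22 y1 y2) p)
  rw [Module.finrank_fin_fun] at h6
  obtain ⟨B, hB, hcoord⟩ := exists_coords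
    (parallel (connX a0 b1 b2 p11 p12 y1 y2) (connY b1 b2 a3 p12 p22 y1 y2))
  refine ⟨_, by omega, fun m => (zext X (B m 2).1, zext X (-B m 1).1, zext X (B m 0).1),
    fun m => liouville_of_parallel ha0 hb1 hb2 ha3 (hB m), fun Ψ hΨ => ?_⟩
  obtain ⟨Φ, hΦ, hval⟩ := parallel_of_liouville ha0 hb1 hb2 ha3 hp11 hp12 hp22 hy1 hy2 hΨ
  have hcomp : ∀ (c : Fin _ → ℝ) (q : X) (k : Fin 6),
      ((∑ m, c m • B m) k).1 q = ∑ m, c m * (B m k).1 q := by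
    intro c q k
    simp [Finset.sum_apply]
  obtain ⟨c, hc, huniq⟩ := hcoord Φ hΦ
  refine ⟨c, ?_, fun c' hc' => huniq c' ?_⟩
  · intro q hq
    lift q to X using hq
    have hs : ∀ k, (Φ k).1 q = ∑ m, c m * (B m k).1 q := by
      intro k
      rw [← hcomp, ← hc]
    obtain ⟨v2, v1, v0⟩ := hval q
    simp only [zext_apply, NegMemClass.coe_neg, Pi.neg_apply, mul_neg, Finset.sum_neg_distrib]
    exact ⟨by rw [← v2, hs], by rw [← hs, v1, neg_neg], by rw [← v0, hs]⟩
  · have hk : ∀ k : Fin 6, k = 0 ∨ k = 1 ∨ k = 2 → (Φ - ∑ m, c' m • B m) k = 0 := by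
      intro k hk
      ext q
      refine sub_eq_zero.2 ?_
      obtain ⟨v2, v1, v0⟩ := hval q
      obtain ⟨c2, c1, c0⟩ := hc' q q.2
      simp only [zext_apply, NegMemClass.coe_neg, Pi.neg_apply, mul_neg,
        Finset.sum_neg_distrib] at c0 c1 c2
      rw [hcomp]
      rcases hk with rfl | rfl | rfl
      · rw [v0, c0]
      · rw [v1, c1, neg_neg]
      · rw [v2, c2]
    exact sub_eq_zero.1 (parallel_eq_zero
      (Submodule.sub_mem _ hΦ (Submodule.sum_mem _ fun m _ => Submodule.smul_mem _ _ (hB m)))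
      (hk 0 (by simp)) (hk 1 (by simp)) (hk 2 (by simp)))
end

section
/- If A₀, A₁, A₂, A₃ are real analytic on a connected open U ⊆ ℝ² and the vector space of real-analytic solutions (ψ₁,ψ₂,ψ₃) of the Liouville linear system on U has dimension d ≥ 2, then this space contains d linearly independent solutions each of which satisfies ψ₁ψ₃ − ψ₂² ≠ 0 at some point of U (i.e. each defines a nondegenerate quadratic form somewhere on U). -/
/-- A family of solutions is linearly independent as functions on `U`. -/
def LinIndepOnU (U : Set (ℝ × ℝ)) {d : ℕ}
    (b : Fin d → (ℝ × ℝ → ℝ) × (ℝ × ℝ → ℝ) × (ℝ × ℝ → ℝ)) : Prop :=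
  ∀ c : Fin d → ℝ,
    (∀ p ∈ U, (∑ m, c m * (b m).1 p) = 0 ∧ (∑ m, c m * (b m).2.1 p) = 0 ∧
      (∑ m, c m * (b m).2.2 p) = 0) → c = 0

/-! ### Partial derivatives -/

theorem hasDerivAt_pdx {f : ℝ × ℝ → ℝ} {p : ℝ × ℝ} (h : DifferentiableAt ℝ f p) :
    HasDerivAt (fun t => f (t, p.2)) (pdx f p) p.1 := by
  have h1 : DifferentiableAt ℝ (fun t : ℝ => f (t, p.2)) p.1 :=
    DifferentiableAt.comp p.1 (g := f) (f := fun t : ℝ => (t, p.2)) h (by fun_prop)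
  exact h1.hasDerivAt

theorem hasDerivAt_pdy {f : ℝ × ℝ → ℝ} {p : ℝ × ℝ} (h : DifferentiableAt ℝ f p) :
    HasDerivAt (fun t => f (p.1, t)) (pdy f p) p.2 := by
  have h1 : DifferentiableAt ℝ (fun t : ℝ => f (p.1, t)) p.2 :=
    DifferentiableAt.comp p.2 (g := f) (f := fun t : ℝ => (p.1, t)) h (by fun_prop)
  exact h1.hasDerivAt

theorem fderiv_eq_zero_of_pd {f : ℝ × ℝ → ℝ} {p : ℝ × ℝ} (h : DifferentiableAt ℝ f p)
    (hx : pdx f p = 0) (hy : pdy f p = 0) : fderiv ℝ f p = 0 := by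
  have h1 : HasDerivAt (fun t => f (t, p.2)) (fderiv ℝ f p (1, 0)) p.1 :=
    HasFDerivAt.comp_hasDerivAt p.1 (l := f) (f := fun t : ℝ => (t, p.2)) h.hasFDerivAt
      ((hasDerivAt_id p.1).prodMk (hasDerivAt_const p.1 p.2))
  have h2 : HasDerivAt (fun t => f (p.1, t)) (fderiv ℝ f p (0, 1)) p.2 :=
    HasFDerivAt.comp_hasDerivAt p.2 (l := f) (f := fun t : ℝ => (p.1, t)) h.hasFDerivAt
      ((hasDerivAt_const p.2 p.1).prodMk (hasDerivAt_id p.2))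
  have e1 := h1.unique (hasDerivAt_pdx h)
  have e2 := h2.unique (hasDerivAt_pdy h)
  ext
  · simpa [hx] using e1
  · simpa [hy] using e2

/-- The derivative of the identity `f g = h k` along the `x` direction. -/
theorem pdx_cross {U : Set (ℝ × ℝ)} (hU : IsOpen U) {f g h k : ℝ × ℝ → ℝ}
    (e : ∀ p ∈ U, f p * g p = h p * k p) {p : ℝ × ℝ} (hp : p ∈ U)
    (hf : DifferentiableAt ℝ f p) (hg : DifferentiableAt ℝ g p)
    (hh : DifferentiableAt ℝ h p) (hk : DifferentiableAt ℝ k p) :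
    pdx f p * g p + f p * pdx g p = pdx h p * k p + h p * pdx k p := by
  have h1 := (hasDerivAt_pdx hf).mul (hasDerivAt_pdx hg)
  have h2 := (hasDerivAt_pdx hh).mul (hasDerivAt_pdx hk)
  refine h1.unique (h2.congr_of_eventuallyEq ?_)
  have hc : ContinuousAt (fun t : ℝ => (t, p.2)) p.1 := by fun_prop
  filter_upwards [hc.preimage_mem_nhds (hU.mem_nhds hp)] with t ht
  exact e _ ht

/-- The derivative of the identity `f g = h k` along the `y` direction. -/
theorem pdy_cross {U : Set (ℝ × ℝ)} (hU : IsOpen U) {f g h k : ℝ × ℝ → ℝ}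
    (e : ∀ p ∈ U, f p * g p = h p * k p) {p : ℝ × ℝ} (hp : p ∈ U)
    (hf : DifferentiableAt ℝ f p) (hg : DifferentiableAt ℝ g p)
    (hh : DifferentiableAt ℝ h p) (hk : DifferentiableAt ℝ k p) :
    pdy f p * g p + f p * pdy g p = pdy h p * k p + h p * pdy k p := by
  have h1 := (hasDerivAt_pdy hf).mul (hasDerivAt_pdy hg)
  have h2 := (hasDerivAt_pdy hh).mul (hasDerivAt_pdy hk)
  refine h1.unique (h2.congr_of_eventuallyEq ?_)
  have hc : ContinuousAt (fun t : ℝ => (p.1, t)) p.2 := by fun_prop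
  filter_upwards [hc.preimage_mem_nhds (hU.mem_nhds hp)] with t ht
  exact e _ ht

/-- If the Wronskians of `u` and `v` in both directions vanish, then `u` is a constant multiple
of `v` near any point where `v ≠ 0`: the quotient `u / v` has zero differential. -/
theorem eventually_eq_const_mul {U : Set (ℝ × ℝ)} (hU : IsOpen U) {u v : ℝ × ℝ → ℝ}
    (hu : AnalyticOnNhd ℝ u U) (hv : AnalyticOnNhd ℝ v U)
    (hx : ∀ p ∈ U, pdx u p * v p = u p * pdx v p)
    (hy : ∀ p ∈ U, pdy u p * v p = u p * pdy v p)
    {p : ℝ × ℝ} (hp : p ∈ U) (hvp : v p ≠ 0) :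
    ∃ c : ℝ, ∀ᶠ q in nhds p, v q ≠ 0 ∧ u q = c * v q := by
  have hev : ∀ᶠ q in nhds p, q ∈ U ∧ v q ≠ 0 :=
    (hU.eventually_mem hp).and ((hv p hp).continuousAt.eventually_ne hvp)
  obtain ⟨r, hr, hball⟩ := Metric.eventually_nhds_iff_ball.1 hev
  have hdiff : ∀ q ∈ Metric.ball p r, DifferentiableAt ℝ (fun z => u z / v z) q := fun q hq =>
    ((hu q (hball q hq).1).fun_div (hv q (hball q hq).1) (hball q hq).2).differentiableAt
  have hzero : Set.EqOn (fderiv ℝ (fun z => u z / v z)) 0 (Metric.ball p r) := by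
    intro q hq
    obtain ⟨hqU, hvq⟩ := hball q hq
    have du := (hu q hqU).differentiableAt
    have dv := (hv q hqU).differentiableAt
    refine fderiv_eq_zero_of_pd (hdiff q hq) ?_ ?_
    · have := ((hasDerivAt_pdx du).div (hasDerivAt_pdx dv) hvq).deriv
      refine this.trans ?_
      simp [hx q hqU]
    · have := ((hasDerivAt_pdy du).div (hasDerivAt_pdy dv) hvq).deriv
      refine this.trans ?_
      simp [hy q hqU]
  obtain ⟨c, hc⟩ := Metric.isOpen_ball.exists_is_const_of_fderiv_eq_zero
    (convex_ball p r).isPreconnected (fun q hq => (hdiff q hq).differentiableWithinAt) hzero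
  refine ⟨c, ?_⟩
  filter_upwards [Metric.ball_mem_nhds p hr] with q hq
  have h1 := hc q hq
  have h2 := (hball q hq).2
  exact ⟨h2, (div_eq_iff h2).1 h1⟩

/-! ### Everywhere degenerate pencils of solutions -/

/-- Two vectors spanning a totally isotropic subspace for `a₁a₃ − a₂²` are proportional: their
2×2 minors vanish, since the square of each minor lies in the ideal of the isotropy relations. -/
theorem minors_eq_zero {a1 a2 a3 b1 b2 b3 : ℝ} (ha : a1 * a3 - a2 ^ 2 = 0)
    (hb : b1 * b3 - b2 ^ 2 = 0) (hab : (a1 + b1) * (a3 + b3) - (a2 + b2) ^ 2 = 0) :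
    b2 * a1 = b1 * a2 ∧ b3 * a1 = b1 * a3 ∧ b2 * a3 = b3 * a2 := by
  have hB : a1 * b3 + b1 * a3 - 2 * a2 * b2 = 0 := by linear_combination hab - ha - hb
  refine ⟨sub_eq_zero.1 (pow_eq_zero_iff two_ne_zero |>.1 ?_),
    sub_eq_zero.1 (pow_eq_zero_iff two_ne_zero |>.1 ?_),
    sub_eq_zero.1 (pow_eq_zero_iff two_ne_zero |>.1 ?_)⟩
  · linear_combination a1 * b1 * hB - a1 ^ 2 * hb - b1 ^ 2 * ha
  · linear_combination (a1 * b3 + b1 * a3 + 2 * a2 * b2) * hB - 4 * b1 * b3 * ha - 4 * a2 ^ 2 * hb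
  · linear_combination a3 * b3 * hB - a3 ^ 2 * hb - b3 ^ 2 * ha

/-- Two solutions whose pencil is degenerate everywhere on `U` are proportional over the
constants, provided the first does not vanish identically. -/
theorem proportional_of_isotropic {U : Set (ℝ × ℝ)} (hU : IsOpen U) (hUconn : IsConnected U)
    {A0 A1 A2 A3 : ℝ × ℝ → ℝ} {Ψ Φ : (ℝ × ℝ → ℝ) × (ℝ × ℝ → ℝ) × (ℝ × ℝ → ℝ)}
    (hΨ : AnalyticLiouvilleSol U A0 A1 A2 A3 Ψ) (hΦ : AnalyticLiouvilleSol U A0 A1 A2 A3 Φ)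
    (qΨ : ∀ p ∈ U, Ψ.1 p * Ψ.2.2 p - (Ψ.2.1 p) ^ 2 = 0)
    (qΦ : ∀ p ∈ U, Φ.1 p * Φ.2.2 p - (Φ.2.1 p) ^ 2 = 0)
    (qB : ∀ p ∈ U, (Ψ.1 p + Φ.1 p) * (Ψ.2.2 p + Φ.2.2 p) - (Ψ.2.1 p + Φ.2.1 p) ^ 2 = 0)
    {p : ℝ × ℝ} (hp : p ∈ U) (hne : ¬ (Ψ.1 p = 0 ∧ Ψ.2.1 p = 0 ∧ Ψ.2.2 p = 0)) :
    ∃ c : ℝ, ∀ q ∈ U, Φ.1 q = c * Ψ.1 q ∧ Φ.2.1 q = c * Ψ.2.1 q ∧ Φ.2.2 q = c * Ψ.2.2 q := by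
  obtain ⟨ψ1, ψ2, ψ3⟩ := Ψ
  obtain ⟨φ1, φ2, φ3⟩ := Φ
  obtain ⟨aψ1, aψ2, aψ3, sψ⟩ := hΨ
  obtain ⟨aφ1, aφ2, aφ3, sφ⟩ := hΦ
  dsimp only at *
  have m12 : ∀ q ∈ U, φ2 q * ψ1 q = φ1 q * ψ2 q := fun q hq =>
    (minors_eq_zero (qΨ q hq) (qΦ q hq) (qB q hq)).1
  have m13 : ∀ q ∈ U, φ3 q * ψ1 q = φ1 q * ψ3 q := fun q hq =>
    (minors_eq_zero (qΨ q hq) (qΦ q hq) (qB q hq)).2.1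
  have m23 : ∀ q ∈ U, φ2 q * ψ3 q = φ3 q * ψ2 q := fun q hq =>
    (minors_eq_zero (qΨ q hq) (qΦ q hq) (qB q hq)).2.2
  -- By the identity theorem, proportionality near `p` is enough.
  suffices H : ∃ c : ℝ, ∀ᶠ q in nhds p,
      φ1 q = c * ψ1 q ∧ φ2 q = c * ψ2 q ∧ φ3 q = c * ψ3 q by
    obtain ⟨c, hc⟩ := H
    have ext : ∀ {f g : ℝ × ℝ → ℝ}, AnalyticOnNhd ℝ f U → AnalyticOnNhd ℝ g U →
        (∀ᶠ q in nhds p, f q = c * g q) → ∀ q ∈ U, f q = c * g q := fun {f g} hf hg h q hq =>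
      hf.eqOn_of_preconnected_of_eventuallyEq
        (g := fun z => c * g z) (analyticOnNhd_const.mul hg) hUconn.isPreconnected hp h hq
    exact ⟨c, fun q hq => ⟨ext aφ1 aψ1 (hc.mono fun _ h => h.1) q hq,
      ext aφ2 aψ2 (hc.mono fun _ h => h.2.1) q hq,
      ext aφ3 aψ3 (hc.mono fun _ h => h.2.2) q hq⟩⟩
  by_cases h1 : ψ1 p = 0
  · -- Degeneracy gives `ψ₂ = 0` at `p`, so it is `ψ₃` that is nonzero.
    have h2 : ψ2 p = 0 := by
      have := qΨ p hp
      rw [h1] at this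
      simpa using this
    have h3 : ψ3 p ≠ 0 := fun h3 => hne ⟨h1, h2, h3⟩
    obtain ⟨c, hc⟩ := eventually_eq_const_mul hU aφ3 aψ3 (fun q hq => by
        obtain ⟨-, y1, -, z1⟩ := sψ q hq
        obtain ⟨-, y2, -, z2⟩ := sφ q hq
        have hd := pdy_cross hU m23 hq (aφ2 q hq).differentiableAt (aψ3 q hq).differentiableAt
          (aφ3 q hq).differentiableAt (aψ2 q hq).differentiableAt
        rw [y1, y2] at hd
        linear_combination ψ3 q * z2 - φ3 q * z1 - 2 * hd
          + (2/3 * A2 q - 4/3 * A2 q) * m23 q hq - 2 * A3 q * m13 q hq)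
      (fun q hq => by
        obtain ⟨-, y1, -, -⟩ := sψ q hq
        obtain ⟨-, y2, -, -⟩ := sφ q hq
        rw [y1, y2]
        linear_combination 2 * A3 q * m23 q hq) hp h3
    refine ⟨c, ?_⟩
    filter_upwards [hc, hU.mem_nhds hp] with q hq hqU
    obtain ⟨h0, e⟩ := hq
    refine ⟨mul_right_cancel₀ h0 ?_, mul_right_cancel₀ h0 ?_, e⟩
    · linear_combination -(m13 q hqU) + ψ1 q * e
    · linear_combination m23 q hqU + ψ2 q * e
  · obtain ⟨c, hc⟩ := eventually_eq_const_mul hU aφ1 aψ1 (fun q hq => by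
        obtain ⟨x1, -, -, -⟩ := sψ q hq
        obtain ⟨x2, -, -, -⟩ := sφ q hq
        rw [x1, x2]
        linear_combination -2 * A0 q * m12 q hq)
      (fun q hq => by
        obtain ⟨x1, -, z1, -⟩ := sψ q hq
        obtain ⟨x2, -, z2, -⟩ := sφ q hq
        have hd := pdx_cross hU m12 hq (aφ2 q hq).differentiableAt (aψ1 q hq).differentiableAt
          (aφ1 q hq).differentiableAt (aψ2 q hq).differentiableAt
        rw [x1, x2] at hd
        linear_combination ψ1 q * z2 - φ1 q * z1 - 2 * hd
          + (4/3 * A1 q - 2/3 * A1 q) * m12 q hq - 2 * A0 q * m13 q hq) hp h1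
    refine ⟨c, ?_⟩
    filter_upwards [hc, hU.mem_nhds hp] with q hq hqU
    obtain ⟨h0, e⟩ := hq
    refine ⟨e, mul_right_cancel₀ h0 ?_, mul_right_cancel₀ h0 ?_⟩
    · linear_combination m12 q hqU + ψ2 q * e
    · linear_combination m13 q hqU + ψ3 q * e

/-! ### Linear combinations of solutions -/

/-- The linear combination of the triples `b m` with coefficients `c m`. -/
noncomputable def comb {d : ℕ} (b : Fin d → (ℝ × ℝ → ℝ) × (ℝ × ℝ → ℝ) × (ℝ × ℝ → ℝ))
    (c : Fin d → ℝ) : (ℝ × ℝ → ℝ) × (ℝ × ℝ → ℝ) × (ℝ × ℝ → ℝ) :=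
  (fun p => ∑ m, c m * (b m).1 p, fun p => ∑ m, c m * (b m).2.1 p,
    fun p => ∑ m, c m * (b m).2.2 p)

theorem sum_single_mul {d : ℕ} (f : Fin d → ℝ) (m : Fin d) :
    ∑ k, (Pi.single m 1 : Fin d → ℝ) k * f k = f m := by
  simp [Pi.single_apply]

theorem sum_add_smul_mul {d : ℕ} (f u v : Fin d → ℝ) (t : ℝ) :
    ∑ k, (u + t • v) k * f k = ∑ k, u k * f k + t * ∑ k, v k * f k := by
  simp [add_mul, Finset.sum_add_distrib, Finset.mul_sum, mul_assoc]

theorem pdx_sum {d : ℕ} (c : Fin d → ℝ) (f : Fin d → ℝ × ℝ → ℝ) {p : ℝ × ℝ}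
    (h : ∀ m, DifferentiableAt ℝ (f m) p) :
    pdx (fun q => ∑ m, c m * f m q) p = ∑ m, c m * pdx (f m) p :=
  (HasDerivAt.fun_sum fun m _ => (hasDerivAt_pdx (h m)).const_mul (c m)).deriv

theorem pdy_sum {d : ℕ} (c : Fin d → ℝ) (f : Fin d → ℝ × ℝ → ℝ) {p : ℝ × ℝ}
    (h : ∀ m, DifferentiableAt ℝ (f m) p) :
    pdy (fun q => ∑ m, c m * f m q) p = ∑ m, c m * pdy (f m) p :=
  (HasDerivAt.fun_sum fun m _ => (hasDerivAt_pdy (h m)).const_mul (c m)).deriv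

theorem comb_sol {U : Set (ℝ × ℝ)} {A0 A1 A2 A3 : ℝ × ℝ → ℝ} {d : ℕ}
    {b : Fin d → (ℝ × ℝ → ℝ) × (ℝ × ℝ → ℝ) × (ℝ × ℝ → ℝ)}
    (hb : ∀ m, AnalyticLiouvilleSol U A0 A1 A2 A3 (b m)) (c : Fin d → ℝ) :
    AnalyticLiouvilleSol U A0 A1 A2 A3 (comb b c) := by
  refine ⟨Finset.analyticOnNhd_fun_sum Finset.univ fun m _ =>
      (analyticOnNhd_const (v := c m)).mul (hb m).1,
    Finset.analyticOnNhd_fun_sum Finset.univ fun m _ =>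
      (analyticOnNhd_const (v := c m)).mul (hb m).2.1,
    Finset.analyticOnNhd_fun_sum Finset.univ fun m _ =>
      (analyticOnNhd_const (v := c m)).mul (hb m).2.2.1, ?_⟩
  intro p hp
  have d1 : ∀ m, DifferentiableAt ℝ (b m).1 p := fun m => ((hb m).1 p hp).differentiableAt
  have d2 : ∀ m, DifferentiableAt ℝ (b m).2.1 p := fun m => ((hb m).2.1 p hp).differentiableAt
  have d3 : ∀ m, DifferentiableAt ℝ (b m).2.2 p := fun m => ((hb m).2.2.1 p hp).differentiableAt
  simp only [comb]
  rw [pdx_sum c _ d1, pdx_sum c _ d2, pdx_sum c _ d3, pdy_sum c _ d1, pdy_sum c _ d2,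
    pdy_sum c _ d3]
  simp only [Finset.mul_sum, ← Finset.sum_add_distrib, ← Finset.sum_sub_distrib]
  refine ⟨Finset.sum_congr rfl fun m _ => ?_, Finset.sum_congr rfl fun m _ => ?_,
    Finset.sum_congr rfl fun m _ => ?_, Finset.sum_congr rfl fun m _ => ?_⟩
  · linear_combination c m * ((hb m).2.2.2 p hp).1
  · linear_combination c m * ((hb m).2.2.2 p hp).2.1
  · linear_combination c m * ((hb m).2.2.2 p hp).2.2.1
  · linear_combination c m * ((hb m).2.2.2 p hp).2.2.2

/-- Some linear combination of `d ≥ 2` independent solutions is nondegenerate somewhere. -/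
theorem exists_nondegenerate_comb {U : Set (ℝ × ℝ)} (hU : IsOpen U) (hUconn : IsConnected U)
    {A0 A1 A2 A3 : ℝ × ℝ → ℝ} {d : ℕ} (hd : 2 ≤ d)
    {b : Fin d → (ℝ × ℝ → ℝ) × (ℝ × ℝ → ℝ) × (ℝ × ℝ → ℝ)}
    (hb : ∀ m, AnalyticLiouvilleSol U A0 A1 A2 A3 (b m)) (hbind : LinIndepOnU U b) :
    ∃ c : Fin d → ℝ, ∃ q ∈ U,
      (comb b c).1 q * (comb b c).2.2 q - ((comb b c).2.1 q) ^ 2 ≠ 0 := by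
  by_contra! hQ
  set i : Fin d := ⟨0, by omega⟩ with hi
  set j : Fin d := ⟨1, by omega⟩ with hj
  have hij : i ≠ j := by simp [hi, hj]
  have hne : ∃ p ∈ U, ¬ ((b i).1 p = 0 ∧ (b i).2.1 p = 0 ∧ (b i).2.2 p = 0) := by
    by_contra! h
    have h0 := hbind (Pi.single i 1) fun p hp => by
      simp only [sum_single_mul]
      have := h p hp
      tauto
    simpa using congrFun h0 i
  obtain ⟨p, hp, hne⟩ := hne
  have q1 : ∀ m, ∀ q ∈ U, (b m).1 q * (b m).2.2 q - ((b m).2.1 q) ^ 2 = 0 := fun m q hq => by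
    simpa only [comb, sum_single_mul] using hQ (Pi.single m 1) q hq
  have q2 : ∀ q ∈ U, ((b i).1 q + (b j).1 q) * ((b i).2.2 q + (b j).2.2 q)
      - ((b i).2.1 q + (b j).2.1 q) ^ 2 = 0 := fun q hq => by
    simpa only [comb, sum_add_smul_mul, sum_single_mul, one_mul] using
      hQ ((Pi.single i 1 : Fin d → ℝ) + (1 : ℝ) • (Pi.single j 1 : Fin d → ℝ)) q hq
  obtain ⟨c, hc⟩ := proportional_of_isotropic hU hUconn (hb i) (hb j) (q1 i) (q1 j) q2 hp hne
  have h0 := hbind (Pi.single j 1 + (-c) • Pi.single i 1) fun q hq => by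
    simp only [sum_add_smul_mul, sum_single_mul]
    obtain ⟨e1, e2, e3⟩ := hc q hq
    rw [e1, e2, e3]
    refine ⟨?_, ?_, ?_⟩ <;> ring
  simpa [hij.symm] using congrFun h0 j

/-- A polynomial `x + y t + z t²` with `z ≠ 0` has finitely many real roots. -/
theorem finite_roots_quadratic (x y : ℝ) {z : ℝ} (hz : z ≠ 0) :
    {t : ℝ | x + y * t + z * t ^ 2 = 0}.Finite := by
  have hP : (Polynomial.C z * Polynomial.X ^ 2 + Polynomial.C y * Polynomial.X
      + Polynomial.C x) ≠ 0 := by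
    intro h
    have := Polynomial.degree_quadratic (b := y) (c := x) hz
    rw [h] at this
    simp at this
  refine (Polynomial.finite_setOfPred_isRoot hP).subset fun t ht => ?_
  simp only [Set.mem_ofPred_eq, Polynomial.IsRoot, Polynomial.eval_add, Polynomial.eval_mul,
    Polynomial.eval_C, Polynomial.eval_pow, Polynomial.eval_X] at ht ⊢
  linear_combination ht

/-- If the space of real-analytic solutions of the Liouville system has dimension
`d ≥ 2`, then it contains `d` linearly independent solutions each of which is a
nondegenerate quadratic form at some point of `U`. -/
theorem independent_nondegenerate_solutions (U : Set (ℝ × ℝ)) (hU : IsOpen U)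
    (hUconn : IsConnected U)
    (A0 A1 A2 A3 : ℝ × ℝ → ℝ)
    (hA0 : AnalyticOnNhd ℝ A0 U) (hA1 : AnalyticOnNhd ℝ A1 U)
    (hA2 : AnalyticOnNhd ℝ A2 U) (hA3 : AnalyticOnNhd ℝ A3 U)
    (d : ℕ) (hd : 2 ≤ d)
    (b : Fin d → (ℝ × ℝ → ℝ) × (ℝ × ℝ → ℝ) × (ℝ × ℝ → ℝ))
    (hb : ∀ m, AnalyticLiouvilleSol U A0 A1 A2 A3 (b m))
    (hbind : LinIndepOnU U b) :
    ∃ b' : Fin d → (ℝ × ℝ → ℝ) × (ℝ × ℝ → ℝ) × (ℝ × ℝ → ℝ),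
      (∀ m, AnalyticLiouvilleSol U A0 A1 A2 A3 (b' m)) ∧
      LinIndepOnU U b' ∧
      ∀ m, ∃ q ∈ U, (b' m).1 q * (b' m).2.2 q - ((b' m).2.1 q) ^ 2 ≠ 0 := by
  obtain ⟨c, q, hq, hc⟩ := exists_nondegenerate_comb hU hUconn hd hb hbind
  set X := (comb b c).1 q with hX
  set Y := (comb b c).2.1 q with hY
  set Z := (comb b c).2.2 q with hZ
  have hfin : ∀ m, {t : ℝ | ((b m).1 q * (b m).2.2 q - (b m).2.1 q ^ 2)
      + ((b m).1 q * Z + X * (b m).2.2 q - 2 * (b m).2.1 q * Y) * t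
      + (X * Z - Y ^ 2) * t ^ 2 = 0}.Finite := fun m => finite_roots_quadratic _ _ hc
  have hfin' : {t : ℝ | 1 + t * ∑ k, c k = 0}.Finite := by
    refine Set.Subsingleton.finite fun s hs t ht => ?_
    simp only [Set.mem_ofPred_eq] at hs ht
    have hne : ∑ k, c k ≠ 0 := fun h => by simp [h] at hs
    exact mul_right_cancel₀ hne (by linear_combination hs - ht)
  obtain ⟨t, ht⟩ := ((Set.finite_iUnion hfin).union hfin').exists_notMem
  simp only [Set.mem_union, Set.mem_iUnion, Set.mem_ofPred_eq, not_or, not_exists] at ht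
  obtain ⟨ht1, ht2⟩ := ht
  refine ⟨fun m => comb b (Pi.single m 1 + t • c), fun m => comb_sol hb _, ?_, fun m => ⟨q, hq, ?_⟩⟩
  · intro a ha
    -- In the basis `b`, the relation reads `a k + t (∑ a) c k = 0` for every `k`; summing over `k`
    -- gives `(∑ a) (1 + t ∑ c) = 0`.
    have key : ∀ f : Fin d → ℝ, ∑ m, a m * ∑ k, (Pi.single m 1 + t • c : Fin d → ℝ) k * f k
        = ∑ k, (a + (t * ∑ m, a m) • c) k * f k := fun f => by
      simp only [sum_add_smul_mul, sum_single_mul, mul_add, Finset.sum_add_distrib,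
        ← Finset.sum_mul]
      ring
    have h0 := hbind (a + (t * ∑ m, a m) • c) fun p hp => by
      have := ha p hp
      simp only [comb] at this
      simpa only [key] using this
    have hsum : (∑ m, a m) * (1 + t * ∑ k, c k) = 0 := by
      have : ∑ k, (a + (t * ∑ m, a m) • c) k = 0 := by
        rw [h0]
        simp
      simp only [Pi.add_apply, Pi.smul_apply, smul_eq_mul, Finset.sum_add_distrib,
        ← Finset.mul_sum] at this
      linear_combination this
    have hs := (mul_eq_zero.1 hsum).resolve_right ht2
    simpa [hs] using h0
  · have e := ht1 m
    simp only [comb, sum_add_smul_mul, sum_single_mul] at hX hY hZ ⊢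
    rw [← hX, ← hY, ← hZ]
    intro h
    exact e (by linear_combination h)
end

section
/- (Liouville–Tresse trivialisability theorem, cubic case) Consider the second-order ODE y'' = A₃(y')³ + A₂(y')² + A₁y' + A₀ with A₀, A₁, A₂, A₃ smooth on U. Then L₁ and L₂ vanish identically on U if and only if for every p ∈ U there exist a neighbourhood U' of p and a diffeomorphism Φ from U' onto an open subset of ℝ² such that for every solution y(·) of the ODE whose graph lies in U', the image under Φ of the graph of y is contained in an affine line of ℝ² (equivalently, the ODE is locally equivalent to ȳ'' = 0 under a point transformation (x,y) ↦ (x̄(x,y), ȳ(x,y))). -/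
noncomputable section

/-- Liouville's first projective invariant `L₁`. -/
def Lio1 (A0 A1 A2 A3 : ℝ × ℝ → ℝ) : ℝ × ℝ → ℝ := fun p =>
  (2/3) * pdx (pdy A1) p - (1/3) * pdx (pdx A2) p - pdy (pdy A0) p
    + A0 p * pdy A2 p + A2 p * pdy A0 p - A3 p * pdx A0 p - 2 * A0 p * pdx A3 p
    - (2/3) * A1 p * pdy A1 p + (1/3) * A1 p * pdx A2 p

/-- Liouville's second projective invariant `L₂`. -/
def Lio2 (A0 A1 A2 A3 : ℝ × ℝ → ℝ) : ℝ × ℝ → ℝ := fun p =>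
  (2/3) * pdx (pdy A2) p - (1/3) * pdy (pdy A1) p - pdx (pdx A3) p
    - A3 p * pdx A1 p - A1 p * pdx A3 p + A0 p * pdy A3 p + 2 * A3 p * pdy A0 p
    + (2/3) * A2 p * pdx A2 p - (1/3) * A2 p * pdy A1 p

/-- The row vector `V = (V₁,…,V₆)`. -/
def Vrow (A0 A1 A2 A3 : ℝ × ℝ → ℝ) : ℝ × ℝ → Fin 6 → ℝ := fun p =>
  ![2 * pdy (Lio2 A0 A1 A2 A3) p + 4 * A2 p * Lio2 A0 A1 A2 A3 p
      + 8 * A3 p * Lio1 A0 A1 A2 A3 p,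
    -2 * pdy (Lio1 A0 A1 A2 A3) p - 2 * pdx (Lio2 A0 A1 A2 A3) p
      - (4/3) * A1 p * Lio2 A0 A1 A2 A3 p + (4/3) * A2 p * Lio1 A0 A1 A2 A3 p,
    2 * pdx (Lio1 A0 A1 A2 A3) p - 8 * A0 p * Lio2 A0 A1 A2 A3 p
      - 4 * A1 p * Lio1 A0 A1 A2 A3 p,
    -5 * Lio2 A0 A1 A2 A3 p,
    -5 * Lio1 A0 A1 A2 A3 p,
    0]


end

/-- `y` is a solution of `y'' = A₃(y')³ + A₂(y')² + A₁y' + A₀` on the open interval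
`Ioo a b`, with graph contained in `V`. -/
def IsODESolution (V : Set (ℝ × ℝ)) (A0 A1 A2 A3 : ℝ × ℝ → ℝ)
    (y : ℝ → ℝ) (a b : ℝ) : Prop :=
  ∀ x ∈ Set.Ioo a b,
    (x, y x) ∈ V ∧
    DifferentiableAt ℝ y x ∧
    DifferentiableAt ℝ (deriv y) x ∧
    deriv (deriv y) x =
      A3 (x, y x) * (deriv y x) ^ 3 + A2 (x, y x) * (deriv y x) ^ 2
        + A1 (x, y x) * deriv y x + A0 (x, y x)

section LiouvilleTresse

open Filter Topology Set
open scoped ContDiff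

/-! ### The differential algebra of smooth functions on the plane -/

/-- The algebra of smooth functions on the plane. Working with globally smooth functions, on which
`∂ₓ` and `∂_y` are commuting derivations, turns the jet computations into plain algebra. -/
def SmoothFn : Subalgebra ℝ (ℝ × ℝ → ℝ) where
  carrier := {f | ContDiff ℝ ∞ f}
  mul_mem' := fun {f g} (hf : ContDiff ℝ ∞ f) (hg : ContDiff ℝ ∞ g) => hf.mul hg
  add_mem' := fun {f g} (hf : ContDiff ℝ ∞ f) (hg : ContDiff ℝ ∞ g) => hf.add hg
  algebraMap_mem' := fun r => (contDiff_const : ContDiff ℝ ∞ fun _ : ℝ × ℝ => r)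

namespace SmoothFn

lemma smooth (f : SmoothFn) : ContDiff ℝ ∞ (f : ℝ × ℝ → ℝ) := f.2

lemma diff (f : SmoothFn) : Differentiable ℝ (f : ℝ × ℝ → ℝ) :=
  (smooth f).differentiable (by simp)

/-- Directional derivative of a smooth function in the constant direction `w`. -/
noncomputable def dir (w : ℝ × ℝ) : Derivation ℝ SmoothFn SmoothFn :=
  Derivation.mk'
    { toFun := fun f => ⟨fun q => fderiv ℝ (f : ℝ × ℝ → ℝ) q w,
        ((smooth f).fderiv_right (m := ∞) (by simp)).clm_apply contDiff_const⟩
      map_add' := fun f g => by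
        ext q
        have := fderiv_add (diff f q) (diff g q)
        change fderiv ℝ ((f : ℝ × ℝ → ℝ) + (g : ℝ × ℝ → ℝ)) q w = _
        rw [this]; rfl
      map_smul' := fun r f => by
        ext q
        have := fderiv_const_smul (diff f q) r
        change fderiv ℝ (r • (f : ℝ × ℝ → ℝ)) q w = _
        rw [this]; rfl }
    (fun f g => by
      ext q
      have := fderiv_mul (diff f q) (diff g q)
      change fderiv ℝ ((f : ℝ × ℝ → ℝ) * (g : ℝ × ℝ → ℝ)) q w = _
      rw [this]; rfl)

lemma dir_apply (w : ℝ × ℝ) (f : SmoothFn) (q : ℝ × ℝ) :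
    (dir w f : ℝ × ℝ → ℝ) q = fderiv ℝ (f : ℝ × ℝ → ℝ) q w := rfl

/-- `∂ₓ` as a derivation. -/
noncomputable abbrev Dx : Derivation ℝ SmoothFn SmoothFn := dir (1, 0)

/-- `∂_y` as a derivation. -/
noncomputable abbrev Dy : Derivation ℝ SmoothFn SmoothFn := dir (0, 1)

lemma Dy_Dx (f : SmoothFn) : Dy (Dx f) = Dx (Dy f) := by
  ext q
  have h1 : IsSymmSndFDerivAt ℝ (f : ℝ × ℝ → ℝ) q :=
    (smooth f).contDiffAt.isSymmSndFDerivAt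
      (by rw [minSmoothness_of_isRCLikeNormedField]; exact WithTop.coe_le_coe.2 le_top)
  have h2 : DifferentiableAt ℝ (fderiv ℝ (f : ℝ × ℝ → ℝ)) q :=
    ((smooth f).fderiv_right (m := ∞) (by simp)).differentiable (by simp) q
  have key : ∀ v w : ℝ × ℝ, (dir v (dir w f) : ℝ × ℝ → ℝ) q
      = fderiv ℝ (fderiv ℝ (f : ℝ × ℝ → ℝ)) q v w := by
    intro v w
    have := (h2.hasFDerivAt.clm_apply (hasFDerivAt_const w q)).fderiv
    change fderiv ℝ (fun q => fderiv ℝ (f : ℝ × ℝ → ℝ) q w) q v = _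
    rw [this]; simp
  rw [key, key]
  exact h1 _ _

lemma hasDerivAt_x (f : SmoothFn) (x y : ℝ) :
    HasDerivAt (fun t => (f : ℝ × ℝ → ℝ) (t, y)) ((Dx f : ℝ × ℝ → ℝ) (x, y)) x :=
  (diff f (x, y)).hasFDerivAt.comp_hasDerivAt x
    ((hasDerivAt_id x).prodMk (hasDerivAt_const x y))

lemma hasDerivAt_y (f : SmoothFn) (x y : ℝ) :
    HasDerivAt (fun t => (f : ℝ × ℝ → ℝ) (x, t)) ((Dy f : ℝ × ℝ → ℝ) (x, y)) y :=
  (diff f (x, y)).hasFDerivAt.comp_hasDerivAt y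
    ((hasDerivAt_const y x).prodMk (hasDerivAt_id y))

/-- Chain rule along a graph. -/
lemma hasDerivAt_graph (f : SmoothFn) {y : ℝ → ℝ} {y' x : ℝ} (hy : HasDerivAt y y' x) :
    HasDerivAt (fun t => (f : ℝ × ℝ → ℝ) (t, y t))
      ((Dx f : ℝ × ℝ → ℝ) (x, y x) + y' * (Dy f : ℝ × ℝ → ℝ) (x, y x)) x := by
  have := (diff f (x, y x)).hasFDerivAt.comp_hasDerivAt x
    ((hasDerivAt_id x).prodMk hy)
  have h : ((1 : ℝ), y') = (1, 0) + y' • ((0 : ℝ), (1 : ℝ)) := by ext <;> simp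
  rw [h, map_add, map_smul] at this
  exact this

lemma pdx_coe (f : SmoothFn) : pdx f = Dx f := by
  funext q; exact (hasDerivAt_x f q.1 q.2).deriv

lemma pdy_coe (f : SmoothFn) : pdy f = Dy f := by
  funext q; exact (hasDerivAt_y f q.1 q.2).deriv

lemma dir_congr {f g : SmoothFn} {q : ℝ × ℝ} (w : ℝ × ℝ)
    (h : (f : ℝ × ℝ → ℝ) =ᶠ[𝓝 q] g) : (dir w f : ℝ × ℝ → ℝ) =ᶠ[𝓝 q] dir w g := by
  filter_upwards [h.fderiv (𝕜 := ℝ)] with z hz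
  rw [dir_apply, dir_apply, hz]

/-- A smooth function on an open set agrees near each point with a globally smooth one. -/
lemma exists_extend {f : ℝ × ℝ → ℝ} {V : Set (ℝ × ℝ)} (hV : IsOpen V)
    (hf : ContDiffOn ℝ ∞ f V) {q : ℝ × ℝ} (hq : q ∈ V) :
    ∃ g : SmoothFn, f =ᶠ[𝓝 q] g := by
  obtain ⟨r, hr, hrV⟩ := Metric.isOpen_iff.1 hV q hq
  let χ : ContDiffBump q := ⟨r / 4, r / 2, by linarith, by linarith⟩
  have hsub : tsupport χ ⊆ V := by
    rw [χ.tsupport_eq]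
    exact (Metric.closedBall_subset_ball (by change r / 2 < r; linarith)).trans hrV
  refine ⟨⟨fun z => χ z * f z, ?_⟩, ?_⟩
  · change ContDiff ℝ ∞ _
    rw [contDiff_iff_contDiffAt]
    intro z
    by_cases hz : z ∈ tsupport χ
    · exact χ.contDiff.contDiffAt.mul (hf.contDiffAt (hV.mem_nhds (hsub hz)))
    · have : (fun z => χ z * f z) =ᶠ[𝓝 z] fun _ => 0 := by
        filter_upwards [(isClosed_tsupport χ).isOpen_compl.mem_nhds hz] with w hw
        rw [image_eq_zero_of_notMem_tsupport hw, zero_mul]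
      exact contDiffAt_const.congr_of_eventuallyEq this
  · filter_upwards [χ.eventuallyEq_one] with z hz
    rw [hz]; simp

end SmoothFn

lemma pdx_congr_germ {f g : ℝ × ℝ → ℝ} {q : ℝ × ℝ} (h : f =ᶠ[𝓝 q] g) :
    pdx f =ᶠ[𝓝 q] pdx g := by
  filter_upwards [h.eventuallyEq_nhds] with z hz
  have hc : ContinuousAt (fun t : ℝ => (t, z.2)) z.1 := by fun_prop
  exact Filter.EventuallyEq.deriv_eq (hc.eventually hz)

lemma pdy_congr_germ {f g : ℝ × ℝ → ℝ} {q : ℝ × ℝ} (h : f =ᶠ[𝓝 q] g) :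
    pdy f =ᶠ[𝓝 q] pdy g := by
  filter_upwards [h.eventuallyEq_nhds] with z hz
  have hc : ContinuousAt (fun t : ℝ => (z.1, t)) z.2 := by fun_prop
  exact Filter.EventuallyEq.deriv_eq (hc.eventually hz)

/-- The Liouville invariants depend only on germs. -/
lemma Lio_congr_germ {A0 A1 A2 A3 B0 B1 B2 B3 : ℝ × ℝ → ℝ} {q : ℝ × ℝ}
    (h0 : A0 =ᶠ[𝓝 q] B0) (h1 : A1 =ᶠ[𝓝 q] B1) (h2 : A2 =ᶠ[𝓝 q] B2) (h3 : A3 =ᶠ[𝓝 q] B3) :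
    Lio1 A0 A1 A2 A3 q = Lio1 B0 B1 B2 B3 q ∧ Lio2 A0 A1 A2 A3 q = Lio2 B0 B1 B2 B3 q := by
  have x0 := pdx_congr_germ h0
  have x1 := pdx_congr_germ h1
  have x2 := pdx_congr_germ h2
  have x3 := pdx_congr_germ h3
  have y0 := pdy_congr_germ h0
  have y1 := pdy_congr_germ h1
  have y2 := pdy_congr_germ h2
  have y3 := pdy_congr_germ h3
  constructor
  · simp only [Lio1, h0.eq_of_nhds, h1.eq_of_nhds, h2.eq_of_nhds, h3.eq_of_nhds, x0.eq_of_nhds,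
      x2.eq_of_nhds, x3.eq_of_nhds, y0.eq_of_nhds, y1.eq_of_nhds,
      y2.eq_of_nhds, (pdx_congr_germ y1).eq_of_nhds,
      (pdx_congr_germ x2).eq_of_nhds, (pdy_congr_germ y0).eq_of_nhds]
  · simp only [Lio2, h0.eq_of_nhds, h1.eq_of_nhds, h2.eq_of_nhds, h3.eq_of_nhds,
      x1.eq_of_nhds, x2.eq_of_nhds, x3.eq_of_nhds, y0.eq_of_nhds, y1.eq_of_nhds,
      y3.eq_of_nhds, (pdx_congr_germ y2).eq_of_nhds,
      (pdy_congr_germ y1).eq_of_nhds, (pdx_congr_germ x3).eq_of_nhds]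

/-! ### Flat linear systems: a Frobenius theorem -/

section Frobenius

open scoped BoundedContinuousFunction

variable {E : Type*} [NormedAddCommGroup E] [NormedSpace ℝ E]

lemma abs_sub_le_of_mem_uIoc {a b s ε : ℝ} (hb : |b - a| ≤ ε) (hs : s ∈ uIoc a b) :
    |s - a| ≤ ε :=
  (Set.abs_sub_left_of_mem_uIcc (uIoc_subset_uIcc hs)).trans hb

lemma norm_integral_clm_le {A : ℝ → E →L[ℝ] E} {Z : ℝ → E} {a b ε K B : ℝ} (hK : 0 ≤ K)
    (hb : |b - a| ≤ ε) (hA : ∀ s, |s - a| ≤ ε → ‖A s‖ ≤ K)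
    (hZ : ∀ s, |s - a| ≤ ε → ‖Z s‖ ≤ B) :
    ‖∫ s in a..b, A s (Z s)‖ ≤ K * B * ε := by
  have hB : 0 ≤ B := (norm_nonneg _).trans (hZ a (by simpa using (abs_nonneg _).trans hb))
  refine (intervalIntegral.norm_integral_le_of_norm_le_const (C := K * B) ?_).trans ?_
  · intro s hs
    have hs' := abs_sub_le_of_mem_uIoc hb hs
    exact ((A s).le_opNorm _).trans (mul_le_mul (hA s hs') (hZ s hs') (norm_nonneg _) hK)
  · exact mul_le_mul_of_nonneg_left hb (by positivity)

/-- Transport of `e` first along the `x`-axis through `(x₀, y₀)` and then vertically, on a small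
square, obtained as the fixed point of a contraction. The space used is that of bounded continuous
functions on the whole plane, with the upper limits of integration clamped to the square. -/
lemma exists_integral_solution [CompleteSpace E] (M N : ℝ × ℝ → E →L[ℝ] E) (hM : Continuous M)
    (hN : Continuous N)
    {x₀ y₀ ε K : ℝ} (hε : 0 ≤ ε) (hK : 0 ≤ K) (hεK : K * ε ≤ 1 / 4)
    (hMK : ∀ x, |x - x₀| ≤ ε → ‖M (x, y₀)‖ ≤ K)
    (hNK : ∀ x y, |x - x₀| ≤ ε → |y - y₀| ≤ ε → ‖N (x, y)‖ ≤ K) (e : E) :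
    ∃ X : ℝ × ℝ → E, Continuous X ∧ (∃ B, ∀ q, ‖X q‖ ≤ B) ∧
      ∀ x y, |x - x₀| ≤ ε → |y - y₀| ≤ ε →
        X (x, y) = e + (∫ s in x₀..x, M (s, y₀) (X (s, y₀)))
          + ∫ s in y₀..y, N (x, s) (X (x, s)) := by
  let c : ℝ → ℝ → ℝ := fun a x => max (a - ε) (min (a + ε) x)
  have hc : ∀ a, Continuous (c a) := fun a => by fun_prop
  have hcε : ∀ a x, |c a x - a| ≤ ε := fun a x => by
    rw [abs_le]
    refine ⟨by linarith [le_max_left (a - ε) (min (a + ε) x)], ?_⟩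
    have : c a x ≤ a + ε := max_le (by linarith) (min_le_left _ _)
    linarith
  have hcid : ∀ a x, |x - a| ≤ ε → c a x = x := fun a x h => by
    rw [abs_le] at h
    simp only [c]
    rw [min_eq_right (by linarith), max_eq_right (by linarith)]
  let F : (ℝ × ℝ → E) → ℝ × ℝ → E := fun X q =>
    e + (∫ s in x₀..c x₀ q.1, M (s, y₀) (X (s, y₀)))
      + ∫ s in y₀..c y₀ q.2, N (c x₀ q.1, s) (X (c x₀ q.1, s))
  have hFc : ∀ X : ℝ × ℝ → E, Continuous X → Continuous (F X) := by
    intro X hX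
    refine (continuous_const.add ?_).add ?_
    · refine intervalIntegral.continuous_parametric_intervalIntegral_of_continuous
        (f := fun _ s => M (s, y₀) (X (s, y₀))) ?_ ((hc x₀).comp continuous_fst)
      simp only [Function.uncurry_def]
      fun_prop
    · refine intervalIntegral.continuous_parametric_intervalIntegral_of_continuous
        (f := fun q : ℝ × ℝ => fun s => N (c x₀ q.1, s) (X (c x₀ q.1, s))) ?_
        ((hc y₀).comp continuous_snd)
      simp only [Function.uncurry_def]
      have := hc x₀
      fun_prop
  have hFb : ∀ (X : ℝ × ℝ → E) (B : ℝ), (∀ q, ‖X q‖ ≤ B) → ∀ q : ℝ × ℝ,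
      ‖∫ s in x₀..c x₀ q.1, M (s, y₀) (X (s, y₀))‖ ≤ B / 4 ∧
      ‖∫ s in y₀..c y₀ q.2, N (c x₀ q.1, s) (X (c x₀ q.1, s))‖ ≤ B / 4 := by
    intro X B hB q
    have hB0 : 0 ≤ B := (norm_nonneg _).trans (hB q)
    have h4 : K * B * ε ≤ B / 4 := by nlinarith
    exact ⟨(norm_integral_clm_le hK (hcε x₀ q.1) hMK fun s _ => hB _).trans h4,
      (norm_integral_clm_le hK (hcε y₀ q.2) (fun s hs => hNK _ _ (hcε _ _) hs)
        fun s _ => hB _).trans h4⟩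
  let T : (ℝ × ℝ →ᵇ E) → (ℝ × ℝ →ᵇ E) := fun X =>
    BoundedContinuousFunction.ofNormedAddCommGroup (F X) (hFc X X.continuous)
      (‖e‖ + ‖X‖ / 4 + ‖X‖ / 4) (fun q => by
        have h := hFb X ‖X‖ X.norm_coe_le_norm q
        exact (norm_add₃_le).trans (by linarith [h.1, h.2]))
  have hT : ContractingWith (1 / 2) T := by
    refine ⟨by rw [← NNReal.coe_lt_coe]; norm_num, LipschitzWith.of_dist_le_mul fun X Y => ?_⟩
    rw [dist_eq_norm, dist_eq_norm, BoundedContinuousFunction.norm_le (by positivity)]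
    intro q
    have h := hFb (X - Y) ‖X - Y‖ (X - Y).norm_coe_le_norm q
    have hi1 : ∀ Z : ℝ × ℝ →ᵇ E, IntervalIntegrable (fun s => M (s, y₀) (Z (s, y₀)))
        MeasureTheory.volume x₀ (c x₀ q.1) := fun Z =>
      Continuous.intervalIntegrable (by have := Z.continuous; fun_prop) _ _
    have hi2 : ∀ Z : ℝ × ℝ →ᵇ E, IntervalIntegrable
        (fun s => N (c x₀ q.1, s) (Z (c x₀ q.1, s)))
        MeasureTheory.volume y₀ (c y₀ q.2) := fun Z =>
      Continuous.intervalIntegrable (by have := Z.continuous; fun_prop) _ _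
    have : (T X - T Y) q = (∫ s in x₀..c x₀ q.1, M (s, y₀) ((X - Y) (s, y₀)))
        + ∫ s in y₀..c y₀ q.2, N (c x₀ q.1, s) ((X - Y) (c x₀ q.1, s)) := by
      simp only [BoundedContinuousFunction.coe_sub, Pi.sub_apply, map_sub]
      rw [intervalIntegral.integral_sub (hi1 X) (hi1 Y),
        intervalIntegral.integral_sub (hi2 X) (hi2 Y)]
      change F X q - F Y q = _
      simp only [F]
      abel
    rw [this]
    refine (norm_add_le _ _).trans ((add_le_add h.1 h.2).trans (le_of_eq ?_))
    push_cast
    ring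
  let X := ContractingWith.fixedPoint T hT
  have hX : T X = X := hT.fixedPoint_isFixedPt
  refine ⟨X, X.continuous, ⟨‖X‖, X.norm_coe_le_norm⟩, fun x y hx hy => ?_⟩
  have h := congrArg (fun Z : ℝ × ℝ →ᵇ E => Z (x, y)) hX
  change F X (x, y) = X (x, y) at h
  rw [← h]
  simp only [F, hcid _ _ hx, hcid _ _ hy]

/-- Solvability of the flat linear system `∂ₓX = M X`, `∂_yX = N X` near a point. With `X` the
solution of the integral equation above and `Y` the field obtained by transporting `X(x₀, ·)`
horizontally, flatness gives `D = Y - X` the Volterra equation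
`D(x,y) = ∫ N D dt - ∬ (∂ₓN) D ds dt`, so that `D = 0`. No differentiability of `X` in the
parameter `x` has to be known beforehand. -/
theorem exists_flat_section [CompleteSpace E] (M N M₂ N₁ : ℝ × ℝ → E →L[ℝ] E) (hM : Continuous M)
    (hN : Continuous N) (hM₂ : Continuous M₂) (hN₁ : Continuous N₁)
    (dM : ∀ x y, HasDerivAt (fun t => M (x, t)) (M₂ (x, y)) y)
    (dN : ∀ x y, HasDerivAt (fun t => N (t, y)) (N₁ (x, y)) x)
    (p : ℝ × ℝ)
    (flat : ∀ᶠ q in 𝓝 p, ∀ v, M₂ q v + M q (N q v) = N₁ q v + N q (M q v)) (e : E) :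
    ∃ V : Set (ℝ × ℝ), IsOpen V ∧ p ∈ V ∧ ∃ X : ℝ × ℝ → E, Continuous X ∧ X p = e ∧
      ∀ q ∈ V, HasDerivAt (fun t => X (t, q.2)) (M q (X q)) q.1 ∧
        HasDerivAt (fun t => X (q.1, t)) (N q (X q)) q.2 := by
  obtain ⟨x₀, y₀⟩ := p
  obtain ⟨δ, hδ, hflat⟩ := Metric.eventually_nhds_iff.1 flat
  have hcomp : IsCompact (Metric.closedBall ((x₀, y₀) : ℝ × ℝ) 1) := isCompact_closedBall _ _
  obtain ⟨KM, hKM⟩ := hcomp.exists_bound_of_continuousOn hM.continuousOn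
  obtain ⟨KN, hKN⟩ := hcomp.exists_bound_of_continuousOn hN.continuousOn
  obtain ⟨KN1, hKN1⟩ := hcomp.exists_bound_of_continuousOn hN₁.continuousOn
  let K := max 1 (max KM (max KN KN1))
  have hK1 : 1 ≤ K := le_max_left _ _
  have hK : 0 ≤ K := by linarith
  let ε := min (δ / 2) (min 1 (1 / (4 * K)))
  have hε : 0 < ε := by positivity
  have hε1 : ε ≤ 1 := (min_le_right _ _).trans (min_le_left _ _)
  have hεδ : ε < δ := (min_le_left _ _).trans_lt (by linarith)
  have hεK : K * ε ≤ 1 / 4 := by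
    have : ε ≤ 1 / (4 * K) := (min_le_right _ _).trans (min_le_right _ _)
    rw [le_div_iff₀ (by positivity)] at this
    linarith
  have hball : ∀ x y, |x - x₀| ≤ ε → |y - y₀| ≤ ε →
      ((x, y) : ℝ × ℝ) ∈ Metric.closedBall (x₀, y₀) 1 := fun x y hx hy => by
    rw [Metric.mem_closedBall, Prod.dist_eq, Real.dist_eq, Real.dist_eq]
    exact (max_le hx hy).trans hε1
  have hMK : ∀ x y, |x - x₀| ≤ ε → |y - y₀| ≤ ε → ‖M (x, y)‖ ≤ K := fun x y hx hy =>
    (hKM _ (hball x y hx hy)).trans ((le_max_left _ _).trans (le_max_right _ _))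
  have hNK : ∀ x y, |x - x₀| ≤ ε → |y - y₀| ≤ ε → ‖N (x, y)‖ ≤ K := fun x y hx hy =>
    (hKN _ (hball x y hx hy)).trans
      ((le_max_left _ _).trans ((le_max_right _ _).trans (le_max_right _ _)))
  have hN1K : ∀ x y, |x - x₀| ≤ ε → |y - y₀| ≤ ε → ‖N₁ (x, y)‖ ≤ K := fun x y hx hy =>
    (hKN1 _ (hball x y hx hy)).trans
      ((le_max_right _ _).trans ((le_max_right _ _).trans (le_max_right _ _)))
  have hfl : ∀ x y, |x - x₀| ≤ ε → |y - y₀| ≤ ε → ∀ v,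
      M₂ (x, y) v + M (x, y) (N (x, y) v) = N₁ (x, y) v + N (x, y) (M (x, y) v) :=
    fun x y hx hy => hflat (by
      rw [Prod.dist_eq, Real.dist_eq, Real.dist_eq]; exact (max_le hx hy).trans_lt hεδ)
  have hself : ∀ a : ℝ, |a - a| ≤ ε := fun a => by simpa using hε.le
  obtain ⟨X, hXc, ⟨B, hB⟩, hX⟩ := exists_integral_solution M N hM hN hε.le hK hεK
    (fun x hx => hMK x y₀ hx (hself _)) hNK e
  have hB0 : 0 ≤ B := (norm_nonneg _).trans (hB (x₀, y₀))
  have hnear : ∀ a x : ℝ, |x - a| < ε → ∀ᶠ t in 𝓝 x, |t - a| ≤ ε := fun a x hx => by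
    have : Continuous fun t : ℝ => |t - a| := by fun_prop
    exact (this.continuousAt.eventually (eventually_lt_nhds hx)).mono fun t ht => ht.le
  have dX : ∀ x y, |x - x₀| ≤ ε → |y - y₀| < ε →
      HasDerivAt (fun t => X (x, t)) (N (x, y) (X (x, y))) y := by
    intro x y hx hy
    have h1 : HasDerivAt (fun t => e + (∫ s in x₀..x, M (s, y₀) (X (s, y₀)))
        + ∫ s in y₀..t, N (x, s) (X (x, s))) (N (x, y) (X (x, y))) y := by
      have hc : Continuous fun s => N (x, s) (X (x, s)) := by fun_prop
      exact (hc.integral_hasStrictDerivAt y₀ y).hasDerivAt.const_add _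
    refine h1.congr_of_eventuallyEq ?_
    filter_upwards [hnear y₀ y hy] with t ht
    exact hX x t hx ht
  let Y : ℝ × ℝ → E := fun q => X (x₀, q.2) + ∫ s in x₀..q.1, M (s, q.2) (X (s, q.2))
  have hMXc : Continuous fun q : ℝ × ℝ => M q (X q) := by fun_prop
  have hYc : Continuous Y := by
    refine Continuous.add (by fun_prop) ?_
    refine intervalIntegral.continuous_parametric_intervalIntegral_of_continuous
      (f := fun q : ℝ × ℝ => fun s => M (s, q.2) (X (s, q.2))) ?_ continuous_fst
    simp only [Function.uncurry_def]
    fun_prop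
  have dY : ∀ x y, HasDerivAt (fun t => Y (t, y)) (M (x, y) (X (x, y))) x := by
    intro x y
    have hc : Continuous fun s => M (s, y) (X (s, y)) := by fun_prop
    exact (hc.integral_hasStrictDerivAt x₀ x).hasDerivAt.const_add (X (x₀, y))
  -- the Volterra equation for `Y - X`
  have hD : ∀ x y, |x - x₀| < ε → |y - y₀| < ε →
      Y (x, y) - X (x, y) = (∫ t in y₀..y, N (x, t) (Y (x, t) - X (x, t)))
        - ∫ t in y₀..y, ∫ s in x₀..x, N₁ (s, t) (Y (s, t) - X (s, t)) := by
    intro x y hx hy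
    have e1 : X (x₀, y) = e + ∫ t in y₀..y, N (x₀, t) (X (x₀, t)) := by
      rw [hX x₀ y (hself _) hy.le, intervalIntegral.integral_same, add_zero]
    have e2 : ∀ s ∈ uIcc x₀ x, M (s, y) (X (s, y)) - M (s, y₀) (X (s, y₀))
        = ∫ t in y₀..y, (M₂ (s, t) (X (s, t)) + M (s, t) (N (s, t) (X (s, t)))) := by
      intro s hs
      have hs' : |s - x₀| ≤ ε := (Set.abs_sub_left_of_mem_uIcc hs).trans hx.le
      symm
      refine intervalIntegral.integral_eq_sub_of_hasDerivAt
        (f := fun t => M (s, t) (X (s, t))) (fun t ht => ?_)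
        (Continuous.intervalIntegrable (by fun_prop) _ _)
      exact (dM s t).clm_apply
        (dX s t hs' ((Set.abs_sub_left_of_mem_uIcc ht).trans_lt hy))
    have e3 : ∀ t ∈ uIcc y₀ y,
        (∫ s in x₀..x, (M₂ (s, t) (X (s, t)) + M (s, t) (N (s, t) (X (s, t)))))
        = N (x, t) (Y (x, t)) - N (x₀, t) (X (x₀, t))
          - ∫ s in x₀..x, N₁ (s, t) (Y (s, t) - X (s, t)) := by
      intro t ht
      have ht' : |t - y₀| ≤ ε := (Set.abs_sub_left_of_mem_uIcc ht).trans hy.le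
      have hYx : Y (x₀, t) = X (x₀, t) := by simp [Y]
      have f1 : (∫ s in x₀..x, (N₁ (s, t) (Y (s, t)) + N (s, t) (M (s, t) (X (s, t)))))
          = N (x, t) (Y (x, t)) - N (x₀, t) (Y (x₀, t)) :=
        intervalIntegral.integral_eq_sub_of_hasDerivAt
          (f := fun s => N (s, t) (Y (s, t)))
          (fun s _ => (dN s t).clm_apply (dY s t))
          (Continuous.intervalIntegrable (by fun_prop) _ _)
      rw [← hYx, ← f1, ← intervalIntegral.integral_sub
        (Continuous.intervalIntegrable (by fun_prop) _ _)
        (Continuous.intervalIntegrable (by fun_prop) _ _)]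
      refine intervalIntegral.integral_congr fun s hs => ?_
      have hs' : |s - x₀| ≤ ε := (Set.abs_sub_left_of_mem_uIcc hs).trans hx.le
      simp only [hfl s t hs' ht', map_sub]
      abel
    have c1 : Continuous fun q : ℝ × ℝ =>
        M₂ (q.1, q.2) (X (q.1, q.2)) + M (q.1, q.2) (N (q.1, q.2) (X (q.1, q.2))) := by fun_prop
    have swap : (∫ s in x₀..x, ∫ t in y₀..y,
          (M₂ (s, t) (X (s, t)) + M (s, t) (N (s, t) (X (s, t)))))
        = ∫ t in y₀..y, ∫ s in x₀..x,
          (M₂ (s, t) (X (s, t)) + M (s, t) (N (s, t) (X (s, t)))) := by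
      refine MeasureTheory.intervalIntegral_intervalIntegral_swap ?_
      exact (c1.continuousOn.integrableOn_compact
        (isCompact_uIcc.prod isCompact_uIcc)).mono_set
        (prod_mono uIoc_subset_uIcc uIoc_subset_uIcc)
    have c2 : Continuous fun t => ∫ s in x₀..x, N₁ (s, t) (Y (s, t) - X (s, t)) := by
      refine intervalIntegral.continuous_parametric_intervalIntegral_of_continuous'
        (f := fun t s => N₁ (s, t) (Y (s, t) - X (s, t))) ?_ _ _
      simp only [Function.uncurry_def]
      fun_prop
    have e4 : (∫ s in x₀..x, M (s, y) (X (s, y))) - (∫ s in x₀..x, M (s, y₀) (X (s, y₀)))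
        = (∫ t in y₀..y, N (x, t) (Y (x, t))) - (∫ t in y₀..y, N (x₀, t) (X (x₀, t)))
          - ∫ t in y₀..y, ∫ s in x₀..x, N₁ (s, t) (Y (s, t) - X (s, t)) := by
      rw [← intervalIntegral.integral_sub
        (Continuous.intervalIntegrable (by fun_prop) _ _)
        (Continuous.intervalIntegrable (by fun_prop) _ _),
        intervalIntegral.integral_congr e2, swap, intervalIntegral.integral_congr e3,
        intervalIntegral.integral_sub
        (Continuous.intervalIntegrable (by fun_prop) _ _)
        (Continuous.intervalIntegrable c2 _ _),
        intervalIntegral.integral_sub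
        (Continuous.intervalIntegrable (by fun_prop) _ _)
        (Continuous.intervalIntegrable (by fun_prop) _ _)]
    have e5 : (∫ t in y₀..y, N (x, t) (Y (x, t) - X (x, t)))
        = (∫ t in y₀..y, N (x, t) (Y (x, t))) - ∫ t in y₀..y, N (x, t) (X (x, t)) := by
      simp only [map_sub]
      exact intervalIntegral.integral_sub
        (Continuous.intervalIntegrable (by fun_prop) _ _)
        (Continuous.intervalIntegrable (by fun_prop) _ _)
    rw [e5, hX x y hx.le hy.le]
    change X (x₀, y) + (∫ s in x₀..x, M (s, y) (X (s, y))) - _ = _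
    rw [e1, eq_add_of_sub_eq e4]
    abel
  -- iterating the estimate `‖Y - X‖ ≤ C ⇒ ‖Y - X‖ ≤ C / 2`
  have hhalf : ∀ C : ℝ, (∀ x y, |x - x₀| < ε → |y - y₀| < ε → ‖Y (x, y) - X (x, y)‖ ≤ C) →
      ∀ x y, |x - x₀| < ε → |y - y₀| < ε → ‖Y (x, y) - X (x, y)‖ ≤ C / 2 := by
    intro C hC x y hx hy
    have hC0 : 0 ≤ C := (norm_nonneg _).trans (hC x y hx hy)
    have i1 : ‖∫ t in y₀..y, N (x, t) (Y (x, t) - X (x, t))‖ ≤ K * C * |y - y₀| :=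
      norm_integral_clm_le hK le_rfl (fun t ht => hNK _ _ hx.le (ht.trans hy.le))
        fun t ht => hC _ _ hx (ht.trans_lt hy)
    have i2 : ‖∫ t in y₀..y, ∫ s in x₀..x, N₁ (s, t) (Y (s, t) - X (s, t))‖
        ≤ K * C * |x - x₀| * |y - y₀| := by
      refine intervalIntegral.norm_integral_le_of_norm_le_const fun t ht => ?_
      have ht' : |t - y₀| < ε := (abs_sub_le_of_mem_uIoc le_rfl ht).trans_lt hy
      exact norm_integral_clm_le hK le_rfl (fun s hs => hN1K _ _ (hs.trans hx.le) ht'.le)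
        fun s hs => hC _ _ (hs.trans_lt hx) ht'
    rw [hD x y hx hy]
    refine (norm_sub_le _ _).trans ((add_le_add i1 i2).trans ?_)
    have hKC : K * C * |y - y₀| ≤ C / 4 := by
      have : K * |y - y₀| ≤ 1 / 4 := (mul_le_mul_of_nonneg_left hy.le hK).trans hεK
      nlinarith
    have : K * C * |x - x₀| * |y - y₀| ≤ K * C * |y - y₀| := by
      have h1 : |x - x₀| ≤ 1 := hx.le.trans hε1
      have h2 : 0 ≤ K * C * |y - y₀| := by positivity
      nlinarith
    linarith
  have hYX : ∀ x y, |x - x₀| < ε → |y - y₀| < ε → Y (x, y) = X (x, y) := by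
    have hpow : ∀ n : ℕ, ∀ x y, |x - x₀| < ε → |y - y₀| < ε →
        ‖Y (x, y) - X (x, y)‖ ≤ (3 * B) * (1 / 2) ^ n := by
      intro n
      induction n with
      | zero =>
        intro x y hx hy
        have h1 : ‖∫ s in x₀..x, M (s, y) (X (s, y))‖ ≤ K * B * ε :=
          norm_integral_clm_le hK hx.le (fun s hs => hMK _ _ hs hy.le) fun s _ => hB _
        have h2 : K * B * ε ≤ B := by nlinarith
        have h3 : ‖Y (x, y)‖ ≤ B + B := (norm_add_le _ _).trans (add_le_add (hB _) (h1.trans h2))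
        refine (norm_sub_le _ _).trans ?_
        linarith [hB (x, y)]
      | succ n ih =>
        intro x y hx hy
        refine (hhalf _ ih x y hx hy).trans (le_of_eq ?_)
        ring
    intro x y hx hy
    have hlim : Tendsto (fun n : ℕ => (3 * B) * (1 / 2 : ℝ) ^ n) atTop (𝓝 (3 * B * 0)) :=
      (tendsto_pow_atTop_nhds_zero_of_lt_one (by norm_num) (by norm_num)).const_mul _
    rw [mul_zero] at hlim
    have := ge_of_tendsto' hlim fun n => hpow n x y hx hy
    exact sub_eq_zero.1 (norm_le_zero_iff.1 this)
  refine ⟨{q | |q.1 - x₀| < ε ∧ |q.2 - y₀| < ε}, ?_, by simpa using hε, X, hXc, ?_, ?_⟩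
  · have h1 : Continuous fun q : ℝ × ℝ => |q.1 - x₀| := by fun_prop
    have h2 : Continuous fun q : ℝ × ℝ => |q.2 - y₀| := by fun_prop
    exact (isOpen_lt h1 continuous_const).inter (isOpen_lt h2 continuous_const)
  · rw [hX x₀ y₀ (hself _) (hself _)]; simp
  · rintro ⟨x, y⟩ ⟨hx, hy⟩
    refine ⟨(dY x y).congr_of_eventuallyEq ?_, dX x y hx.le hy⟩
    have : ∀ᶠ t in 𝓝 x, |t - x₀| < ε :=
      (show Continuous fun t : ℝ => |t - x₀| by fun_prop).continuousAt.eventually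
        (eventually_lt_nhds hx)
    filter_upwards [this] with t ht
    exact (hYX t y ht hy).symm

/-- Continuous solutions of the linear system are smooth, by bootstrapping. -/
lemma contDiffOn_of_flat {M N : ℝ × ℝ → E →L[ℝ] E} (hM : ContDiff ℝ ∞ M) (hN : ContDiff ℝ ∞ N)
    {X : ℝ × ℝ → E} (hX : Continuous X) {V : Set (ℝ × ℝ)} (hV : IsOpen V)
    (h : ∀ q ∈ V, HasDerivAt (fun t => X (t, q.2)) (M q (X q)) q.1 ∧
        HasDerivAt (fun t => X (q.1, t)) (N q (X q)) q.2) :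
    (∀ q ∈ V, HasFDerivAt X ((ContinuousLinearMap.fst ℝ ℝ ℝ).smulRight (M q (X q))
        + (ContinuousLinearMap.snd ℝ ℝ ℝ).smulRight (N q (X q))) q) ∧ ContDiffOn ℝ ∞ X V := by
  have hMc := hM.continuous
  have hNc := hN.continuous
  have h1 : ∀ q ∈ V, HasFDerivAt X ((ContinuousLinearMap.fst ℝ ℝ ℝ).smulRight (M q (X q))
        + (ContinuousLinearMap.snd ℝ ℝ ℝ).smulRight (N q (X q))) q := by
    intro q hq
    have := hasStrictFDerivAt_uncurry_coprod (𝕜 := ℝ) (u := q) (f := fun x y => X (x, y))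
      (f₁ := fun x y => (ContinuousLinearMap.toSpanSingleton ℝ (M (x, y) (X (x, y)))))
      (f₂ := fun x y => (ContinuousLinearMap.toSpanSingleton ℝ (N (x, y) (X (x, y)))))
      (by
        filter_upwards [hV.mem_nhds hq] with v hv
        exact (h v hv).1.hasFDerivAt)
      (by
        filter_upwards [hV.mem_nhds hq] with v hv
        exact (h v hv).2.hasFDerivAt)
      (by
        have : Continuous fun q : ℝ × ℝ =>
          ContinuousLinearMap.toSpanSingletonCLE (𝕜 := ℝ) (M q (X q)) := by fun_prop
        exact this.continuousAt)
      (by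
        have : Continuous fun q : ℝ × ℝ =>
          ContinuousLinearMap.toSpanSingletonCLE (𝕜 := ℝ) (N q (X q)) := by fun_prop
        exact this.continuousAt)
    refine this.hasFDerivAt.congr_fderiv ?_
    ext <;> simp [Function.HasUncurry.uncurry]
  refine ⟨h1, contDiffOn_infty.2 fun n => ?_⟩
  induction n with
  | zero => exact contDiffOn_zero.2 hX.continuousOn
  | succ n ih =>
    push_cast
    rw [contDiffOn_succ_iff_fderiv_of_isOpen hV]
    refine ⟨fun q hq => (h1 q hq).differentiableAt.differentiableWithinAt, by simp, ?_⟩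
    have h2 : ContDiffOn ℝ n (fun q => (ContinuousLinearMap.fst ℝ ℝ ℝ).smulRight (M q (X q))
        + (ContinuousLinearMap.snd ℝ ℝ ℝ).smulRight (N q (X q))) V := by
      have hMn : ContDiff ℝ n M := hM.of_le (by exact_mod_cast le_top)
      have hNn : ContDiff ℝ n N := hN.of_le (by exact_mod_cast le_top)
      exact (contDiffOn_const.smulRight (hMn.contDiffOn.clm_apply ih)).add
        (contDiffOn_const.smulRight (hNn.contDiffOn.clm_apply ih))
    exact h2.congr fun q hq => (h1 q hq).fderiv

end Frobenius

/-! ### The linear system attached to the ODE -/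

namespace SmoothFn

/-- The linear map `w ↦ (v w, a w₀ + b w₁ + c w₂, d w₀ + e w₁ + f w₂)` of `ℝ³`, where `a, …, f` are
smooth functions evaluated at `q`. -/
noncomputable def sysMat (v : (ℝ × ℝ × ℝ) →L[ℝ] ℝ) (a b c d e f : SmoothFn) (q : ℝ × ℝ) :
    (ℝ × ℝ × ℝ) →L[ℝ] (ℝ × ℝ × ℝ) :=
  let π₀ := ContinuousLinearMap.fst ℝ ℝ (ℝ × ℝ)
  let π₁ := (ContinuousLinearMap.fst ℝ ℝ ℝ).comp (ContinuousLinearMap.snd ℝ ℝ (ℝ × ℝ))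
  let π₂ := (ContinuousLinearMap.snd ℝ ℝ ℝ).comp (ContinuousLinearMap.snd ℝ ℝ (ℝ × ℝ))
  v.smulRight (1, 0, 0)
    + ((a : ℝ × ℝ → ℝ) q • π₀.smulRight (0, 1, 0) + (b : ℝ × ℝ → ℝ) q • π₁.smulRight (0, 1, 0)
      + (c : ℝ × ℝ → ℝ) q • π₂.smulRight (0, 1, 0))
    + ((d : ℝ × ℝ → ℝ) q • π₀.smulRight (0, 0, 1) + (e : ℝ × ℝ → ℝ) q • π₁.smulRight (0, 0, 1)
      + (f : ℝ × ℝ → ℝ) q • π₂.smulRight (0, 0, 1))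

variable (v : (ℝ × ℝ × ℝ) →L[ℝ] ℝ) (a b c d e f : SmoothFn)

lemma sysMat_apply (q : ℝ × ℝ) (w : ℝ × ℝ × ℝ) :
    sysMat v a b c d e f q w =
      (v w, (a : ℝ × ℝ → ℝ) q * w.1 + (b : ℝ × ℝ → ℝ) q * w.2.1 + (c : ℝ × ℝ → ℝ) q * w.2.2,
        (d : ℝ × ℝ → ℝ) q * w.1 + (e : ℝ × ℝ → ℝ) q * w.2.1 + (f : ℝ × ℝ → ℝ) q * w.2.2) := by
  simp [sysMat]

lemma contDiff_sysMat : ContDiff ℝ ∞ (sysMat v a b c d e f) := by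
  unfold sysMat
  have ha := smooth a
  have hb := smooth b
  have hc := smooth c
  have hd := smooth d
  have he := smooth e
  have hf := smooth f
  fun_prop

lemma hasDerivAt_sysMat_x (x y : ℝ) :
    HasDerivAt (fun t => sysMat v a b c d e f (t, y))
      (sysMat 0 (Dx a) (Dx b) (Dx c) (Dx d) (Dx e) (Dx f) (x, y)) x := by
  unfold sysMat
  have h := fun (g : SmoothFn) (L : (ℝ × ℝ × ℝ) →L[ℝ] (ℝ × ℝ × ℝ)) =>
    (hasDerivAt_x g x y).smul_const L
  refine ((((((h a _).add (h b _)).add (h c _)).const_add _).add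
    (((h d _).add (h e _)).add (h f _)))).congr_deriv ?_
  ext <;> simp

lemma hasDerivAt_sysMat_y (x y : ℝ) :
    HasDerivAt (fun t => sysMat v a b c d e f (x, t))
      (sysMat 0 (Dy a) (Dy b) (Dy c) (Dy d) (Dy e) (Dy f) (x, y)) y := by
  unfold sysMat
  have h := fun (g : SmoothFn) (L : (ℝ × ℝ × ℝ) →L[ℝ] (ℝ × ℝ × ℝ)) =>
    (hasDerivAt_y g x y).smul_const L
  refine ((((((h a _).add (h b _)).add (h c _)).const_add _).add
    (((h d _).add (h e _)).add (h f _)))).congr_deriv ?_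
  ext <;> simp

variable (A0 A1 A2 A3 : SmoothFn)

/-- The coefficient `P` of the linear system
`f_xx = (A₁/3) f_x - A₀ f_y + P f`, `f_xy = (A₂/3) f_x - (A₁/3) f_y + Q f`,
`f_yy = A₃ f_x - (A₂/3) f_y + R f`; `P`, `Q`, `R` are forced by the first-order part of the
compatibility conditions. -/
noncomputable def coP : SmoothFn :=
  Dy A0 - (1 / 3 : ℝ) • Dx A1 + (2 / 9 : ℝ) • (A1 * A1) - (2 / 3 : ℝ) • (A0 * A2)

/-- The coefficient `Q` of the system described at `coP`. -/
noncomputable def coQ : SmoothFn :=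
  (1 / 3 : ℝ) • Dy A1 - (1 / 3 : ℝ) • Dx A2 + (1 / 9 : ℝ) • (A1 * A2) - A0 * A3

/-- The coefficient `R` of the system described at `coP`. -/
noncomputable def coR : SmoothFn :=
  (1 / 3 : ℝ) • Dy A2 - Dx A3 + (2 / 9 : ℝ) • (A2 * A2) - (2 / 3 : ℝ) • (A1 * A3)

/-- The system of `coP` in the form `∂ₓ(f, f_x, f_y) = M (f, f_x, f_y)`. -/
noncomputable def matM : ℝ × ℝ → (ℝ × ℝ × ℝ) →L[ℝ] (ℝ × ℝ × ℝ) :=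
  sysMat ((ContinuousLinearMap.fst ℝ ℝ ℝ).comp (ContinuousLinearMap.snd ℝ ℝ (ℝ × ℝ)))
    (coP A0 A1 A2) ((1 / 3 : ℝ) • A1) (-A0) (coQ A0 A1 A2 A3) ((1 / 3 : ℝ) • A2)
    ((-1 / 3 : ℝ) • A1)

/-- The system of `coP` in the form `∂_y(f, f_x, f_y) = N (f, f_x, f_y)`. -/
noncomputable def matN : ℝ × ℝ → (ℝ × ℝ × ℝ) →L[ℝ] (ℝ × ℝ × ℝ) :=
  sysMat ((ContinuousLinearMap.snd ℝ ℝ ℝ).comp (ContinuousLinearMap.snd ℝ ℝ (ℝ × ℝ)))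
    (coQ A0 A1 A2 A3) ((1 / 3 : ℝ) • A2) ((-1 / 3 : ℝ) • A1) (coR A1 A2 A3) A3
    ((-1 / 3 : ℝ) • A2)

/-- Up to sign, the only nonzero entries of the curvature of the system are `L₁` and `L₂`, so it
is flat where these vanish. -/
lemma flat_of_Lio_eq_zero {q : ℝ × ℝ} (h1 : Lio1 A0 A1 A2 A3 q = 0)
    (h2 : Lio2 A0 A1 A2 A3 q = 0) (w : ℝ × ℝ × ℝ) :
    sysMat 0 (Dy (coP A0 A1 A2)) (Dy ((1 / 3 : ℝ) • A1)) (Dy (-A0)) (Dy (coQ A0 A1 A2 A3))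
        (Dy ((1 / 3 : ℝ) • A2)) (Dy ((-1 / 3 : ℝ) • A1)) q w
      + matM A0 A1 A2 A3 q (matN A0 A1 A2 A3 q w)
    = sysMat 0 (Dx (coQ A0 A1 A2 A3)) (Dx ((1 / 3 : ℝ) • A2)) (Dx ((-1 / 3 : ℝ) • A1))
        (Dx (coR A1 A2 A3)) (Dx A3) (Dx ((-1 / 3 : ℝ) • A2)) q w
      + matN A0 A1 A2 A3 q (matM A0 A1 A2 A3 q w) := by
  simp only [Lio1, Lio2, pdx_coe, pdy_coe] at h1 h2
  simp only [matM, matN, sysMat_apply, coP, coQ, coR, map_add, map_sub, map_neg,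
    Derivation.map_smul, Derivation.leibniz, Dy_Dx, Subalgebra.coe_add, Subalgebra.coe_sub,
    Subalgebra.coe_neg, Subalgebra.coe_smul, Subalgebra.coe_mul, Pi.add_apply, Pi.sub_apply,
    Pi.neg_apply, Pi.smul_apply, Pi.mul_apply, smul_eq_mul, Prod.mk_add_mk,
    zero_apply, ContinuousLinearMap.comp_apply,
    ContinuousLinearMap.coe_fst', ContinuousLinearMap.coe_snd', zero_add, Prod.mk.injEq]
  refine ⟨?_, ?_, ?_⟩
  · trivial
  · linear_combination (-w.1) * h1
  · linear_combination (-w.1) * h2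

end SmoothFn

/-! ### Vanishing of the invariants gives a linearising point transformation -/

/-- Uniqueness for the scalar equation `z'' = B z' + C z` with zero initial data. -/
lemma eq_zero_of_linear_ode {z w B C : ℝ → ℝ} {a b x₀ : ℝ} (hx₀ : x₀ ∈ Ioo a b)
    (hz : ∀ x ∈ Ioo a b, HasDerivAt z (w x) x)
    (hw : ∀ x ∈ Ioo a b, HasDerivAt w (B x * w x + C x * z x) x)
    (hB : ContinuousOn B (Ioo a b)) (hC : ContinuousOn C (Ioo a b))
    (hz₀ : z x₀ = 0) (hw₀ : w x₀ = 0) : ∀ x ∈ Ioo a b, z x = 0 := by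
  intro x hx
  obtain ⟨c, hac, hc⟩ := exists_between (lt_min hx.1 hx₀.1)
  obtain ⟨d, hd, hdb⟩ := exists_between (max_lt hx.2 hx₀.2)
  have hsub : Icc c d ⊆ Ioo a b := fun t ht => ⟨hac.trans_le ht.1, ht.2.trans_lt hdb⟩
  -- the coefficients are bounded on a compact subinterval containing both points
  obtain ⟨KB, hKB⟩ := isCompact_Icc.exists_bound_of_continuousOn (hB.mono hsub)
  obtain ⟨KC, hKC⟩ := isCompact_Icc.exists_bound_of_continuousOn (hC.mono hsub)
  have hxI : x ∈ Ioo c d := ⟨hc.trans_le (min_le_left _ _), (le_max_left _ _).trans_lt hd⟩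
  have hx₀I : x₀ ∈ Ioo c d := ⟨hc.trans_le (min_le_right _ _), (le_max_right _ _).trans_lt hd⟩
  have hKB0 : 0 ≤ KB := (norm_nonneg _).trans (hKB x (Ioo_subset_Icc_self hxI))
  have hKC0 : 0 ≤ KC := (norm_nonneg _).trans (hKC x (Ioo_subset_Icc_self hxI))
  have key := ODE_solution_unique_of_mem_Ioo
    (v := fun t (u : ℝ × ℝ) => (u.2, B t * u.2 + C t * u.1)) (s := fun _ => univ)
    (K := ⟨1 + KB + KC, by positivity⟩) (f := fun t => (z t, w t)) (g := fun _ => 0)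
    (a := c) (b := d) (t₀ := x₀) ?_ hx₀I ?_ ?_ (by simp [hz₀, hw₀])
  · exact congrArg Prod.fst (key hxI)
  · intro t ht
    refine (LipschitzWith.of_dist_le_mul fun u v => ?_).lipschitzOnWith
    have h1 : |B t| ≤ KB := hKB t (Ioo_subset_Icc_self ht)
    have h2 : |C t| ≤ KC := hKC t (Ioo_subset_Icc_self ht)
    have d1 : |u.1 - v.1| ≤ dist u v := by
      rw [Prod.dist_eq, ← Real.dist_eq]; exact le_max_left _ _
    have d2 : |u.2 - v.2| ≤ dist u v := by
      rw [Prod.dist_eq, ← Real.dist_eq]; exact le_max_right _ _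
    have d0 : 0 ≤ dist u v := dist_nonneg
    change dist (u.2, B t * u.2 + C t * u.1) (v.2, B t * v.2 + C t * v.1)
      ≤ (1 + KB + KC) * dist u v
    rw [Prod.dist_eq]
    refine max_le ?_ ?_
    · rw [Real.dist_eq]
      nlinarith [mul_nonneg hKB0 d0, mul_nonneg hKC0 d0]
    · rw [Real.dist_eq, show B t * u.2 + C t * u.1 - (B t * v.2 + C t * v.1)
        = B t * (u.2 - v.2) + C t * (u.1 - v.1) by ring]
      refine (abs_add_le _ _).trans ?_
      rw [abs_mul, abs_mul]
      have := mul_le_mul h1 d2 (abs_nonneg _) hKB0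
      have := mul_le_mul h2 d1 (abs_nonneg _) hKC0
      linarith
  · intro t ht
    have ht' := hsub (Ioo_subset_Icc_self ht)
    exact ⟨(hz t ht').prodMk (hw t ht'), mem_univ _⟩
  · intro t _
    refine ⟨?_, mem_univ _⟩
    have := hasDerivAt_const t (0 : ℝ × ℝ)
    convert this using 1
    simp

/-- Inverse function theorem, packaged as the existence of a neighbourhood on which the map is a
diffeomorphism onto an open set. -/
lemma exists_local_diffeo {Φ : ℝ × ℝ → ℝ × ℝ} {V : Set (ℝ × ℝ)} (hV : IsOpen V)
    (hΦ : ContDiffOn ℝ ∞ Φ V) {p : ℝ × ℝ} (hp : p ∈ V) (e : (ℝ × ℝ) ≃L[ℝ] (ℝ × ℝ))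
    (he : HasFDerivAt Φ (e : (ℝ × ℝ) →L[ℝ] (ℝ × ℝ)) p) :
    ∃ U' : Set (ℝ × ℝ), IsOpen U' ∧ p ∈ U' ∧ U' ⊆ V ∧ InjOn Φ U' ∧ IsOpen (Φ '' U') ∧
      ∃ Ψ : ℝ × ℝ → ℝ × ℝ, ContDiffOn ℝ ∞ Ψ (Φ '' U') ∧ ∀ q ∈ U', Ψ (Φ q) = q := by
  have hat : ∀ q ∈ V, ContDiffAt ℝ ∞ Φ q := fun q hq => hΦ.contDiffAt (hV.mem_nhds hq)
  have hne : (∞ : WithTop ℕ∞) ≠ 0 := by simp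
  let H := (hat p hp).toOpenPartialHomeomorph Φ he hne
  have hHc : (H : ℝ × ℝ → ℝ × ℝ) = Φ := (hat p hp).toOpenPartialHomeomorph_coe he hne
  have hpH : p ∈ H.source := (hat p hp).mem_toOpenPartialHomeomorph_source he hne
  have hcont : ContinuousAt (fderiv ℝ Φ) p :=
    ((hat p hp).fderiv_right (m := 0) (by simp)).continuousAt
  have hinv : ∀ᶠ q in 𝓝 p, fderiv ℝ Φ q ∈
      range (ContinuousLinearEquiv.toContinuousLinearMap : ((ℝ × ℝ) ≃L[ℝ] (ℝ × ℝ)) → _) :=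
    hcont.eventually (by rw [he.fderiv]; exact ContinuousLinearEquiv.nhds e)
  obtain ⟨W, hW, hWo, hpW⟩ := eventually_nhds_iff.1 hinv
  have hsrc : W ∩ (H.source ∩ V) ⊆ H.source := fun q hq => hq.2.1
  have hopen : IsOpen (W ∩ (H.source ∩ V)) := hWo.inter (H.open_source.inter hV)
  refine ⟨W ∩ (H.source ∩ V), hopen, ⟨hpW, hpH, hp⟩, fun q hq => hq.2.2, ?_, ?_, H.symm, ?_, ?_⟩
  · rw [← hHc]; exact H.injOn.mono hsrc
  · rw [← hHc]; exact H.isOpen_image_of_subset_source hopen hsrc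
  · rintro _ ⟨q, hq, rfl⟩
    refine ContDiffAt.contDiffWithinAt ?_
    obtain ⟨f', hf'⟩ := hW q hq.1
    have hs : H.symm (Φ q) = q := by rw [← hHc]; exact H.left_inv hq.2.1
    refine H.contDiffAt_symm (f₀' := f') (by rw [← hHc]; exact H.map_source hq.2.1) ?_ ?_
    · rw [hs, hHc, hf']
      exact ((hat q hq.2.2).differentiableAt hne).hasFDerivAt
    · rw [hs, hHc]; exact hat q hq.2.2
  · intro q hq
    rw [← hHc]; exact H.left_inv hq.2.1

namespace SmoothFn

variable (A0 A1 A2 A3 : SmoothFn)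

/-- `F = (f, f_x, f_y)` solves the linear system of `coP` on `V`. -/
def IsFlat (V : Set (ℝ × ℝ)) (F : ℝ × ℝ → ℝ × ℝ × ℝ) : Prop :=
  ∀ q ∈ V, HasFDerivAt F ((ContinuousLinearMap.fst ℝ ℝ ℝ).smulRight (matM A0 A1 A2 A3 q (F q))
    + (ContinuousLinearMap.snd ℝ ℝ ℝ).smulRight (matN A0 A1 A2 A3 q (F q))) q

variable {A0 A1 A2 A3}

lemma exists_isFlat {p : ℝ × ℝ} (h : ∀ᶠ q in 𝓝 p, Lio1 A0 A1 A2 A3 q = 0 ∧ Lio2 A0 A1 A2 A3 q = 0)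
    (e : ℝ × ℝ × ℝ) : ∃ V, IsOpen V ∧ p ∈ V ∧ ∃ F, F p = e ∧ ContDiffOn ℝ ∞ F V ∧
      IsFlat A0 A1 A2 A3 V F := by
  have hM : ContDiff ℝ ∞ (matM A0 A1 A2 A3) := contDiff_sysMat ..
  have hN : ContDiff ℝ ∞ (matN A0 A1 A2 A3) := contDiff_sysMat ..
  obtain ⟨V, hV, hp, F, hFc, hFp, hF⟩ := exists_flat_section (matM A0 A1 A2 A3)
    (matN A0 A1 A2 A3) _ _ hM.continuous hN.continuous (contDiff_sysMat ..).continuous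
    (contDiff_sysMat ..).continuous (fun x y => hasDerivAt_sysMat_y ..)
    (fun x y => hasDerivAt_sysMat_x ..) p
    (h.mono fun q hq w => flat_of_Lio_eq_zero A0 A1 A2 A3 hq.1 hq.2 w) e
  obtain ⟨h1, h2⟩ := contDiffOn_of_flat hM hN hFc hV hF
  exact ⟨V, hV, hp, F, hFp, h2, h1⟩

/-- Along the graph of a solution of the ODE, a flat section satisfies a linear second-order
equation; hence it vanishes on the graph once it vanishes to first order at one point. -/
lemma IsFlat.eq_zero_on_graph {V : Set (ℝ × ℝ)} {F : ℝ × ℝ → ℝ × ℝ × ℝ}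
    (hF : IsFlat A0 A1 A2 A3 V F) {y : ℝ → ℝ} {a b x₀ : ℝ}
    (hy : IsODESolution V A0 A1 A2 A3 y a b) (hx₀ : x₀ ∈ Ioo a b) (h0 : (F (x₀, y x₀)).1 = 0)
    (h1 : (F (x₀, y x₀)).2.1 + deriv y x₀ * (F (x₀, y x₀)).2.2 = 0) :
    ∀ x ∈ Ioo a b, (F (x, y x)).1 = 0 := by
  have hyd : ∀ x ∈ Ioo a b, HasDerivAt y (deriv y x) x := fun x hx => (hy x hx).2.1.hasDerivAt
  have hyc : ContinuousOn y (Ioo a b) := fun x hx =>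
    (hyd x hx).continuousAt.continuousWithinAt
  have hyc' : ContinuousOn (deriv y) (Ioo a b) := fun x hx =>
    (hy x hx).2.2.1.continuousAt.continuousWithinAt
  have hFd : ∀ x ∈ Ioo a b, HasDerivAt (fun t => F (t, y t))
      (matM A0 A1 A2 A3 (x, y x) (F (x, y x))
        + deriv y x • matN A0 A1 A2 A3 (x, y x) (F (x, y x))) x := by
    intro x hx
    have := (hF (x, y x) (hy x hx).1).comp_hasDerivAt x ((hasDerivAt_id x).prodMk (hyd x hx))
    refine this.congr_deriv ?_
    simp
  have hcg : ∀ g : SmoothFn, ContinuousOn (fun t => (g : ℝ × ℝ → ℝ) (t, y t)) (Ioo a b) :=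
    fun g => (smooth g).continuous.comp_continuousOn (continuousOn_id.prodMk hyc)
  refine eq_zero_of_linear_ode (z := fun t => (F (t, y t)).1)
    (w := fun t => (F (t, y t)).2.1 + deriv y t * (F (t, y t)).2.2)
    (B := fun t => (A1 : ℝ × ℝ → ℝ) (t, y t) / 3 + 2 / 3 * (A2 : ℝ × ℝ → ℝ) (t, y t) * deriv y t
      + (A3 : ℝ × ℝ → ℝ) (t, y t) * deriv y t ^ 2)
    (C := fun t => (coP A0 A1 A2 : ℝ × ℝ → ℝ) (t, y t)
      + 2 * (coQ A0 A1 A2 A3 : ℝ × ℝ → ℝ) (t, y t) * deriv y t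
      + (coR A1 A2 A3 : ℝ × ℝ → ℝ) (t, y t) * deriv y t ^ 2)
    hx₀ ?_ ?_ ?_ ?_ h0 h1
  · intro x hx
    refine ((hasFDerivAt_fst).comp_hasDerivAt x (hFd x hx)).congr_deriv ?_
    simp [matM, matN, sysMat_apply]
  · intro x hx
    have e1 := hasFDerivAt_fst.comp_hasDerivAt x
      ((hasFDerivAt_snd (𝕜 := ℝ)).comp_hasDerivAt x (hFd x hx))
    have e2 := hasFDerivAt_snd.comp_hasDerivAt x
      ((hasFDerivAt_snd (𝕜 := ℝ)).comp_hasDerivAt x (hFd x hx))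
    refine (e1.add ((hy x hx).2.2.1.hasDerivAt.mul e2)).congr_deriv ?_
    simp only [(hy x hx).2.2.2]
    simp [matM, matN, sysMat_apply]
    ring
  · exact (((hcg A1).div_const 3).add ((continuousOn_const.mul (hcg A2)).mul hyc')).add
      ((hcg A3).mul (hyc'.pow 2))
  · exact ((hcg _).add ((continuousOn_const.mul (hcg _)).mul hyc')).add
      ((hcg _).mul (hyc'.pow 2))

lemma IsFlat.comb {V : Set (ℝ × ℝ)} {F G H : ℝ × ℝ → ℝ × ℝ × ℝ}
    (hF : IsFlat A0 A1 A2 A3 V F) (hG : IsFlat A0 A1 A2 A3 V G) (hH : IsFlat A0 A1 A2 A3 V H)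
    (α β γ : ℝ) : IsFlat A0 A1 A2 A3 V (fun q => α • F q + β • G q + γ • H q) := by
  intro q hq
  refine ((((hF q hq).const_smul α).add ((hG q hq).const_smul β)).add
    ((hH q hq).const_smul γ)).congr_fderiv ?_
  ext <;> simp

end SmoothFn

open SmoothFn in
/-- Three independent flat sections give projective coordinates `[f₀ : f₁ : f₂]` on the plane in
which every solution graph lies on a line. -/
theorem exists_linearization {U : Set (ℝ × ℝ)} (hU : IsOpen U) {A0 A1 A2 A3 : ℝ × ℝ → ℝ}
    (hA0 : ContDiffOn ℝ ∞ A0 U) (hA1 : ContDiffOn ℝ ∞ A1 U)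
    (hA2 : ContDiffOn ℝ ∞ A2 U) (hA3 : ContDiffOn ℝ ∞ A3 U)
    (hL : ∀ p ∈ U, Lio1 A0 A1 A2 A3 p = 0 ∧ Lio2 A0 A1 A2 A3 p = 0) {p : ℝ × ℝ} (hp : p ∈ U) :
    ∃ U' : Set (ℝ × ℝ), IsOpen U' ∧ p ∈ U' ∧ U' ⊆ U ∧
      ∃ Φ Φinv : ℝ × ℝ → ℝ × ℝ,
        ContDiffOn ℝ ∞ Φ U' ∧ Set.InjOn Φ U' ∧ IsOpen (Φ '' U') ∧
        ContDiffOn ℝ ∞ Φinv (Φ '' U') ∧ (∀ q ∈ U', Φinv (Φ q) = q) ∧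
        ∀ (y : ℝ → ℝ) (a b : ℝ), IsODESolution U' A0 A1 A2 A3 y a b →
          ∃ α β γ : ℝ, (α, β) ≠ (0, 0) ∧
            ∀ x ∈ Set.Ioo a b,
              α * (Φ (x, y x)).1 + β * (Φ (x, y x)).2 = γ := by
  obtain ⟨B0, h0⟩ := exists_extend hU hA0 hp
  obtain ⟨B1, h1⟩ := exists_extend hU hA1 hp
  obtain ⟨B2, h2⟩ := exists_extend hU hA2 hp
  obtain ⟨B3, h3⟩ := exists_extend hU hA3 hp
  have hLB : ∀ᶠ q in 𝓝 p, Lio1 B0 B1 B2 B3 q = 0 ∧ Lio2 B0 B1 B2 B3 q = 0 := by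
    filter_upwards [h0.eventuallyEq_nhds, h1.eventuallyEq_nhds, h2.eventuallyEq_nhds,
      h3.eventuallyEq_nhds, hU.mem_nhds hp] with q g0 g1 g2 g3 hq
    obtain ⟨e1, e2⟩ := Lio_congr_germ g0 g1 g2 g3
    rw [← e1, ← e2]
    exact hL q hq
  obtain ⟨V0, hV0, hp0, F0, F0p, F0s, F0f⟩ := exists_isFlat hLB (1, 0, 0)
  obtain ⟨V1, hV1, hp1, F1, F1p, F1s, F1f⟩ := exists_isFlat hLB (0, 1, 0)
  obtain ⟨V2, hV2, hp2, F2, F2p, F2s, F2f⟩ := exists_isFlat hLB (0, 0, 1)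
  have hne : ∀ᶠ q in 𝓝 p, (F0 q).1 ≠ 0 := by
    have : ContinuousAt (fun q => (F0 q).1) p :=
      continuous_fst.continuousAt.comp (F0f p hp0).continuousAt
    exact this.eventually_ne (by rw [F0p]; exact one_ne_zero)
  obtain ⟨V, hV, hVo, hpV⟩ := eventually_nhds_iff.1
    (h0.and (h1.and (h2.and (h3.and (hne.and ((hV0.eventually_mem hp0).and
      ((hV1.eventually_mem hp1).and ((hV2.eventually_mem hp2).and (hU.eventually_mem hp)))))))))
  have s0 : V ⊆ V0 := fun q hq => (hV q hq).2.2.2.2.2.1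
  have s1 : V ⊆ V1 := fun q hq => (hV q hq).2.2.2.2.2.2.1
  have s2 : V ⊆ V2 := fun q hq => (hV q hq).2.2.2.2.2.2.2.1
  have sU : V ⊆ U := fun q hq => (hV q hq).2.2.2.2.2.2.2.2
  have hF0 : ∀ q ∈ V, (F0 q).1 ≠ 0 := fun q hq => (hV q hq).2.2.2.2.1
  let Φ : ℝ × ℝ → ℝ × ℝ := fun q => ((F1 q).1 / (F0 q).1, (F2 q).1 / (F0 q).1)
  have hΦ : ContDiffOn ℝ ∞ Φ V := by
    have f0 : ContDiffOn ℝ ∞ (fun q => (F0 q).1) V := (F0s.mono s0).fst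
    have f1 : ContDiffOn ℝ ∞ (fun q => (F1 q).1) V := (F1s.mono s1).fst
    have f2 : ContDiffOn ℝ ∞ (fun q => (F2 q).1) V := (F2s.mono s2).fst
    exact (f1.div f0 hF0).prodMk (f2.div f0 hF0)
  have hΦp : HasFDerivAt Φ
      ((ContinuousLinearEquiv.refl ℝ (ℝ × ℝ)) : (ℝ × ℝ) →L[ℝ] (ℝ × ℝ)) p := by
    have f0 := hasFDerivAt_fst.comp p (F0f p hp0)
    have f1 := hasFDerivAt_fst.comp p (F1f p hp1)
    have f2 := hasFDerivAt_fst.comp p (F2f p hp2)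
    have hne' : (Prod.fst ∘ F0) p ≠ 0 := hF0 p hpV
    have f0i := (hasFDerivAt_inv' (𝕜 := ℝ) hne').comp p f0
    have : HasFDerivAt (fun q => ((F1 q).1 * (F0 q).1⁻¹, (F2 q).1 * (F0 q).1⁻¹)) _ p :=
      (HasFDerivAt.mul f1 f0i).prodMk (HasFDerivAt.mul f2 f0i)
    refine this.congr_fderiv ?_
    ext <;> simp [F0p, F1p, F2p, matM, matN, sysMat_apply]
  obtain ⟨U', hU'o, hpU', hU'V, hinj, himg, Ψ, hΨ, hΨΦ⟩ := exists_local_diffeo hVo hΦ hpV _ hΦp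
  refine ⟨U', hU'o, hpU', hU'V.trans sU, Φ, Ψ, hΦ.mono hU'V, hinj, himg, hΨ, hΨΦ, ?_⟩
  intro y a b hy
  rcases (Ioo a b).eq_empty_or_nonempty with he | ⟨x₀, hx₀⟩
  · exact ⟨1, 0, 0, by simp, by simp [he]⟩
  have hyB : IsODESolution V B0 B1 B2 B3 y a b := by
    intro x hx
    obtain ⟨g1, g2, g3, g4⟩ := hy x hx
    have hv := hV _ (hU'V g1)
    refine ⟨hU'V g1, g2, g3, ?_⟩
    rw [g4, hv.1, hv.2.1, hv.2.2.1, hv.2.2.2.1]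
  -- `(m, n)` is, up to scale, the velocity of the image curve at `x₀`
  set q₀ := (x₀, y x₀) with hq₀
  have hc0 : (F0 q₀).1 ≠ 0 := hF0 _ (hyB x₀ hx₀).1
  let w (F : ℝ × ℝ → ℝ × ℝ × ℝ) : ℝ := (F q₀).2.1 + deriv y x₀ * (F q₀).2.2
  let m := w F1 * (F0 q₀).1 - (F1 q₀).1 * w F0
  let n := w F2 * (F0 q₀).1 - (F2 q₀).1 * w F0
  obtain ⟨α, β, hαβ, hmn⟩ : ∃ α β : ℝ, (α, β) ≠ (0, 0) ∧ α * m + β * n = 0 := by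
    by_cases h : n = 0 ∧ m = 0
    · exact ⟨1, 0, by simp, by simp [h.2]⟩
    · exact ⟨n, -m, by simpa using h, by ring⟩
  let γ := (α * (F1 q₀).1 + β * (F2 q₀).1) / (F0 q₀).1
  have hγ : γ * (F0 q₀).1 = α * (F1 q₀).1 + β * (F2 q₀).1 := div_mul_cancel₀ _ hc0
  have hflat : IsFlat B0 B1 B2 B3 V (fun q => α • F1 q + β • F2 q + (-γ) • F0 q) :=
    IsFlat.comb (fun q hq => F1f q (s1 hq)) (fun q hq => F2f q (s2 hq))
      (fun q hq => F0f q (s0 hq)) α β (-γ)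
  refine ⟨α, β, γ, hαβ, fun x hx => ?_⟩
  have key := hflat.eq_zero_on_graph hyB hx₀ ?_ ?_ x hx
  · have hx0 : (F0 (x, y x)).1 ≠ 0 := hF0 _ (hyB x hx).1
    simp only [Prod.fst_add, Prod.smul_fst, smul_eq_mul] at key
    change α * ((F1 (x, y x)).1 / (F0 (x, y x)).1) + β * ((F2 (x, y x)).1 / (F0 (x, y x)).1) = γ
    field_simp
    linarith
  · simp only [Prod.fst_add, Prod.smul_fst, smul_eq_mul]
    linarith
  · simp only [Prod.fst_add, Prod.smul_fst, smul_eq_mul, Prod.snd_add, Prod.smul_snd]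
    refine mul_right_cancel₀ hc0 ?_
    simp only [m, n, w] at hmn
    rw [zero_mul]
    linear_combination hmn - ((F0 q₀).2.1 + deriv y x₀ * (F0 q₀).2.2) * hγ

/-! ### A linearising point transformation forces the invariants to vanish -/

namespace SmoothFn

variable {A0 A1 A2 A3 : SmoothFn}

/-- Local existence for the ODE with prescribed initial point and slope. -/
lemma exists_solution {W : Set (ℝ × ℝ)} (hW : IsOpen W) {q : ℝ × ℝ} (hq : q ∈ W) (s : ℝ) :
    ∃ (y : ℝ → ℝ) (a b : ℝ), q.1 ∈ Ioo a b ∧ y q.1 = q.2 ∧ deriv y q.1 = s ∧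
      IsODESolution W A0 A1 A2 A3 y a b := by
  let cub : ℝ × ℝ × ℝ → ℝ := fun z =>
    (A3 : ℝ × ℝ → ℝ) (z.1, z.2.1) * z.2.2 ^ 3 + (A2 : ℝ × ℝ → ℝ) (z.1, z.2.1) * z.2.2 ^ 2
      + (A1 : ℝ × ℝ → ℝ) (z.1, z.2.1) * z.2.2 + (A0 : ℝ × ℝ → ℝ) (z.1, z.2.1)
  have hcub : ContDiff ℝ ∞ cub := by
    have h0 := smooth A0
    have h1 := smooth A1
    have h2 := smooth A2
    have h3 := smooth A3
    fun_prop
  have hf : ContDiff ℝ 1 (fun z : ℝ × ℝ × ℝ => ((1 : ℝ), z.2.2, cub z)) := by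
    have := hcub.of_le (m := 1) (by exact_mod_cast le_top)
    fun_prop
  obtain ⟨X, hX0, ε, hε, hX⟩ :=
    hf.contDiffAt.exists_forall_mem_closedBall_exists_eq_forall_mem_Ioo_hasDerivAt₀
      (x₀ := (q.1, q.2, s)) q.1
  set I := Ioo (q.1 - ε) (q.1 + ε) with hI
  have hqI : q.1 ∈ I := ⟨by linarith, by linarith⟩
  have d1 : ∀ t ∈ I, HasDerivAt (fun t => (X t).1) 1 t := by
    intro t ht
    have := (hasFDerivAt_fst (𝕜 := ℝ)).comp_hasDerivAt t (hX t ht)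
    exact this
  have dsnd : ∀ t ∈ I, HasDerivAt (fun t => (X t).2) ((X t).2.2, cub (X t)) t := by
    intro t ht
    have := (hasFDerivAt_snd (𝕜 := ℝ)).comp_hasDerivAt t (hX t ht)
    exact this
  have d2 : ∀ t ∈ I, HasDerivAt (fun t => (X t).2.1) (X t).2.2 t := by
    intro t ht
    have := (hasFDerivAt_fst (𝕜 := ℝ)).comp_hasDerivAt t (dsnd t ht)
    exact this
  have d3 : ∀ t ∈ I, HasDerivAt (fun t => (X t).2.2) (cub (X t)) t := by
    intro t ht
    have := (hasFDerivAt_snd (𝕜 := ℝ)).comp_hasDerivAt t (dsnd t ht)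
    exact this
  -- the first coordinate of the autonomous system is the time variable
  have hfst : ∀ t ∈ I, (X t).1 = t := by
    intro t ht
    have hd : ∀ r ∈ I, HasDerivAt (fun r => (X r).1 - r) 0 r := fun r hr =>
      ((d1 r hr).sub (hasDerivAt_id r)).congr_deriv (by simp)
    have := isOpen_Ioo.is_const_of_deriv_eq_zero isPreconnected_Ioo
      (fun r hr => (hd r hr).differentiableAt.differentiableWithinAt)
      (fun r hr => (hd r hr).deriv) ht hqI
    simp only [hX0, sub_self] at this
    linarith
  let y : ℝ → ℝ := fun t => (X t).2.1
  have hy' : ∀ t ∈ I, deriv y t = (X t).2.2 := fun t ht => (d2 t ht).deriv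
  have hy'' : ∀ t ∈ I, HasDerivAt (deriv y) (cub (X t)) t := fun t ht =>
    (d3 t ht).congr_of_eventuallyEq
      (Filter.eventuallyEq_of_mem (isOpen_Ioo.mem_nhds ht) hy')
  have hev : ∀ᶠ t in 𝓝 q.1, t ∈ I ∧ (t, y t) ∈ W := by
    refine (isOpen_Ioo.eventually_mem hqI).and ?_
    have hc : ContinuousAt (fun t => (t, y t)) q.1 :=
      continuousAt_id.prodMk (d2 q.1 hqI).continuousAt
    refine hc.eventually (hW.mem_nhds ?_)
    simpa [y, hX0] using hq
  obtain ⟨δ, hδ, hδW⟩ := Metric.eventually_nhds_iff.1 hev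
  have hδ' : ∀ t ∈ Ioo (q.1 - δ) (q.1 + δ), t ∈ I ∧ (t, y t) ∈ W := fun t ht =>
    hδW (by rw [Real.dist_eq, abs_lt]; constructor <;> linarith [ht.1, ht.2])
  refine ⟨y, q.1 - δ, q.1 + δ, ⟨by linarith, by linarith⟩, by simp [y, hX0],
    by rw [hy' _ hqI, hX0], fun t ht => ?_⟩
  obtain ⟨htI, htW⟩ := hδ' t ht
  refine ⟨htW, (d2 t htI).differentiableAt, (hy'' t htI).differentiableAt, ?_⟩
  rw [(hy'' t htI).deriv]
  simp only [cub, hfst t htI, hy' t htI, y]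

/-- First derivative of `f` along a curve of slope `s` through `q`. -/
noncomputable def der1 (f : SmoothFn) (q : ℝ × ℝ) (s : ℝ) : ℝ :=
  (Dx f : ℝ × ℝ → ℝ) q + s * (Dy f : ℝ × ℝ → ℝ) q

variable (A0 A1 A2 A3) in
/-- Second derivative of `f` along the solution of the ODE with slope `s` through `q`. -/
noncomputable def der2 (f : SmoothFn) (q : ℝ × ℝ) (s : ℝ) : ℝ :=
  (Dx (Dx f) : ℝ × ℝ → ℝ) q + 2 * s * (Dx (Dy f) : ℝ × ℝ → ℝ) q
    + s ^ 2 * (Dy (Dy f) : ℝ × ℝ → ℝ) q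
    + ((A3 : ℝ × ℝ → ℝ) q * s ^ 3 + (A2 : ℝ × ℝ → ℝ) q * s ^ 2 + (A1 : ℝ × ℝ → ℝ) q * s
      + (A0 : ℝ × ℝ → ℝ) q) * (Dy f : ℝ × ℝ → ℝ) q

/-- If all solution graphs are mapped to lines by `(u, v)`, the image curves have zero
curvature. -/
lemma wronskian_eq_zero {W : Set (ℝ × ℝ)} (hW : IsOpen W) {u v : SmoothFn}
    (H : ∀ (y : ℝ → ℝ) (a b : ℝ), IsODESolution W A0 A1 A2 A3 y a b →
      ∃ α β γ : ℝ, (α, β) ≠ (0, 0) ∧ ∀ x ∈ Ioo a b,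
        α * (u : ℝ × ℝ → ℝ) (x, y x) + β * (v : ℝ × ℝ → ℝ) (x, y x) = γ)
    {q : ℝ × ℝ} (hq : q ∈ W) (s : ℝ) :
    der1 u q s * der2 A0 A1 A2 A3 v q s - der2 A0 A1 A2 A3 u q s * der1 v q s = 0 := by
  obtain ⟨y, a, b, hab, hyq, hys, hy⟩ := exists_solution (A0 := A0) (A1 := A1) (A2 := A2)
    (A3 := A3) hW hq s
  obtain ⟨α, β, γ, hne, hline⟩ := H y a b hy
  have hd : ∀ f : SmoothFn, ∀ t ∈ Ioo a b, HasDerivAt (fun t => (f : ℝ × ℝ → ℝ) (t, y t))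
      ((Dx f : ℝ × ℝ → ℝ) (t, y t) + deriv y t * (Dy f : ℝ × ℝ → ℝ) (t, y t)) t := fun f t ht =>
    hasDerivAt_graph f (hy t ht).2.1.hasDerivAt
  have g1 : ∀ t ∈ Ioo a b,
      α * der1 u (t, y t) (deriv y t) + β * der1 v (t, y t) (deriv y t) = 0 := by
    intro t ht
    have h := ((hd u t ht).const_mul α).add ((hd v t ht).const_mul β)
    refine h.unique ((hasDerivAt_const t γ).congr_of_eventuallyEq ?_)
    exact Filter.eventuallyEq_of_mem (isOpen_Ioo.mem_nhds ht) hline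
  have hd2 : ∀ f : SmoothFn, HasDerivAt (fun t => der1 f (t, y t) (deriv y t))
      (der2 A0 A1 A2 A3 f q s) q.1 := by
    intro f
    refine ((hd (Dx f) _ hab).add
      ((hy _ hab).2.2.1.hasDerivAt.mul (hd (Dy f) _ hab))).congr_deriv ?_
    simp only [(hy _ hab).2.2.2, hyq, hys, Dy_Dx, der2, Prod.mk.eta]
    ring
  have e1 : α * der1 u q s + β * der1 v q s = 0 := by simpa [hyq, hys] using g1 _ hab
  have e2 : α * der2 A0 A1 A2 A3 u q s + β * der2 A0 A1 A2 A3 v q s = 0 :=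
    (((hd2 u).const_mul α).add ((hd2 v).const_mul β)).unique
      ((hasDerivAt_const _ (0 : ℝ)).congr_of_eventuallyEq
        (Filter.eventuallyEq_of_mem (isOpen_Ioo.mem_nhds hab) g1))
  by_contra hdet
  refine hne ?_
  have ha : α = 0 := by
    refine (mul_eq_zero.1 (?_ : α * _ = 0)).resolve_right hdet
    linear_combination der2 A0 A1 A2 A3 v q s * e1 - der1 v q s * e2
  have hb : β = 0 := by
    refine (mul_eq_zero.1 (?_ : β * _ = 0)).resolve_right hdet
    linear_combination der1 u q s * e2 - der2 A0 A1 A2 A3 u q s * e1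
  rw [ha, hb]

end SmoothFn

namespace SmoothFn

variable {A0 A1 A2 A3 : SmoothFn}

/-- The Jacobian determinant of `(u, v)`. -/
noncomputable def jac (u v : SmoothFn) : SmoothFn := Dx u * Dy v - Dy u * Dx v

/-- Vanishing of the curvature for all slopes expresses the coefficients of the ODE through the
2-jet of `(u, v)`. -/
lemma coeff_of_wronskian {u v : SmoothFn} {q : ℝ × ℝ}
    (h : ∀ s, der1 u q s * der2 A0 A1 A2 A3 v q s - der2 A0 A1 A2 A3 u q s * der1 v q s = 0) :
    ((A0 * jac u v : SmoothFn) : ℝ × ℝ → ℝ) q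
      = ((Dx v * Dx (Dx u) - Dx u * Dx (Dx v) : SmoothFn) : ℝ × ℝ → ℝ) q ∧
    ((A1 * jac u v : SmoothFn) : ℝ × ℝ → ℝ) q
      = ((Dy v * Dx (Dx u) - Dy u * Dx (Dx v)
          + (2 : ℝ) • (Dx v * Dx (Dy u) - Dx u * Dx (Dy v)) : SmoothFn) : ℝ × ℝ → ℝ) q ∧
    ((A2 * jac u v : SmoothFn) : ℝ × ℝ → ℝ) q
      = ((Dx v * Dy (Dy u) - Dx u * Dy (Dy v)
          + (2 : ℝ) • (Dy v * Dx (Dy u) - Dy u * Dx (Dy v)) : SmoothFn) : ℝ × ℝ → ℝ) q ∧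
    ((A3 * jac u v : SmoothFn) : ℝ × ℝ → ℝ) q
      = ((Dy v * Dy (Dy u) - Dy u * Dy (Dy v) : SmoothFn) : ℝ × ℝ → ℝ) q := by
  -- four values of the slope determine the cubic polynomial
  have p0 := h 0
  have p1 := h 1
  have p2 := h (-1)
  have p3 := h 2
  simp only [der1, der2] at p0 p1 p2 p3
  simp only [jac, Subalgebra.coe_add, Subalgebra.coe_sub, Subalgebra.coe_smul, Subalgebra.coe_mul,
    Pi.add_apply, Pi.sub_apply, Pi.smul_apply, Pi.mul_apply, smul_eq_mul]
  refine ⟨?_, ?_, ?_, ?_⟩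
  · linear_combination p0
  · linear_combination (p1 - p2) / 2 - (p3 - p0 - 4 * ((p1 + p2) / 2 - p0) - (p1 - p2)) / 6
  · linear_combination (p1 + p2) / 2 - p0
  · linear_combination (p3 - p0 - 4 * ((p1 + p2) / 2 - p0) - (p1 - p2)) / 6

/-- The invariants vanish at `p` if near `p` all image curves under `(u, v)` have zero curvature and
the differential of `(u, v)` at `p` is the identity: the relations of `coeff_of_wronskian` are
differentiated up to twice at `p`, where the Jacobian is `1`. -/
lemma Lio_eq_zero_of_coeff {u v : SmoothFn} {p : ℝ × ℝ}
    (h : ∀ᶠ q in 𝓝 p, ∀ s,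
      der1 u q s * der2 A0 A1 A2 A3 v q s - der2 A0 A1 A2 A3 u q s * der1 v q s = 0)
    (ux : (Dx u : ℝ × ℝ → ℝ) p = 1) (uy : (Dy u : ℝ × ℝ → ℝ) p = 0)
    (vx : (Dx v : ℝ × ℝ → ℝ) p = 0) (vy : (Dy v : ℝ × ℝ → ℝ) p = 1) :
    Lio1 A0 A1 A2 A3 p = 0 ∧ Lio2 A0 A1 A2 A3 p = 0 := by
  have g0 := h.mono fun q hq => (coeff_of_wronskian hq).1
  have g1 := h.mono fun q hq => (coeff_of_wronskian hq).2.1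
  have g2 := h.mono fun q hq => (coeff_of_wronskian hq).2.2.1
  have g3 := h.mono fun q hq => (coeff_of_wronskian hq).2.2.2
  have g0x := dir_congr (1, 0) g0
  have g0y := dir_congr (0, 1) g0
  have g1x := dir_congr (1, 0) g1
  have g1y := dir_congr (0, 1) g1
  have g2x := dir_congr (1, 0) g2
  have g2y := dir_congr (0, 1) g2
  have g3x := dir_congr (1, 0) g3
  have g3y := dir_congr (0, 1) g3
  have g0yy := (dir_congr (0, 1) g0y).eq_of_nhds
  have g1xy := (dir_congr (1, 0) g1y).eq_of_nhds
  have g1yy := (dir_congr (0, 1) g1y).eq_of_nhds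
  have g2xx := (dir_congr (1, 0) g2x).eq_of_nhds
  have g2xy := (dir_congr (1, 0) g2y).eq_of_nhds
  have g3xx := (dir_congr (1, 0) g3x).eq_of_nhds
  replace g0 := g0.self_of_nhds
  replace g1 := g1.self_of_nhds
  replace g2 := g2.self_of_nhds
  replace g3 := g3.self_of_nhds
  replace g0x := g0x.eq_of_nhds
  replace g1x := g1x.eq_of_nhds
  replace g2x := g2x.eq_of_nhds
  replace g3x := g3x.eq_of_nhds
  replace g0y := g0y.eq_of_nhds
  replace g1y := g1y.eq_of_nhds
  replace g2y := g2y.eq_of_nhds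
  replace g3y := g3y.eq_of_nhds
  simp only [jac, map_add, map_sub, Derivation.map_smul, Derivation.leibniz, Dy_Dx,
    Subalgebra.coe_add, Subalgebra.coe_sub, Subalgebra.coe_smul, Subalgebra.coe_mul, smul_eq_mul,
    Pi.add_apply, Pi.sub_apply, Pi.smul_apply, Pi.mul_apply, ux, uy, vx, vy, mul_one, one_mul,
    mul_zero, zero_mul, add_zero, zero_add, sub_zero, zero_sub]
    at g0 g1 g2 g3 g0x g1x g2x g3x g0y g1y g2y g3y g0yy g1xy g1yy g2xx g2xy g3xx
  -- solve each relation for the top derivative of its coefficient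
  replace g0x := eq_sub_of_add_eq' g0x
  replace g1x := eq_sub_of_add_eq' g1x
  replace g2x := eq_sub_of_add_eq' g2x
  replace g3x := eq_sub_of_add_eq' g3x
  replace g0y := eq_sub_of_add_eq' g0y
  replace g1y := eq_sub_of_add_eq' g1y
  replace g2y := eq_sub_of_add_eq' g2y
  replace g3y := eq_sub_of_add_eq' g3y
  replace g0yy := eq_sub_of_add_eq (eq_sub_of_add_eq' g0yy)
  replace g1xy := eq_sub_of_add_eq (eq_sub_of_add_eq' g1xy)
  replace g1yy := eq_sub_of_add_eq (eq_sub_of_add_eq' g1yy)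
  replace g2xx := eq_sub_of_add_eq (eq_sub_of_add_eq' g2xx)
  replace g2xy := eq_sub_of_add_eq (eq_sub_of_add_eq' g2xy)
  replace g3xx := eq_sub_of_add_eq (eq_sub_of_add_eq' g3xx)
  constructor
  · simp only [Lio1, pdx_coe, pdy_coe]
    rw [g1xy, g2xx, g0yy, g2y, g1y, g0y, g0x, g3x, g2x, g1x, g0, g1, g2, g3]
    ring
  · simp only [Lio2, pdx_coe, pdy_coe]
    rw [g2xy, g1yy, g3xx, g3y, g2y, g1y, g0y, g3x, g2x, g1x, g0, g1, g2, g3]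
    ring

/-- Normalisation: the differential of the point transformation can be taken to be the identity at
`p`, since replacing `(u, v)` by invertible linear combinations scales the curvature. -/
lemma Lio_eq_zero_of_wronskian {u v : SmoothFn} {p : ℝ × ℝ}
    (h : ∀ᶠ q in 𝓝 p, ∀ s,
      der1 u q s * der2 A0 A1 A2 A3 v q s - der2 A0 A1 A2 A3 u q s * der1 v q s = 0)
    (hJ : (Dx u : ℝ × ℝ → ℝ) p * (Dy v : ℝ × ℝ → ℝ) p
      - (Dy u : ℝ × ℝ → ℝ) p * (Dx v : ℝ × ℝ → ℝ) p ≠ 0) :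
    Lio1 A0 A1 A2 A3 p = 0 ∧ Lio2 A0 A1 A2 A3 p = 0 := by
  set a := (Dx u : ℝ × ℝ → ℝ) p with ha
  set b := (Dy u : ℝ × ℝ → ℝ) p with hb
  set c := (Dx v : ℝ × ℝ → ℝ) p with hc
  set d := (Dy v : ℝ × ℝ → ℝ) p with hd
  refine Lio_eq_zero_of_coeff (u := (d / (a * d - b * c)) • u - (b / (a * d - b * c)) • v)
    (v := (a / (a * d - b * c)) • v - (c / (a * d - b * c)) • u) ?_ ?_ ?_ ?_ ?_
  · filter_upwards [h] with q hq s
    have := hq s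
    simp only [der1, der2, map_sub, Derivation.map_smul, Subalgebra.coe_sub, Subalgebra.coe_smul,
      Pi.sub_apply, Pi.smul_apply, smul_eq_mul] at this ⊢
    linear_combination ((d / (a * d - b * c)) * (a / (a * d - b * c))
      - (b / (a * d - b * c)) * (c / (a * d - b * c))) * this
  all_goals
    simp only [map_sub, Derivation.map_smul, Subalgebra.coe_sub, Subalgebra.coe_smul,
      Pi.sub_apply, Pi.smul_apply, smul_eq_mul, ← ha, ← hb, ← hc, ← hd]
    rw [div_mul_eq_mul_div, div_mul_eq_mul_div, ← sub_div, div_eq_iff hJ]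
    ring

end SmoothFn

open SmoothFn in
/-- The invariants vanish at any point near which some local diffeomorphism straightens all
solution graphs. -/
theorem Lio_eq_zero_of_linearization {A0 A1 A2 A3 : ℝ × ℝ → ℝ} {U' : Set (ℝ × ℝ)}
    (hU' : IsOpen U') (hA0 : ContDiffOn ℝ ∞ A0 U') (hA1 : ContDiffOn ℝ ∞ A1 U')
    (hA2 : ContDiffOn ℝ ∞ A2 U') (hA3 : ContDiffOn ℝ ∞ A3 U') {p : ℝ × ℝ} (hp : p ∈ U')
    {Φ Ψ : ℝ × ℝ → ℝ × ℝ} (hΦ : ContDiffOn ℝ ∞ Φ U') (himg : IsOpen (Φ '' U'))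
    (hΨ : ContDiffOn ℝ ∞ Ψ (Φ '' U')) (hΨΦ : ∀ q ∈ U', Ψ (Φ q) = q)
    (hline : ∀ (y : ℝ → ℝ) (a b : ℝ), IsODESolution U' A0 A1 A2 A3 y a b →
      ∃ α β γ : ℝ, (α, β) ≠ (0, 0) ∧
        ∀ x ∈ Ioo a b, α * (Φ (x, y x)).1 + β * (Φ (x, y x)).2 = γ) :
    Lio1 A0 A1 A2 A3 p = 0 ∧ Lio2 A0 A1 A2 A3 p = 0 := by
  obtain ⟨B0, h0⟩ := exists_extend hU' hA0 hp
  obtain ⟨B1, h1⟩ := exists_extend hU' hA1 hp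
  obtain ⟨B2, h2⟩ := exists_extend hU' hA2 hp
  obtain ⟨B3, h3⟩ := exists_extend hU' hA3 hp
  obtain ⟨u, hu⟩ := exists_extend hU' hΦ.fst hp
  obtain ⟨v, hv⟩ := exists_extend hU' hΦ.snd hp
  obtain ⟨e1, e2⟩ := Lio_congr_germ h0 h1 h2 h3
  rw [e1, e2]
  obtain ⟨W, hW, hWo, hpW⟩ := eventually_nhds_iff.1
    (h0.and (h1.and (h2.and (h3.and (hu.and (hv.and (hU'.eventually_mem hp)))))))
  refine Lio_eq_zero_of_wronskian (u := u) (v := v) ?_ ?_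
  · filter_upwards [hWo.mem_nhds hpW] with q hq s
    refine wronskian_eq_zero hWo (fun y a b hy => ?_) hq s
    obtain ⟨α, β, γ, hne, hl⟩ := hline y a b fun x hx => by
      obtain ⟨g1, g2, g3, g4⟩ := hy x hx
      obtain ⟨k0, k1, k2, k3, -, -, k⟩ := hW _ g1
      exact ⟨k, g2, g3, by rw [g4, k0, k1, k2, k3]⟩
    refine ⟨α, β, γ, hne, fun x hx => ?_⟩
    obtain ⟨-, -, -, -, ku, kv, -⟩ := hW _ (hy x hx).1
    rw [← ku, ← kv]
    exact hl x hx
  -- the differential of `Φ` at `p` has a left inverse, so its determinant does not vanish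
  · let D : (ℝ × ℝ) →L[ℝ] (ℝ × ℝ) :=
      (fderiv ℝ (u : ℝ × ℝ → ℝ) p).prod (fderiv ℝ (v : ℝ × ℝ → ℝ) p)
    have hΦd : HasFDerivAt Φ D p := by
      refine (((diff u p).hasFDerivAt).prodMk (diff v p).hasFDerivAt).congr_of_eventuallyEq ?_
      filter_upwards [hu, hv] with q ku kv
      exact Prod.ext ku kv
    have hΨd : DifferentiableAt ℝ Ψ (Φ p) :=
      (hΨ.contDiffAt (himg.mem_nhds ⟨p, hp, rfl⟩)).differentiableAt (by simp)
    have hid : (fderiv ℝ Ψ (Φ p)).comp D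
        = ContinuousLinearMap.id ℝ (ℝ × ℝ) := by
      refine (hΨd.hasFDerivAt.comp p hΦd).unique ((hasFDerivAt_id p).congr_of_eventuallyEq ?_)
      filter_upwards [hU'.mem_nhds hp] with q hq
      exact hΨΦ q hq
    have hker : ∀ r s : ℝ, r * (Dx u : ℝ × ℝ → ℝ) p + s * (Dy u : ℝ × ℝ → ℝ) p = 0 →
        r * (Dx v : ℝ × ℝ → ℝ) p + s * (Dy v : ℝ × ℝ → ℝ) p = 0 → r = 0 ∧ s = 0 := by
      intro r s k1 k2
      have hrs : ((r, s) : ℝ × ℝ) = r • (1, 0) + s • (0, 1) := by simp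
      have h := DFunLike.congr_fun hid ((r, s) : ℝ × ℝ)
      have hz : D ((r, s) : ℝ × ℝ) = 0 := by
        rw [hrs, map_add, map_smul, map_smul]
        exact Prod.ext k1 k2
      rw [ContinuousLinearMap.comp_apply, hz, map_zero] at h
      exact ⟨(congrArg Prod.fst h).symm, (congrArg Prod.snd h).symm⟩
    intro hJ
    obtain ⟨k1, k2⟩ := hker ((Dy u : ℝ × ℝ → ℝ) p) (-(Dx u : ℝ × ℝ → ℝ) p) (by ring)
      (by linear_combination -hJ)
    obtain ⟨k3, k4⟩ := hker ((Dy v : ℝ × ℝ → ℝ) p) (-(Dx v : ℝ × ℝ → ℝ) p)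
      (by linear_combination hJ) (by ring)
    exact one_ne_zero (hker 1 0 (by linarith) (by linarith)).1

end LiouvilleTresse

/-- **Liouville–Tresse trivialisability (cubic case).** `L₁ = L₂ = 0` on `U` iff near
every point there is a point transformation (local diffeomorphism) sending the graphs of
all solutions of the ODE into affine lines, i.e. the ODE is locally equivalent to
`ȳ'' = 0`. -/
theorem liouville_tresse (U : Set (ℝ × ℝ)) (hU : IsOpen U) (hUconn : IsConnected U)
    (A0 A1 A2 A3 : ℝ × ℝ → ℝ)
    (hA0 : ContDiffOn ℝ (⊤ : ℕ∞) A0 U) (hA1 : ContDiffOn ℝ (⊤ : ℕ∞) A1 U)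
    (hA2 : ContDiffOn ℝ (⊤ : ℕ∞) A2 U) (hA3 : ContDiffOn ℝ (⊤ : ℕ∞) A3 U) :
    (∀ p ∈ U, Lio1 A0 A1 A2 A3 p = 0 ∧ Lio2 A0 A1 A2 A3 p = 0) ↔
    (∀ p ∈ U, ∃ U' : Set (ℝ × ℝ), IsOpen U' ∧ p ∈ U' ∧ U' ⊆ U ∧
      ∃ Φ Φinv : ℝ × ℝ → ℝ × ℝ,
        ContDiffOn ℝ (⊤ : ℕ∞) Φ U' ∧ Set.InjOn Φ U' ∧ IsOpen (Φ '' U') ∧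
        ContDiffOn ℝ (⊤ : ℕ∞) Φinv (Φ '' U') ∧ (∀ q ∈ U', Φinv (Φ q) = q) ∧
        ∀ (y : ℝ → ℝ) (a b : ℝ), IsODESolution U' A0 A1 A2 A3 y a b →
          ∃ α β γ : ℝ, (α, β) ≠ (0, 0) ∧
            ∀ x ∈ Set.Ioo a b,
              α * (Φ (x, y x)).1 + β * (Φ (x, y x)).2 = γ) := by
  constructor
  · intro h p hp
    exact exists_linearization hU hA0 hA1 hA2 hA3 h hp
  · intro h p hp
    obtain ⟨U', hU', hpU', hsub, Φ, Ψ, hΦ, -, himg, hΨ, hΨΦ, hline⟩ := h p hp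
    exact Lio_eq_zero_of_linearization hU' (hA0.mono hsub) (hA1.mono hsub) (hA2.mono hsub)
      (hA3.mono hsub) hpU' hΦ himg hΨ hΨΦ hline
end
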